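/- arXiv:1303.0084 — 9 statements merged into one kernel-verified Lean document; each statement's English description precedes it below -/
import Mathlib

section
/- Let R be a commutative ring, d ≥ 1, and let M_1, …, M_d be n×n matrices over R. Define the block matrix A of size nd×nd, viewed as a d×d array of n×n blocks with blocks indexed by {0,…,d−1}, whose (i,j) block equals M_{i+1} if j ≡ i+1 (mod d) and equals the zero matrix otherwise. Then tr(A^d) = d · tr(M_1 M_2 ⋯ M_d). -/
/-- Let `R` be a commutative ring, `d ≥ 1`, and `M_1, …, M_d` be `n×n`
matrices over `R`.  Let `A` be the `nd×nd` block matrix (blocks indexed by `{0,…,d−1}`)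
whose `(i,j)` block is `M_{i+1}` when `j ≡ i+1 (mod d)` and `0` otherwise.  Then
`tr(A^d) = d · tr(M_1 ⋯ M_d)`. -/
theorem trace_pow_blockCyclic_eq_mul_trace_prod {R : Type*} [CommRing R] (n d : ℕ)
    (hd : 1 ≤ d) (M : Fin d → Matrix (Fin n) (Fin n) R)
    (A : Matrix (Fin d × Fin n) (Fin d × Fin n) R)
    (hA : ∀ (i j : Fin d) (a b : Fin n),
      A (i, a) (j, b) = if (j : ℕ) = ((i : ℕ) + 1) % d then M i a b else 0) :
    Matrix.trace (A ^ d) = (d : R) * Matrix.trace (List.ofFn M).prod := by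
  have hd0 : 0 < d := hd
  let N : ℕ → Matrix (Fin n) (Fin n) R := fun k => M ⟨k % d, Nat.mod_lt k hd0⟩
  have hNd : ∀ k, N (k + d) = N k := by
    intro k
    simp only [N, Nat.add_mod_right]
  let P : ℕ → ℕ → Matrix (Fin n) (Fin n) R :=
    fun i k => ((List.range k).map (fun t => N (i + t))).prod
  have hPr : ∀ i k, P i (k + 1) = P i k * N (i + k) := by
    intro i k
    simp [P, List.range_succ]
  have hPl : ∀ i k, P i (k + 1) = N i * P (i + 1) k := by
    intro i k
    simp only [P, List.range_succ_eq_map, List.map_cons, List.prod_cons, List.map_map, add_zero]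
    congr 2
    apply List.map_congr_left
    intro t _
    simp only [Function.comp]
    congr 1
    omega
  have hpow : ∀ (k : ℕ) (i j : Fin d) (a b : Fin n),
      (A ^ k) (i, a) (j, b) = if (j : ℕ) = ((i : ℕ) + k) % d then P i k a b else 0 := by
    intro k
    induction k with
    | zero =>
      intro i j a b
      have h : (i : ℕ) % d = i := Nat.mod_eq_of_lt i.2
      simp only [pow_zero, Matrix.one_apply, P, add_zero, h, List.range_zero, List.map_nil,
        List.prod_nil, Prod.mk.injEq, Fin.ext_iff]
      split_ifs <;> first | rfl | omega
    | succ k ih =>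
      intro i j a b
      rw [pow_succ, Matrix.mul_apply, Fintype.sum_prod_type]
      rw [Finset.sum_eq_single (⟨(i + k) % d, Nat.mod_lt _ hd0⟩ : Fin d)]
      · simp only [ih, hA, if_true, hPr, Matrix.mul_apply, Nat.mod_add_mod, add_assoc]
        split_ifs
        · rfl
        · simp
      · intro l _ hl
        apply Finset.sum_eq_zero
        intro c _
        rw [ih, if_neg, zero_mul]
        intro h
        exact hl (Fin.ext h)
      · simp
  have htr : ∀ i, Matrix.trace (P i d) = Matrix.trace (P 0 d) := by
    intro i
    induction i with
    | zero => rfl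
    | succ i ih =>
      rw [← ih]
      obtain ⟨e, he⟩ : ∃ e, d = e + 1 := ⟨d - 1, by omega⟩
      have h1 : P (i + 1) d = P (i + 1) e * N i := by
        rw [← hNd i, congrArg (P (i + 1)) he, hPr]
        congr 2
        omega
      have h2 : P i d = N i * P (i + 1) e := by
        rw [congrArg (P i) he, hPl]
      rw [h1, h2, Matrix.trace_mul_comm]
  have hP0 : P 0 d = (List.ofFn M).prod := by
    simp only [P]
    congr 1
    apply List.ext_getElem
    · simp
    · intro t h1 h2
      have ht : t < d := by simpa using h1
      simp [N, Nat.mod_eq_of_lt ht]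
  rw [← hP0]
  have hdiag : Matrix.trace (A ^ d) = ∑ i : Fin d, Matrix.trace (P i d) := by
    simp only [Matrix.trace, Matrix.diag_apply, Fintype.sum_prod_type]
    refine Finset.sum_congr rfl fun i _ => Finset.sum_congr rfl fun a _ => ?_
    rw [hpow, if_pos]
    rw [Nat.add_mod_right, Nat.mod_eq_of_lt i.2]
  rw [hdiag, Finset.sum_congr rfl fun (i : Fin d) _ => htr i]
  simp
end

section
/- Let F be a field of characteristic zero and let A and B be tuples of r matrices of size n×n over F. Then f(A) = f(B) for every invariant f ∈ F[M]^{GL_n(F)} if and only if f_ℓ(A, x) = f_ℓ(B, x) as polynomials in F[x_1,…,x_ℓ] for every ℓ ∈ {1,…,n²}. -/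
/-- For a tuple `A = (A_0,…,A_{r−1})` of `n×n` matrices over `R`, the polynomial
`f_ℓ(A, x) := tr(A(x_1) ⋯ A(x_ℓ))` where `A(x) := Σ_{i<r} A_i x^i`. -/
noncomputable def fpoly {R : Type*} [CommRing R] (n r ℓ : ℕ)
    (A : Fin r → Matrix (Fin n) (Fin n) R) : MvPolynomial (Fin ℓ) R :=
  Matrix.trace
    (List.ofFn fun j : Fin ℓ =>
      ∑ i : Fin r, (A i).map fun a => MvPolynomial.C a * MvPolynomial.X j ^ (i : ℕ)).prod

/-- The generic `n×n` matrix `M_i` whose entries are the indeterminates `X (i, a, b)`. -/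
noncomputable def genMat (F : Type*) [Field F] (n r : ℕ) (i : Fin r) :
    Matrix (Fin n) (Fin n) (MvPolynomial (Fin r × Fin n × Fin n) F) :=
  Matrix.of fun a b => MvPolynomial.X (i, a, b)

/-- A polynomial `f` in the `n²r` entries of the tuple `M = (M_0,…,M_{r−1})` of generic
matrices is invariant under simultaneous conjugation if
`f(M_0,…,M_{r−1}) = f(PM_0P⁻¹,…,PM_{r−1}P⁻¹)` as polynomials, for every `P ∈ GL_n(F)`. -/
def IsSimConjInvariant (F : Type*) [Field F] (n r : ℕ)
    (f : MvPolynomial (Fin r × Fin n × Fin n) F) : Prop :=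
  ∀ P : GL (Fin n) F,
    MvPolynomial.aeval
      (fun v : Fin r × Fin n × Fin n =>
        ((((P : Matrix (Fin n) (Fin n) F)).map MvPolynomial.C * genMat F n r v.1 *
            (((P⁻¹ : GL (Fin n) F) : Matrix (Fin n) (Fin n) F)).map MvPolynomial.C :
          Matrix (Fin n) (Fin n) (MvPolynomial (Fin r × Fin n × Fin n) F)))
          v.2.1 v.2.2) f = f

/-- Evaluation of a polynomial in the entries of the generic tuple at a concrete tuple. -/
noncomputable def evalTuple {F : Type*} [Field F] {n r : ℕ}
    (A : Fin r → Matrix (Fin n) (Fin n) F)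
    (f : MvPolynomial (Fin r × Fin n × Fin n) F) : F :=
  MvPolynomial.eval (fun v => A v.1 v.2.1 v.2.2) f


section part1

universe u v w

variable {F : Type w} [Field F] {R : Type v} [Ring R] [Algebra F R]

/-- the trace of the action of `x` -/
noncomputable def trAct (F : Type w) [Field F] {R : Type v} [Ring R] [Algebra F R]
    (M : Type u) [AddCommGroup M] [Module F M] [Module R M]
    [IsScalarTower F R M] (x : R) : F :=
  LinearMap.trace F M (Algebra.lsmul F F M x)

theorem trAct_congr {M N : Type u} [AddCommGroup M] [Module F M] [Module R M]
    [IsScalarTower F R M] [AddCommGroup N] [Module F N] [Module R N]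
    [IsScalarTower F R N] (e : M ≃ₗ[R] N) (x : R) : trAct F M x = trAct F N x := by
  unfold trAct
  rw [← LinearMap.trace_conj' _ (e.restrictScalars F)]
  congr 1
  ext y
  simp [LinearEquiv.conj_apply]

theorem trAct_prod {M N : Type u} [AddCommGroup M] [Module F M] [Module R M]
    [IsScalarTower F R M] [AddCommGroup N] [Module F N] [Module R N]
    [IsScalarTower F R N] [FiniteDimensional F M] [FiniteDimensional F N] (x : R) :
    trAct F (M × N) x = trAct F M x + trAct F N x := by
  unfold trAct
  rw [← LinearMap.trace_prodMap']
  congr 1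

theorem finite_sub {M : Type u} [AddCommGroup M] [Module F M] [Module R M]
    [IsScalarTower F R M] [FiniteDimensional F M] (p : Submodule R M) : FiniteDimensional F p :=
  inferInstanceAs (FiniteDimensional F (p.restrictScalars F))

theorem semisimple_prod {M N : Type u} [AddCommGroup M] [Module R M]
    [AddCommGroup N] [Module R N] [IsSemisimpleModule R M] [IsSemisimpleModule R N] :
    IsSemisimpleModule R (M × N) := by
  have h := IsSemisimpleModule.sup (IsSemisimpleModule.range (LinearMap.inl R M N))
    (IsSemisimpleModule.range (LinearMap.inr R M N))
  rw [LinearMap.sup_range_inl_inr] at h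
  exact IsSemisimpleModule.congr (Submodule.topEquiv (R := R) (M := M × N)).symm

theorem hom_zero_symm {M N : Type u} [AddCommGroup M] [Module R M]
    [AddCommGroup N] [Module R N] [IsSemisimpleModule R M] [IsSemisimpleModule R N]
    (h : ∀ f : M →ₗ[R] N, f = 0) (g : N →ₗ[R] M) : g = 0 := by
  obtain ⟨s, hs⟩ := IsSemisimpleModule.lifting_property g.rangeRestrict g.surjective_rangeRestrict
    LinearMap.id
  obtain ⟨q, hq⟩ := exists_isCompl (LinearMap.range g)
  have hz := h (s ∘ₗ (Submodule.projectionOnto _ q hq))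
  ext y
  have h1 := LinearMap.congr_fun hz (g y)
  have h2 : Submodule.projectionOnto _ q hq (g y) = g.rangeRestrict y :=
    Submodule.projectionOnto_apply_left hq (g.rangeRestrict y)
  simp only [LinearMap.comp_apply, h2, LinearMap.zero_apply] at h1
  have h3 := LinearMap.congr_fun hs (g.rangeRestrict y)
  simp only [LinearMap.comp_apply, h1, map_zero, LinearMap.id_apply] at h3
  simpa using congrArg Subtype.val h3.symm

theorem zero_of_hom_zero [CharZero F] {M N : Type u} [AddCommGroup M] [Module F M] [Module R M]
    [IsScalarTower F R M] [AddCommGroup N] [Module F N] [Module R N]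
    [IsScalarTower F R N] [FiniteDimensional F M] [FiniteDimensional F N]
    [IsSemisimpleModule R M] [IsSemisimpleModule R N]
    (ht : ∀ x : R, trAct F M x = trAct F N x)
    (h : ∀ f : M →ₗ[R] N, f = 0) : Subsingleton M := by
  have h' := hom_zero_symm h
  have := semisimple_prod (R := R) (M := M) (N := N)
  let f : Module.End (Module.End R (M × N)) (M × N) :=
    { toFun := fun x => (x.1, 0)
      map_add' := by intro x y; simp
      map_smul' := by
        intro φ x
        have e1 := h ((LinearMap.snd R M N) ∘ₗ φ ∘ₗ (LinearMap.inl R M N))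
        have e2 := h' ((LinearMap.fst R M N) ∘ₗ φ ∘ₗ (LinearMap.inr R M N))
        have e1' := LinearMap.congr_fun e1 x.1
        have e2' := LinearMap.congr_fun e2 x.2
        simp only [LinearMap.comp_apply, LinearMap.inl_apply, LinearMap.snd_apply,
          LinearMap.inr_apply, LinearMap.fst_apply, LinearMap.zero_apply] at e1' e2'
        have e3 : φ x = φ (x.1, 0) + φ (0, x.2) := by
          rw [← map_add]; simp
        simp only [Module.End.smul_def, RingHom.id_apply]
        ext
        · simp [e3, e2']
        · simp [e1'] }
  classical
  let b := Module.finBasis F (M × N)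
  obtain ⟨x, hx⟩ := jacobson_density f (Finset.univ.image b)
  have hx' : ∀ m : M × N, x • m = (m.1, 0) := by
    have : Algebra.lsmul F F (M × N) x
        = (LinearMap.inl F M N) ∘ₗ (LinearMap.fst F M N) := by
      apply b.ext
      intro i
      have := hx (b i) (by simp)
      simp only [Algebra.lsmul_coe, ← this]
      rfl
    intro m
    simpa using LinearMap.congr_fun this m
  have hM : Algebra.lsmul F F M x = LinearMap.id := by
    ext m
    simpa using congrArg Prod.fst (hx' (m, 0))
  have hN : Algebra.lsmul F F N x = 0 := by
    ext m
    simpa using congrArg Prod.snd (hx' (0, m))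
  have := ht x
  unfold trAct at this
  rw [hM, hN, LinearMap.trace_id, map_zero] at this
  exact Module.finrank_zero_iff.mp (by exact_mod_cast this)

theorem iso_of_trAct [CharZero F] (d : ℕ) : ∀ (M N : Type u) [AddCommGroup M] [Module F M]
    [Module R M]
    [IsScalarTower F R M] [AddCommGroup N] [Module F N] [Module R N]
    [IsScalarTower F R N] [FiniteDimensional F M] [FiniteDimensional F N]
    [IsSemisimpleModule R M] [IsSemisimpleModule R N]
    (_ : Module.finrank F M ≤ d)
    (_ : ∀ x : R, trAct F M x = trAct F N x), Nonempty (M ≃ₗ[R] N) := by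
  induction d with
  | zero =>
    intro M N _ _ _ _ _ _ _ _ _ _ _ _ hd ht
    have : Subsingleton M := Module.finrank_zero_iff.mp (Nat.le_zero.mp hd)
    have : Subsingleton N := zero_of_hom_zero (F := F) (R := R) (M := N) (N := M)
      (fun x => (ht x).symm) (fun f => by ext y; exact Subsingleton.elim _ _)
    exact ⟨LinearEquiv.ofSubsingleton M N⟩
  | succ d ih =>
    intro M N _ _ _ _ _ _ _ _ _ _ _ _ hd ht
    by_cases h : ∀ f : M →ₗ[R] N, f = 0
    · have : Subsingleton M := zero_of_hom_zero (F := F) ht h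
      have : Subsingleton N := zero_of_hom_zero (F := F) (R := R) (M := N) (N := M)
        (fun x => (ht x).symm) (fun f => by ext y; exact Subsingleton.elim _ _)
      exact ⟨LinearEquiv.ofSubsingleton M N⟩
    · push Not at h
      obtain ⟨f, hf⟩ := h
      obtain ⟨p, hp⟩ := exists_isCompl (LinearMap.ker f)
      obtain ⟨q, hq⟩ := exists_isCompl (LinearMap.range f)
      have e : p ≃ₗ[R] LinearMap.range f :=
        (Submodule.quotientEquivOfIsCompl _ _ hp).symm.trans f.quotKerEquivRange
      have eM := Submodule.prodEquivOfIsCompl _ _ hp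
      have eN := Submodule.prodEquivOfIsCompl _ _ hq
      have i1 := finite_sub (F := F) (LinearMap.ker f)
      have i2 := finite_sub (F := F) p
      have i3 := finite_sub (F := F) (LinearMap.range f)
      have i4 := finite_sub (F := F) q
      have hpos : 0 < Module.finrank F p := by
        rw [Module.finrank_pos_iff]
        by_contra hc
        rw [not_nontrivial_iff_subsingleton] at hc
        have : p = ⊥ := (Submodule.subsingleton_iff_eq_bot).mp hc
        rw [this] at hp
        have := hp.sup_eq_top
        rw [sup_bot_eq] at this
        exact hf (LinearMap.ker_eq_top.mp this)
      have hr : Module.finrank F M = Module.finrank F (LinearMap.ker f) + Module.finrank F p := by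
        rw [← (eM.restrictScalars F).finrank_eq, Module.finrank_prod]
      obtain ⟨g⟩ := ih (LinearMap.ker f) q (by omega) (by
        intro x
        have := ht x
        rw [← trAct_congr eM, ← trAct_congr eN, trAct_prod, trAct_prod, trAct_congr e] at this
        linear_combination this)
      exact ⟨eM.symm.trans (((LinearEquiv.prodCongr g e).trans
        (LinearEquiv.prodComm R _ _)).trans eN)⟩

end part1

section part2

variable {F E : Type*} [Field F] [Ring E] [Algebra F E] {r : ℕ} (a : Fin r → E)

/-- the product of a word -/
def wprod (w : List (Fin r)) : E := (w.map a).prod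

/-- the span of all words of length at most `k` -/
def wspan (F : Type*) {E : Type*} [Field F] [Ring E] [Algebra F E] {r : ℕ} (a : Fin r → E)
    (k : ℕ) : Submodule F E :=
  Submodule.span F {x | ∃ w : List (Fin r), w.length ≤ k ∧ wprod a w = x}

theorem wprod_mem {k : ℕ} {w : List (Fin r)} (h : w.length ≤ k) : wprod a w ∈ wspan F a k :=
  Submodule.subset_span ⟨w, h, rfl⟩

theorem wspan_mono {k l : ℕ} (h : k ≤ l) : wspan F a k ≤ wspan F a l := by
  apply Submodule.span_mono
  rintro x ⟨w, hw, rfl⟩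
  exact ⟨w, hw.trans h, rfl⟩

theorem wspan_lmul {k : ℕ} {x : E} (hx : x ∈ wspan F a k) (i : Fin r) :
    a i * x ∈ wspan F a (k + 1) := by
  have : wspan F a k ≤ (wspan F a (k + 1)).comap (LinearMap.mulLeft F (a i)) := by
    apply Submodule.span_le.mpr
    rintro x ⟨w, hw, rfl⟩
    simp only [Submodule.comap_coe, Set.mem_preimage, LinearMap.mulLeft_apply, SetLike.mem_coe]
    have := wprod_mem (F := F) a (k := k + 1) (w := i :: w) (by simpa using hw)
    simpa [wprod] using this
  exact this hx

theorem wspan_rmul {k : ℕ} {x : E} (hx : x ∈ wspan F a k) (i : Fin r) :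
    x * a i ∈ wspan F a (k + 1) := by
  have : wspan F a k ≤ (wspan F a (k + 1)).comap (LinearMap.mulRight F (a i)) := by
    apply Submodule.span_le.mpr
    rintro x ⟨w, hw, rfl⟩
    simp only [Submodule.comap_coe, Set.mem_preimage, LinearMap.mulRight_apply, SetLike.mem_coe]
    have := wprod_mem (F := F) a (k := k + 1) (w := w ++ [i]) (by simpa using hw)
    simpa [wprod] using this
  exact this hx

/-- membership in the next step of the filtration -/
theorem wspan_succ_le {k : ℕ} {S : Submodule F E} (h0 : wspan F a k ≤ S)
    (h : ∀ w : List (Fin r), w.length = k + 1 → wprod a w ∈ S) : wspan F a (k + 1) ≤ S := by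
  apply Submodule.span_le.mpr
  rintro x ⟨w, hw, rfl⟩
  rcases Nat.lt_or_eq_of_le hw with h1 | h1
  · exact h0 (wprod_mem a (by omega))
  · exact h w h1

theorem wspan_stab {k : ℕ} (h : wspan F a (k + 1) ≤ wspan F a k) (j : ℕ) :
    wspan F a (k + j) ≤ wspan F a k := by
  induction j with
  | zero => exact le_rfl
  | succ j ih =>
    refine wspan_succ_le a ih ?_
    intro w hw
    cases w with
    | nil => simp at hw
    | cons i w =>
      have h1 : wprod a w ∈ wspan F a k := ih (wprod_mem a (by simpa using hw.le))
      have h2 := wspan_lmul a h1 i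
      simpa [wprod] using h h2

/-- Key collapse: if the filtration grows by exactly one dimension at step `k+1` and grows
at step `k+2`, then all later steps are spanned by powers of one letter. -/
theorem wspan_powers {k : ℕ} {z : E}
    (h1 : ∀ x ∈ wspan F a (k + 1), ∃ c : F, x - c • z ∈ wspan F a k)
    (h2 : ¬ wspan F a (k + 2) ≤ wspan F a (k + 1)) :
    ∃ d : Fin r, a d ^ (k + 1) ∉ wspan F a k ∧
      ∀ j, wspan F a (k + 1 + j + 1) ≤ wspan F a (k + 1 + j) ⊔ Submodule.span F {a d ^ (k + 1 + j + 1)} := by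
  -- any two elements are comparable modulo `wspan k`
  have key : ∀ x y, x ∈ wspan F a (k + 1) → x ∉ wspan F a k → y ∈ wspan F a (k + 1) →
      ∃ c : F, y - c • x ∈ wspan F a k := by
    intro x y hx hx' hy
    obtain ⟨c, hc⟩ := h1 x hx
    obtain ⟨c', hc'⟩ := h1 y hy
    have hc0 : c ≠ 0 := by
      rintro rfl
      exact hx' (by simpa using hc)
    refine ⟨c' * c⁻¹, ?_⟩
    have : y - (c' * c⁻¹) • x = (y - c' • z) - (c' * c⁻¹) • (x - c • z) := by
      rw [smul_sub, smul_smul, inv_mul_cancel_right₀ hc0]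
      abel
    rw [this]
    exact Submodule.sub_mem _ hc' (Submodule.smul_mem _ _ hc)
  have keyl : ∀ x y, x ∈ wspan F a (k + 1) → x ∉ wspan F a k → y ∈ wspan F a (k + 1) →
      ∀ i, a i * x ∈ wspan F a (k + 1) → a i * y ∈ wspan F a (k + 1) := by
    intro x y hx hx' hy i hi
    obtain ⟨c, hc⟩ := key x y hx hx' hy
    have := wspan_lmul a hc i
    have e : a i * y = a i * (y - c • x) + c • (a i * x) := by
      rw [mul_sub, mul_smul_comm]; abel
    rw [e]
    exact Submodule.add_mem _ this (Submodule.smul_mem _ _ hi)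
  have keyr : ∀ x y, x ∈ wspan F a (k + 1) → x ∉ wspan F a k → y ∈ wspan F a (k + 1) →
      ∀ i, x * a i ∈ wspan F a (k + 1) → y * a i ∈ wspan F a (k + 1) := by
    intro x y hx hx' hy i hi
    obtain ⟨c, hc⟩ := key x y hx hx' hy
    have := wspan_rmul a hc i
    have e : y * a i = (y - c • x) * a i + c • (x * a i) := by
      rw [sub_mul, smul_mul_assoc]; abel
    rw [e]
    exact Submodule.add_mem _ this (Submodule.smul_mem _ _ hi)
  -- for any basis word `d :: u`, multiplying by its first letter gives something new
  have step : ∀ (d : Fin r) (u : List (Fin r)), u.length = k → wprod a (d :: u) ∉ wspan F a k →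
      a d * wprod a (d :: u) ∉ wspan F a (k + 1) := by
    intro d u hu hdu hcon
    apply h2
    have hin : wprod a (d :: u) ∈ wspan F a (k + 1) := wprod_mem a (by simp [hu])
    -- left multiplication by `d` is trivial
    have hl : ∀ y ∈ wspan F a (k + 1), a d * y ∈ wspan F a (k + 1) :=
      fun y hy => keyl _ y hin hdu hy d hcon
    obtain ⟨v, c, hvc⟩ : ∃ (v : List (Fin r)) (c : Fin r), d :: u = v ++ [c] := by
      rcases List.eq_nil_or_concat (d :: u) with h | ⟨v, c, h⟩
      · simp at h
      · exact ⟨v, c, by simpa using h⟩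
    have hvl : v.length = k := by
      have := congrArg List.length hvc
      simp at this; omega
    -- right multiplication by `c` is trivial
    have hr : ∀ y ∈ wspan F a (k + 1), y * a c ∈ wspan F a (k + 1) := by
      intro y hy
      refine keyr _ y hin hdu hy c ?_
      have : wprod a (d :: u) * a c = a d * (wprod a (u ++ [c])) := by
        simp [wprod, mul_assoc]
      rw [this]
      exact hl _ (wprod_mem a (by simp [hu]))
    -- hence everything is trivial
    refine wspan_succ_le a le_rfl ?_
    intro w hw
    cases w with
    | nil => simp at hw
    | cons b w =>
      have hwl : w.length = k + 1 := by simpa using hw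
      have hw1 : wprod a w ∈ wspan F a (k + 1) := wprod_mem a hwl.le
      have : wprod a (b :: w) = a b * wprod a w := by simp [wprod]
      rw [this]
      refine keyl _ _ hin hdu hw1 b ?_
      rw [hvc]
      have : a b * wprod a (v ++ [c]) = wprod a (b :: v) * a c := by
        simp [wprod, mul_assoc]
      rw [this]
      exact hr _ (wprod_mem a (by simp [hvl]))
  -- there is a basis word
  obtain ⟨w0, hw0l, hw0⟩ : ∃ w : List (Fin r), w.length = k + 1 ∧ wprod a w ∉ wspan F a k := by
    by_contra hcon
    push Not at hcon
    have hle : wspan F a (k + 1) ≤ wspan F a k := wspan_succ_le a le_rfl hcon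
    exact h2 ((wspan_stab a hle 2).trans (wspan_mono a (by omega)))
  obtain ⟨d, u0, rfl⟩ : ∃ d u, w0 = d :: u := by
    cases w0 with
    | nil => simp at hw0l
    | cons d u => exact ⟨d, u, rfl⟩
  have hpow : ∀ j, j ≤ k → ∃ u : List (Fin r), u.length = k - j ∧
      wprod a (List.replicate (j + 1) d ++ u) ∉ wspan F a k := by
    intro j
    induction j with
    | zero =>
      intro _
      exact ⟨u0, by simpa using hw0l, by simpa using hw0⟩
    | succ j ih =>
      intro hj
      obtain ⟨u, hu, hw⟩ := ih (by omega)
      have hst := step d (List.replicate j d ++ u) (by simp [hu]; omega)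
        (by simpa [List.replicate_succ] using hw)
      rcases List.eq_nil_or_concat u with h | ⟨v, c, h⟩
      · subst h; simp at hu; omega
      · refine ⟨v, by simp [h] at hu; omega, ?_⟩
        intro hmem
        apply hst
        have := wspan_rmul a hmem c
        have e : a d * wprod a (d :: (List.replicate j d ++ u)) =
          wprod a (List.replicate (j + 1 + 1) d ++ v) * a c := by
          simp [wprod, h, List.replicate_succ, mul_assoc]
        rw [e]
        exact this
  have hd : a d ^ (k + 1) ∉ wspan F a k := by
    obtain ⟨u, hu, hw⟩ := hpow k le_rfl
    have : u = [] := by simpa using hu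
    subst this
    simpa [wprod] using hw
  refine ⟨d, hd, ?_⟩
  have hdin : ∀ m, a d ^ m ∈ wspan F a m := by
    intro m
    have := wprod_mem (F := F) a (k := m) (w := List.replicate m d) (by simp)
    simpa [wprod] using this
  have hgen : ∀ j, wspan F a (k + j + 1) ≤ wspan F a (k + j) ⊔ Submodule.span F {a d ^ (k + j + 1)} := by
    intro j
    induction j with
    | zero =>
      intro x hx
      obtain ⟨c, hc⟩ := key _ x (hdin (k + 1)) hd hx
      rw [Submodule.mem_sup]
      exact ⟨_, hc, c • a d ^ (k + 1), Submodule.smul_mem _ _ (Submodule.mem_span_singleton_self _),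
        by simp⟩
    | succ j ih =>
      refine wspan_succ_le a le_sup_left ?_
      intro w hw
      -- w = b :: w', w' ≡ c d^(k+j+1); b d^(k+j) ≡ c' d^(k+j+1)
      cases w with
      | nil => simp at hw
      | cons b w =>
        have hw1 : wprod a w ∈ wspan F a (k + j + 1) := wprod_mem a (by simp at hw; omega)
        obtain ⟨x, hx, y, hy, hxy⟩ := Submodule.mem_sup.mp (ih hw1)
        obtain ⟨c, rfl⟩ := Submodule.mem_span_singleton.mp hy
        have hb : a b * a d ^ (k + j) ∈ wspan F a (k + j + 1) := wspan_lmul a (hdin _) b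
        obtain ⟨x', hx', y', hy', hxy'⟩ := Submodule.mem_sup.mp (ih hb)
        obtain ⟨c', rfl⟩ := Submodule.mem_span_singleton.mp hy'
        have e : wprod a (b :: w) = (a b * x + c • (x' * a d)) + (c * c') • a d ^ (k + (j + 1) + 1) := by
          have e1 : wprod a (b :: w) = a b * wprod a w := by simp [wprod]
          rw [e1, ← hxy, mul_add, mul_smul_comm, pow_succ (a d) (k + j), ← mul_assoc, ← hxy',
            add_mul, smul_mul_assoc, smul_add, smul_smul, ← pow_succ, ← add_assoc]
          rfl
        rw [e]
        refine Submodule.add_mem_sup (Submodule.add_mem _ (wspan_lmul a hx b)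
          (Submodule.smul_mem _ _ (wspan_rmul a hx' d))) (Submodule.smul_mem _ _
            (Submodule.mem_span_singleton_self _))
  intro j
  have := hgen (j + 1)
  rwa [show k + (j + 1) = k + 1 + j by ring] at this

/-- Length bound. -/
theorem wspan_bound [FiniteDimensional F E] [Nontrivial E] {m N : ℕ} (hN : m ≤ N + 1)
    (hdim : Module.finrank F E ≤ 2 * N)
    (hpow : ∀ i, ∃ p : Polynomial F, p.Monic ∧ p.natDegree = m ∧ Polynomial.aeval (a i) p = 0)
    (w : List (Fin r)) : wprod a w ∈ wspan F a N := by
  suffices hs : wspan F a (N + 1) ≤ wspan F a N by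
    rcases le_total w.length N with h | h
    · exact wprod_mem a h
    · obtain ⟨j, hj⟩ := Nat.exists_eq_add_of_le h
      exact wspan_stab a hs j (wprod_mem a hj.le)
  by_contra hcon
  have hne : ∀ k, k ≤ N → ¬ wspan F a (k + 1) ≤ wspan F a k := by
    intro k hk hle
    apply hcon
    obtain ⟨j, rfl⟩ := Nat.exists_eq_add_of_le hk
    have := wspan_stab a hle (j + 1)
    exact this.trans (wspan_mono a (by omega))
  have hpow' : ∀ i, ∀ j, m ≤ j + 1 → a i ^ (j + 1) ∈ wspan F a j := by
    intro i j hj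
    obtain ⟨p, hp, hpd, hp0⟩ := hpow i
    have hlow : ∀ l, l ≤ j → a i ^ l ∈ wspan F a j := by
      intro l hl
      have := wprod_mem (F := F) a (k := j) (w := List.replicate l i) (by simpa using hl)
      simpa [wprod] using this
    have e : a i ^ m = - ∑ l ∈ Finset.range m, p.coeff l • a i ^ l := by
      rw [Polynomial.aeval_eq_sum_range, hpd, Finset.sum_range_succ] at hp0
      have : p.coeff m = 1 := by rw [← hpd]; exact hp
      rw [this, one_smul] at hp0
      exact eq_neg_of_add_eq_zero_right hp0
    obtain ⟨t, ht⟩ := Nat.exists_eq_add_of_le hj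
    rw [ht, pow_add, e, neg_mul, Finset.sum_mul]
    refine Submodule.neg_mem _ (Submodule.sum_mem _ ?_)
    intro l hl
    rw [smul_mul_assoc, ← pow_add]
    refine Submodule.smul_mem _ _ (hlow _ ?_)
    have := Finset.mem_range.mp hl
    omega
  have grow : ∀ k, k ≤ N → 1 + 2 * k ≤ Module.finrank F (wspan F a k) := by
    intro k
    induction k with
    | zero =>
      intro _
      have : wspan F a 0 ≠ ⊥ := by
        intro h
        have h1 : wprod a [] ∈ wspan F a 0 := wprod_mem a (by simp)
        rw [h] at h1
        simp [wprod] at h1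
      have := Submodule.one_le_finrank_iff.mpr this
      simpa using this
    | succ k ih =>
      intro hk
      have ih := ih (by omega)
      by_contra hlt
      have hlt' : wspan F a k < wspan F a (k + 1) :=
        lt_of_le_not_ge (wspan_mono a (by omega)) (hne k (by omega))
      obtain ⟨z, hz, hz'⟩ := SetLike.exists_of_lt hlt'
      have hS : wspan F a k ⊔ Submodule.span F {z} = wspan F a (k + 1) := by
        apply Submodule.eq_of_le_of_finrank_le
        · refine sup_le hlt'.le ?_
          rw [Submodule.span_singleton_le_iff_mem]; exact hz
        · have h3 : wspan F a k < wspan F a k ⊔ Submodule.span F {z} := by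
            refine lt_of_le_not_ge le_sup_left ?_
            intro h
            exact hz' (h (Submodule.mem_sup_right (Submodule.mem_span_singleton_self z)))
          have := Submodule.finrank_lt_finrank_of_lt h3
          omega
      have h1 : ∀ x ∈ wspan F a (k + 1), ∃ c : F, x - c • z ∈ wspan F a k := by
        intro x hx
        rw [← hS] at hx
        obtain ⟨y, hy, y', hy', rfl⟩ := Submodule.mem_sup.mp hx
        obtain ⟨c, rfl⟩ := Submodule.mem_span_singleton.mp hy'
        exact ⟨c, by simpa using hy⟩
      obtain ⟨d, hd, hj⟩ := wspan_powers a h1 (hne (k + 1) hk)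
      have hkm : k + 1 < m := by
        by_contra h
        exact hd (hpow' d k (by omega))
      obtain ⟨j, hjm⟩ := Nat.exists_eq_add_of_le (show k + 2 ≤ m by omega)
      have h4 := hj j
      have h5 : wspan F a (k + 1 + j + 1) ≤ wspan F a (k + 1 + j) := by
        refine h4.trans (sup_le le_rfl ?_)
        rw [Submodule.span_singleton_le_iff_mem]
        exact hpow' d _ (by omega)
      exact hne _ (by omega) h5
  have h1 := grow N le_rfl
  have h2 := Submodule.finrank_le (wspan F a N)
  omega

end part2

section part3

open MvPolynomial

/-- the tuples `A`, `B` are not separated by invariants -/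
def InvEq {F : Type*} [Field F] {n r : ℕ} (A B : Fin r → Matrix (Fin n) (Fin n) F) : Prop :=
  ∀ f : MvPolynomial (Fin r × Fin n × Fin n) F,
        IsSimConjInvariant F n r f → evalTuple A f = evalTuple B f

theorem InvEq.symm {F : Type*} [Field F] {n r : ℕ} {A B : Fin r → Matrix (Fin n) (Fin n) F}
    (h : InvEq A B) : InvEq B A := fun f hf => (h f hf).symm

theorem InvEq.trans {F : Type*} [Field F] {n r : ℕ} {A B C : Fin r → Matrix (Fin n) (Fin n) F}
    (h : InvEq A B) (h' : InvEq B C) : InvEq A C := fun f hf => (h f hf).trans (h' f hf)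

theorem evalTuple_genMat {F : Type*} [Field F] {n r : ℕ} (A : Fin r → Matrix (Fin n) (Fin n) F)
    (i : Fin r) : (genMat F n r i).map (eval (fun v => A v.1 v.2.1 v.2.2)) = A i := by
  ext a b
  simp [genMat]

theorem invEq_conj {F : Type*} [Field F] {n r : ℕ} (A : Fin r → Matrix (Fin n) (Fin n) F)
    (P : GL (Fin n) F) :
    InvEq (fun i => (P : Matrix (Fin n) (Fin n) F) * A i *
      ((P⁻¹ : GL (Fin n) F) : Matrix (Fin n) (Fin n) F)) A := by
  intro f hf
  have h := congrArg (eval (fun v : Fin r × Fin n × Fin n => A v.1 v.2.1 v.2.2)) (hf P)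
  unfold evalTuple
  rw [← h]
  generalize hg : (fun v : Fin r × Fin n × Fin n =>
        ((((P : Matrix (Fin n) (Fin n) F)).map MvPolynomial.C * genMat F n r v.1 *
            (((P⁻¹ : GL (Fin n) F) : Matrix (Fin n) (Fin n) F)).map MvPolynomial.C :
          Matrix (Fin n) (Fin n) (MvPolynomial (Fin r × Fin n × Fin n) F)))
          v.2.1 v.2.2) = g
  have e : (eval (fun v : Fin r × Fin n × Fin n => A v.1 v.2.1 v.2.2)).comp
      (aeval (R := F) g).toRingHom =
      eval (fun v : Fin r × Fin n × Fin n => ((P : Matrix (Fin n) (Fin n) F) * A v.1 *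
      ((P⁻¹ : GL (Fin n) F) : Matrix (Fin n) (Fin n) F)) v.2.1 v.2.2) := by
    apply MvPolynomial.ringHom_ext
    · intro c; simp
    · intro v
      rw [← hg]
      simp [Matrix.mul_apply, genMat]
  exact (RingHom.congr_fun e f).symm

theorem invEq_conj' {F : Type*} [Field F] {n r : ℕ} (A B : Fin r → Matrix (Fin n) (Fin n) F)
    (P Q : Matrix (Fin n) (Fin n) F) (h1 : P * Q = 1) (h2 : Q * P = 1)
    (hB : ∀ i, B i = P * A i * Q) : InvEq A B := by
  have := invEq_conj A (⟨P, Q, h1, h2⟩ : GL (Fin n) F)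
  have e : B = fun i => P * A i * Q := funext hB
  rw [e]
  exact this.symm

theorem word_invariant {F : Type*} [Field F] {n r : ℕ} (w : List (Fin r)) :
    IsSimConjInvariant F n r (Matrix.trace (w.map (genMat F n r)).prod) := by
  intro P
  generalize hg : (fun v : Fin r × Fin n × Fin n =>
        ((((P : Matrix (Fin n) (Fin n) F)).map MvPolynomial.C * genMat F n r v.1 *
            (((P⁻¹ : GL (Fin n) F) : Matrix (Fin n) (Fin n) F)).map MvPolynomial.C :
          Matrix (Fin n) (Fin n) (MvPolynomial (Fin r × Fin n × Fin n) F)))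
          v.2.1 v.2.2) = g
  have h1 : ∀ i, (aeval g).mapMatrix (genMat F n r i) =
      ((P : Matrix (Fin n) (Fin n) F)).map MvPolynomial.C * genMat F n r i *
            (((P⁻¹ : GL (Fin n) F) : Matrix (Fin n) (Fin n) F)).map MvPolynomial.C := by
    intro i
    ext1 a b
    rw [AlgHom.mapMatrix_apply, Matrix.map_apply]
    simp only [genMat, Matrix.of_apply, aeval_X]
    rw [← hg]
    rfl
  have hPQ : (((P⁻¹ : GL (Fin n) F) : Matrix (Fin n) (Fin n) F)).map
      (MvPolynomial.C (σ := Fin r × Fin n × Fin n)) *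
      ((P : Matrix (Fin n) (Fin n) F)).map MvPolynomial.C = 1 := by
    rw [← Matrix.map_mul, ← Units.val_mul]
    simp only [mul_inv_cancel, inv_mul_cancel, Units.val_one]
    exact Matrix.map_one (MvPolynomial.C) (map_zero _) (map_one _)
  have hQP : ((P : Matrix (Fin n) (Fin n) F)).map (MvPolynomial.C (σ := Fin r × Fin n × Fin n)) *
      (((P⁻¹ : GL (Fin n) F) : Matrix (Fin n) (Fin n) F)).map
      MvPolynomial.C = 1 := by
    rw [← Matrix.map_mul, ← Units.val_mul]
    simp only [mul_inv_cancel, inv_mul_cancel, Units.val_one]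
    exact Matrix.map_one (MvPolynomial.C) (map_zero _) (map_one _)
  generalize hp : ((P : Matrix (Fin n) (Fin n) F)).map
    (MvPolynomial.C (σ := Fin r × Fin n × Fin n)) = p at *
  generalize hq : (((P⁻¹ : GL (Fin n) F) : Matrix (Fin n) (Fin n) F)).map
      (MvPolynomial.C (σ := Fin r × Fin n × Fin n)) = q at *
  have h2 : (aeval g).mapMatrix (w.map (genMat F n r)).prod = p * (w.map (genMat F n r)).prod * q := by
    induction w with
    | nil => simp [hQP]
    | cons i w ih =>
      rw [List.map_cons, List.prod_cons, map_mul, h1, ih]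
      calc _ = p * genMat F n r i * (q * p) * (w.map (genMat F n r)).prod * q := by
            simp only [mul_assoc]
        _ = _ := by rw [hPQ]; simp only [mul_assoc, mul_one, one_mul]
  have h3 : aeval g (Matrix.trace (w.map (genMat F n r)).prod) =
      Matrix.trace ((aeval g).mapMatrix (w.map (genMat F n r)).prod) := by
    simp [Matrix.trace, map_sum]
  rw [h3, h2, Matrix.trace_mul_comm, ← mul_assoc, hPQ, one_mul]

theorem evalTuple_word {F : Type*} [Field F] {n r : ℕ} (A : Fin r → Matrix (Fin n) (Fin n) F)
    (w : List (Fin r)) :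
    evalTuple A (Matrix.trace (w.map (genMat F n r)).prod) = Matrix.trace (w.map A).prod := by
  unfold evalTuple
  generalize hg : (fun v : Fin r × Fin n × Fin n => A v.1 v.2.1 v.2.2) = g
  have h1 : ∀ i, (eval g).mapMatrix (genMat F n r i) = A i := by
    intro i
    rw [← hg]
    exact evalTuple_genMat A i
  have h2 : (eval g).mapMatrix (w.map (genMat F n r)).prod = (w.map A).prod := by
    rw [map_list_prod, List.map_map]
    congr 1
    apply List.map_congr_left
    intro i _
    exact h1 i
  rw [← h2]
  simp [Matrix.trace, map_sum]

theorem InvEq.trace_word {F : Type*} [Field F] {n r : ℕ} {A B : Fin r → Matrix (Fin n) (Fin n) F}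
    (h : InvEq A B) (w : List (Fin r)) :
    Matrix.trace (w.map A).prod = Matrix.trace (w.map B).prod := by
  have := h _ (word_invariant w)
  rwa [evalTuple_word, evalTuple_word] at this

theorem degen_alg {F E : Type*} [Field F] [Ring E] [Algebra F E] (p : E) (hp : p * p = p)
    {t : F} (ht : t ≠ 0) : (t • p + (1 - p)) * (t⁻¹ • p + (1 - p)) = 1 ∧
      (t⁻¹ • p + (1 - p)) * (t • p + (1 - p)) = 1 ∧
      ∀ x : E, p * x * p = x * p →
      p * x * p + (1 - p) * x * (1 - p) + t • (p * x * (1 - p)) =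
        (t • p + (1 - p)) * x * (t⁻¹ • p + (1 - p)) := by
  have q : (1 - p) * (1 - p) = 1 - p := by
    rw [sub_mul, mul_sub, mul_sub, hp]; simp
  have q1 : p * (1 - p) = 0 := by rw [mul_sub, hp]; simp
  have q2 : (1 - p) * p = 0 := by rw [sub_mul, hp]; simp
  have m1 : ∀ (c : F) (x y : E), (c • x) * y = c • (x * y) := fun c x y => smul_mul_assoc c x y
  have m2 : ∀ (c : F) (x y : E), x * (c • y) = c • (x * y) := fun c x y => mul_smul_comm c x y
  have c1 : ∀ y : E, t • t⁻¹ • y = y := fun y => by rw [smul_smul, mul_inv_cancel₀ ht, one_smul]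
  have c2 : ∀ y : E, t⁻¹ • t • y = y := fun y => by rw [smul_smul, inv_mul_cancel₀ ht, one_smul]
  refine ⟨?_, ?_, ?_⟩
  · rw [add_mul, mul_add, mul_add, m1, m2, m1, m2, hp, q, q1, q2, c1, smul_zero, smul_zero]
    abel
  · rw [add_mul, mul_add, mul_add, m1, m2, m1, m2, hp, q, q1, q2, c2, smul_zero, smul_zero]
    abel
  · intro x hx
    have hz : (1 - p) * x * p = 0 := by
      rw [sub_mul, sub_mul, hx]; simp
    rw [add_mul (t • p), add_mul _ _ (t⁻¹ • p + (1 - p)), mul_add, mul_add, m1, m1, m2, c1, m1, m2,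
      hz, smul_zero]
    abel

/-- degeneration along an invariant subspace -/
theorem invEq_degen {F : Type*} [Field F] [Infinite F] {n r : ℕ}
    (A : Fin r → Matrix (Fin n) (Fin n) F)
    (p : Matrix (Fin n) (Fin n) F) (hp : p * p = p) (hA : ∀ i, p * A i * p = A i * p) :
    InvEq A (fun i => p * A i * p + (1 - p) * A i * (1 - p)) := by
  intro f hf
  -- the family
  let D : F → Fin r → Matrix (Fin n) (Fin n) F := fun t i =>
    p * A i * p + (1 - p) * A i * (1 - p) + t • (p * A i * (1 - p))
  have hD : ∀ t, t ≠ 0 → evalTuple (D t) f = evalTuple A f := by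
    intro t ht
    obtain ⟨e1, e2, e3⟩ := degen_alg p hp ht
    refine (invEq_conj' A (D t) (t • p + (1 - p)) (t⁻¹ • p + (1 - p)) e1 e2 ?_ f hf).symm
    intro i
    exact e3 (A i) (hA i)
  -- polynomial in t
  let g : Fin r × Fin n × Fin n → Polynomial F := fun v =>
    Polynomial.C ((p * A v.1 * p + (1 - p) * A v.1 * (1 - p)) v.2.1 v.2.2) +
      Polynomial.X * Polynomial.C ((p * A v.1 * (1 - p)) v.2.1 v.2.2)
  have hg : ∀ t, evalTuple (D t) f = (aeval g f).eval t := by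
    intro t
    have e : (Polynomial.evalRingHom t).comp (aeval (R := F) g).toRingHom =
      (eval (fun v : Fin r × Fin n × Fin n => D t v.1 v.2.1 v.2.2)) := by
      apply MvPolynomial.ringHom_ext
      · intro c; simp
      · intro v; simp [g, D]; ring
    exact (RingHom.congr_fun e f).symm
  have hpoly : aeval g f = Polynomial.C (evalTuple A f) := by
    apply Polynomial.eq_of_infinite_eval_eq
    refine Set.Infinite.mono (s := {t : F | t ≠ 0}) ?_ ?_
    · intro t ht
      simp only [Set.mem_ofPred_eq, Polynomial.eval_C]
      rw [← hg, hD t ht]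
    · exact Set.Finite.infinite_compl (Set.finite_singleton (0 : F))
  have h0 := hg 0
  rw [hpoly, Polynomial.eval_C] at h0
  rw [← h0]
  simp [D]

end part3

section part4

/-- product of sums -/
theorem ofFn_prod_sum {S : Type*} [CommRing S] {n r : ℕ} (M : Fin r → Matrix (Fin n) (Fin n) S)
    (ℓ : ℕ) (c : Fin ℓ → Fin r → S) :
    (List.ofFn fun j : Fin ℓ => ∑ i : Fin r, c j i • M i).prod =
      ∑ w : Fin ℓ → Fin r, (∏ j, c j (w j)) • ((List.ofFn w).map M).prod := by
  induction ℓ with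
  | zero => simp
  | succ ℓ ih =>
    rw [List.ofFn_succ, List.prod_cons, ih (fun j => c j.succ)]
    rw [← (Fin.consEquiv (fun _ : Fin (ℓ + 1) => Fin r)).sum_comp, Fintype.sum_prod_type,
      Finset.sum_mul]
    refine Finset.sum_congr rfl fun i _ => ?_
    rw [Finset.mul_sum]
    refine Finset.sum_congr rfl fun w _ => ?_
    simp only [Fin.consEquiv, Equiv.coe_fn_mk, Fin.prod_univ_succ, List.ofFn_succ, smul_smul,
      Fin.cons_zero, Fin.cons_succ, List.map_cons, List.prod_cons, smul_mul_assoc, mul_smul_comm]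
    rw [mul_comm]

theorem fpoly_eq {R : Type*} [CommRing R] (n r ℓ : ℕ)
    (A : Fin r → Matrix (Fin n) (Fin n) R) :
    fpoly n r ℓ A = ∑ w : Fin ℓ → Fin r,
      MvPolynomial.monomial (Finsupp.equivFunOnFinite.symm (fun j => (w j : ℕ)))
        (Matrix.trace ((List.ofFn w).map A).prod) := by
  have h : ∀ j : Fin ℓ, (∑ i : Fin r, (A i).map fun a =>
      MvPolynomial.C (σ := Fin ℓ) a * MvPolynomial.X j ^ (i : ℕ)) =
      ∑ i : Fin r, (MvPolynomial.X (R := R) j ^ (i : ℕ)) • (MvPolynomial.C (σ := Fin ℓ)).mapMatrix (A i) := by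
    intro j
    refine Finset.sum_congr rfl fun i _ => ?_
    ext1 a b
    simp [mul_comm]
  unfold fpoly
  simp only [h]
  rw [ofFn_prod_sum (fun i => (MvPolynomial.C (σ := Fin ℓ)).mapMatrix (A i)) ℓ
    (fun j i => MvPolynomial.X (R := R) j ^ (i : ℕ)), Matrix.trace_sum]
  refine Finset.sum_congr rfl fun w _ => ?_
  have e : ((List.ofFn w).map fun i => (MvPolynomial.C (σ := Fin ℓ)).mapMatrix (A i)).prod =
      (MvPolynomial.C (σ := Fin ℓ)).mapMatrix ((List.ofFn w).map A).prod := by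
    rw [map_list_prod, List.map_map]
    rfl
  rw [e, Matrix.trace_smul, MvPolynomial.monomial_eq]
  have e2 : Matrix.trace ((MvPolynomial.C (σ := Fin ℓ)).mapMatrix ((List.ofFn w).map A).prod) =
      MvPolynomial.C (Matrix.trace ((List.ofFn w).map A).prod) := by
    simp [Matrix.trace, map_sum]
  rw [e2, smul_eq_mul, mul_comm]
  congr 1
  rw [Finsupp.prod_fintype _ _ (by simp)]
  simp

theorem fpoly_eq_iff {R : Type*} [CommRing R] (n r ℓ : ℕ)
    (A B : Fin r → Matrix (Fin n) (Fin n) R) :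
    fpoly n r ℓ A = fpoly n r ℓ B ↔
      ∀ w : List (Fin r), w.length = ℓ →
        Matrix.trace (w.map A).prod = Matrix.trace (w.map B).prod := by
  constructor
  · intro h w hw
    subst hw
    have hc : ∀ A : Fin r → Matrix (Fin n) (Fin n) R, MvPolynomial.coeff
      (Finsupp.equivFunOnFinite.symm (fun j => (w.get j : ℕ))) (fpoly n r w.length A) =
        Matrix.trace (w.map A).prod := by
      classical
      intro A
      rw [fpoly_eq, MvPolynomial.coeff_sum, Finset.sum_eq_single w.get]
      · rw [MvPolynomial.coeff_monomial, if_pos rfl, List.ofFn_get]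
      · intro w' _ hne
        rw [MvPolynomial.coeff_monomial, if_neg]
        intro he
        apply hne
        have := Finsupp.equivFunOnFinite.symm.injective he
        ext j
        exact congrFun this j
      · simp
    rw [← hc, ← hc, h]
  · intro h
    rw [fpoly_eq, fpoly_eq]
    refine Finset.sum_congr rfl fun w _ => ?_
    rw [h _ (by simp)]

end part4

section part5

universe u

/-- the module over the free algebra attached to a tuple of matrices -/
def TMod {F : Type u} [Field F] {n r : ℕ} (_A : Fin r → Matrix (Fin n) (Fin n) F) : Type u :=
  Fin n → F

variable {F : Type u} [Field F] {n r : ℕ} (A : Fin r → Matrix (Fin n) (Fin n) F)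

noncomputable instance : AddCommGroup (TMod A) := inferInstanceAs (AddCommGroup (Fin n → F))

noncomputable instance : Module F (TMod A) := inferInstanceAs (Module F (Fin n → F))

instance : FiniteDimensional F (TMod A) := inferInstanceAs (FiniteDimensional F (Fin n → F))

/-- the representation -/
noncomputable def TRep : FreeAlgebra F (Fin r) →ₐ[F] Module.End F (TMod A) :=
  (Matrix.toLinAlgEquiv' : Matrix (Fin n) (Fin n) F ≃ₐ[F] _).toAlgHom.comp (FreeAlgebra.lift F A)

noncomputable instance : Module (FreeAlgebra F (Fin r)) (TMod A) :=
  Module.compHom (TMod A) (TRep A).toRingHom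

theorem TMod.smul_def (x : FreeAlgebra F (Fin r)) (v : TMod A) : x • v = TRep A x v := rfl

instance : IsScalarTower F (FreeAlgebra F (Fin r)) (TMod A) where
  smul_assoc c x v := by
    rw [TMod.smul_def, TMod.smul_def, map_smul]; rfl

theorem TMod.ι_smul (i : Fin r) (v : TMod A) :
    (FreeAlgebra.ι F i) • v = ((A i).mulVec v : Fin n → F) := by
  have : TRep A (FreeAlgebra.ι F i) = Matrix.toLin' (A i) := by
    change Matrix.toLinAlgEquiv' (FreeAlgebra.lift F A (FreeAlgebra.ι F i)) = _
    rw [FreeAlgebra.lift_ι_apply]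
    rfl
  rw [TMod.smul_def, this]
  rfl

theorem trAct_TMod (x : FreeAlgebra F (Fin r)) :
    trAct F (TMod A) x = Matrix.trace (FreeAlgebra.lift F A x) := by
  have : Algebra.lsmul F F (TMod A) x = Matrix.toLin' (FreeAlgebra.lift F A x) := rfl
  unfold trAct
  rw [this]
  exact Matrix.trace_toLin'_eq _

theorem trAct_eq_of_words {A B : Fin r → Matrix (Fin n) (Fin n) F}
    (h : ∀ w : List (Fin r), Matrix.trace (w.map A).prod = Matrix.trace (w.map B).prod)
    (x : FreeAlgebra F (Fin r)) : trAct F (TMod A) x = trAct F (TMod B) x := by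
  rw [trAct_TMod, trAct_TMod]
  have hx : x ∈ (Submodule.span F
      (Submonoid.closure (Set.range (FreeAlgebra.ι F (X := Fin r))) : Set (FreeAlgebra F (Fin r)))) := by
    rw [← Algebra.adjoin_eq_span, FreeAlgebra.adjoin_range_ι]
    trivial
  induction hx using Submodule.span_induction with
  | mem y hy =>
    obtain ⟨l, hl, rfl⟩ := Submonoid.exists_list_of_mem_closure hy
    obtain ⟨w, rfl⟩ : ∃ w : List (Fin r), w.map (FreeAlgebra.ι F) = l := by
      have : l ∈ Set.range (List.map (FreeAlgebra.ι F (X := Fin r))) := by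
        rw [Set.range_list_map]
        exact hl
      exact this
    have := h w
    rw [map_list_prod, map_list_prod, List.map_map, List.map_map]
    rw [FreeAlgebra.ι_comp_lift, FreeAlgebra.ι_comp_lift]
    exact this
  | zero => simp
  | add y z _ _ hy hz => simp [hy, hz]
  | smul c y _ hy => simp [hy]

section freemod

variable {M N : Type u} [AddCommGroup M] [Module F M] [Module (FreeAlgebra F (Fin r)) M]
    [IsScalarTower F (FreeAlgebra F (Fin r)) M] [AddCommGroup N] [Module F N]
    [Module (FreeAlgebra F (Fin r)) N] [IsScalarTower F (FreeAlgebra F (Fin r)) N]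

theorem free_linear (g : M →ₗ[F] N)
    (h : ∀ i m, g (FreeAlgebra.ι F i • m) = (FreeAlgebra.ι F i : FreeAlgebra F (Fin r)) • g m)
    (x : FreeAlgebra F (Fin r)) (m : M) : g (x • m) = x • g m := by
  induction x using FreeAlgebra.induction generalizing m with
  | grade0 c => rw [algebraMap_smul, algebraMap_smul, map_smul]
  | grade1 i => exact h i m
  | mul x y hx hy => rw [mul_smul, mul_smul, hx, hy]
  | add x y hx hy => rw [add_smul, add_smul, map_add, hx, hy]

/-- a subspace closed under the generators -/
def freeSub (S : Submodule F M)
    (h : ∀ i, ∀ m ∈ S, (FreeAlgebra.ι F i : FreeAlgebra F (Fin r)) • m ∈ S) :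
    Submodule (FreeAlgebra F (Fin r)) M where
  carrier := S
  add_mem' := S.add_mem
  zero_mem' := S.zero_mem
  smul_mem' := by
    intro x m hm
    induction x using FreeAlgebra.induction generalizing m with
    | grade0 c => rw [algebraMap_smul]; exact S.smul_mem c hm
    | grade1 i => exact h i m hm
    | mul x y hx hy => rw [mul_smul]; exact hx (hy hm)
    | add x y hx hy => rw [add_smul]; exact S.add_mem (hx hm) (hy hm)

theorem mem_freeSub (S : Submodule F M)
    (h : ∀ i, ∀ m ∈ S, (FreeAlgebra.ι F i : FreeAlgebra F (Fin r)) • m ∈ S) (m : M) :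
    m ∈ freeSub S h ↔ m ∈ S := Iff.rfl

end freemod

/-- one degeneration step enlarges a semisimple submodule -/
theorem enlarge [Infinite F] (S : Submodule (FreeAlgebra F (Fin r)) (TMod A))
    (hS : IsSemisimpleModule (FreeAlgebra F (Fin r)) S) (htop : S ≠ ⊤) :
    ∃ (B : Fin r → Matrix (Fin n) (Fin n) F) (T : Submodule (FreeAlgebra F (Fin r)) (TMod B)),
      InvEq A B ∧ IsSemisimpleModule (FreeAlgebra F (Fin r)) T ∧
      Module.finrank F S < Module.finrank F T := by
  let S₀ : Submodule F (Fin n → F) := S.restrictScalars F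
  obtain ⟨C, hC⟩ := exists_isCompl S₀
  let π : (Fin n → F) →ₗ[F] (Fin n → F) := S₀.subtype ∘ₗ Submodule.projectionOnto S₀ C hC
  have hπS : ∀ v ∈ S₀, π v = v := by
    intro v hv
    have := Submodule.projectionOnto_apply_left hC ⟨v, hv⟩
    simpa [π] using congrArg Subtype.val this
  have hπmem : ∀ v, π v ∈ S₀ := fun v => by simp [π]
  have hπC : ∀ v, π v = 0 ↔ v ∈ C := by
    intro v
    simp [π]
  let p : Matrix (Fin n) (Fin n) F := LinearMap.toMatrix' π
  have hpv : ∀ v, p.mulVec v = π v := by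
    intro v
    rw [← Matrix.toLin'_apply, Matrix.toLin'_toMatrix']
  have hp : p * p = p := by
    apply Matrix.toLin'.injective
    ext1 v
    apply LinearMap.ext
    intro v
    simp only [Matrix.toLin'_mul, LinearMap.comp_apply, Matrix.toLin'_apply, hpv]
    exact hπS _ (hπmem _)
  have hAS : ∀ i, ∀ v ∈ S₀, (A i).mulVec v ∈ S₀ := by
    intro i v hv
    let v' : TMod A := v
    have h1 : (FreeAlgebra.ι F i : FreeAlgebra F (Fin r)) • v' ∈ S := S.smul_mem _ hv
    rw [TMod.ι_smul] at h1
    exact h1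
  have hA : ∀ i, p * A i * p = A i * p := by
    intro i
    apply Matrix.toLin'.injective
    apply LinearMap.ext
    intro v
    simp only [Matrix.toLin'_mul, LinearMap.comp_apply, Matrix.toLin'_apply, hpv]
    exact hπS _ (hAS i _ (hπmem _))
  let B : Fin r → Matrix (Fin n) (Fin n) F := fun i => p * A i * p + (1 - p) * A i * (1 - p)
  have hBv : ∀ i v, (B i).mulVec v = π ((A i).mulVec (π v)) +
      ((A i).mulVec (v - π v) - π ((A i).mulVec (v - π v))) := by
    intro i v
    simp only [B, Matrix.add_mulVec, ← Matrix.mulVec_mulVec, Matrix.sub_mulVec, Matrix.one_mulVec,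
      hpv]
  have hBS : ∀ i, ∀ v ∈ S₀, (B i).mulVec v = (A i).mulVec v := by
    intro i v hv
    rw [hBv, hπS v hv, hπS _ (hAS i v hv)]
    simp
  have hBC : ∀ i, ∀ v ∈ C, (B i).mulVec v ∈ C := by
    intro i v hv
    rw [hBv, (hπC v).mpr hv]
    simp only [Matrix.mulVec_zero, map_zero, sub_zero, zero_add]
    rw [← hπC, map_sub, hπS _ (hπmem _), sub_self]
  let S₁ : Submodule F (TMod B) := S₀
  let C₁ : Submodule F (TMod B) := C
  let SB : Submodule (FreeAlgebra F (Fin r)) (TMod B) := freeSub (M := TMod B) S₁ (by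
    intro i m hm
    rw [TMod.ι_smul, hBS i m hm]
    exact hAS i m hm)
  let CB : Submodule (FreeAlgebra F (Fin r)) (TMod B) := freeSub (M := TMod B) C₁ (by
    intro i m hm
    rw [TMod.ι_smul]
    exact hBC i m hm)
  -- the identity map
  let g : SB →ₗ[F] S :=
    { toFun := fun v => ⟨v.1, v.2⟩
      map_add' := fun _ _ => rfl
      map_smul' := fun _ _ => rfl }
  have hg : ∀ i m, g (FreeAlgebra.ι F i • m) =
      (FreeAlgebra.ι F i : FreeAlgebra F (Fin r)) • g m := by
    intro i m
    apply Subtype.ext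
    change (FreeAlgebra.ι F i : FreeAlgebra F (Fin r)) • (m.1 : TMod B) =
      (FreeAlgebra.ι F i : FreeAlgebra F (Fin r)) • (show TMod A from m.1)
    rw [TMod.ι_smul, TMod.ι_smul]
    exact hBS i m.1 m.2
  let g' : SB →ₗ[FreeAlgebra F (Fin r)] S :=
    { toFun := g
      map_add' := g.map_add
      map_smul' := free_linear g hg }
  have hginj : Function.Injective g' := by
    intro v w hvw
    have := congrArg Subtype.val hvw
    exact Subtype.ext this
  have hSB : IsSemisimpleModule (FreeAlgebra F (Fin r)) SB :=
    IsSemisimpleModule.of_injective g' hginj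
  have hart : IsArtinian (FreeAlgebra F (Fin r)) (TMod B) := isArtinian_of_tower F inferInstance
  have hCne : CB ≠ ⊥ := by
    intro h
    apply htop
    have : C = ⊥ := by
      rw [eq_bot_iff]
      intro v hv
      have : (v : TMod B) ∈ CB := hv
      rw [h] at this
      exact this
    rw [this] at hC
    have hSt := hC.sup_eq_top
    rw [sup_bot_eq] at hSt
    rw [eq_top_iff]
    intro v _
    have : (v : Fin n → F) ∈ S₀ := by rw [hSt]; trivial
    exact this
  obtain ⟨t, ht, htC⟩ := (IsAtomic.eq_bot_or_exists_atom_le CB).resolve_left hCne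
  have hts : IsSimpleModule (FreeAlgebra F (Fin r)) t := isSimpleModule_iff_isAtom.mpr ht
  refine ⟨B, SB ⊔ t, invEq_degen A p hp hA, IsSemisimpleModule.sup hSB inferInstance, ?_⟩
  have hlt : SB < SB ⊔ t := by
    refine lt_of_le_not_ge le_sup_left ?_
    intro h
    apply ht.1
    rw [eq_bot_iff]
    intro v hv
    have h1 : (v : Fin n → F) ∈ S₀ := h (Submodule.mem_sup_right hv)
    have h2 : (v : Fin n → F) ∈ C := htC hv
    have : (v : Fin n → F) ∈ S₀ ⊓ C := ⟨h1, h2⟩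
    rw [hC.inf_eq_bot] at this
    exact this
  have e1 : Module.finrank F S = Module.finrank F (SB.restrictScalars F) := rfl
  rw [e1]
  exact Submodule.finrank_lt_finrank_of_lt (s := SB.restrictScalars F)
    (t := (SB ⊔ t).restrictScalars F) hlt

theorem exists_semisimple [Infinite F] (d : ℕ) :
    ∀ (A : Fin r → Matrix (Fin n) (Fin n) F) (S : Submodule (FreeAlgebra F (Fin r)) (TMod A)),
    IsSemisimpleModule (FreeAlgebra F (Fin r)) S → n ≤ Module.finrank F S + d →
    ∃ B : Fin r → Matrix (Fin n) (Fin n) F, InvEq A B ∧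
      IsSemisimpleModule (FreeAlgebra F (Fin r)) (TMod B) := by
  induction d with
  | zero =>
    intro A S hS hd
    have h1 : S.restrictScalars F = ⊤ := by
      apply Submodule.eq_top_of_finrank_eq
      apply le_antisymm (Submodule.finrank_le _)
      have : Module.finrank F (TMod A) = n := Module.finrank_fin_fun F
      rw [this]
      exact hd
    have h2 : S = ⊤ := by
      rw [eq_top_iff]
      intro v _
      have : v ∈ S.restrictScalars F := by rw [h1]; trivial
      exact this
    subst h2
    exact ⟨A, fun _ _ => rfl, IsSemisimpleModule.congr (Submodule.topEquiv).symm⟩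
  | succ d ih =>
    intro A S hS hd
    by_cases h : S = ⊤
    · subst h
      exact ⟨A, fun _ _ => rfl, IsSemisimpleModule.congr (Submodule.topEquiv).symm⟩
    · obtain ⟨B, T, hAB, hT, hlt⟩ := enlarge A S hS h
      obtain ⟨B', hB', hss⟩ := ih B T hT (by omega)
      exact ⟨B', hAB.trans hB', hss⟩

theorem invEq_of_iso {A B : Fin r → Matrix (Fin n) (Fin n) F}
    (e : TMod A ≃ₗ[FreeAlgebra F (Fin r)] TMod B) : InvEq A B := by
  let e' : (Fin n → F) ≃ₗ[F] (Fin n → F) := e.restrictScalars F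
  have hcomm : ∀ i v, e' ((A i).mulVec v) = (B i).mulVec (e' v) := by
    intro i v
    let v' : TMod A := v
    have h1 := e.map_smul (FreeAlgebra.ι F i) v'
    rw [TMod.ι_smul B] at h1
    exact (congrArg e (TMod.ι_smul A i v').symm).trans h1
  refine invEq_conj' A B (LinearMap.toMatrix' e'.toLinearMap)
    (LinearMap.toMatrix' e'.symm.toLinearMap) ?_ ?_ ?_
  · rw [← LinearMap.toMatrix'_comp]; simp
  · rw [← LinearMap.toMatrix'_comp]; simp
  · intro i
    apply Matrix.toLin'.injective
    apply LinearMap.ext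
    intro v
    simp only [Matrix.toLin'_mul, LinearMap.comp_apply, Matrix.toLin'_apply,
      Matrix.toLin'_toMatrix']
    simp [hcomm]

theorem invEq_of_words [CharZero F] {A B : Fin r → Matrix (Fin n) (Fin n) F}
    (h : ∀ w : List (Fin r), Matrix.trace (w.map A).prod = Matrix.trace (w.map B).prod) :
    InvEq A B := by
  have hbot : ∀ A : Fin r → Matrix (Fin n) (Fin n) F, IsSemisimpleModule (FreeAlgebra F (Fin r))
      (⊥ : Submodule (FreeAlgebra F (Fin r)) (TMod A)) := fun A =>
    IsSemisimpleModule.of_sSup_simples_eq_top (Subsingleton.elim _ _)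
  obtain ⟨A', hA, hA'⟩ := exists_semisimple n A ⊥ (hbot A) (by omega)
  obtain ⟨B', hB, hB'⟩ := exists_semisimple n B ⊥ (hbot B) (by omega)
  obtain ⟨e⟩ := iso_of_trAct (F := F) (R := FreeAlgebra F (Fin r)) _ (TMod A') (TMod B') le_rfl
    (trAct_eq_of_words (fun w => by rw [← hA.trace_word, ← hB.trace_word, h]))
  exact (hA.trans (invEq_of_iso e)).trans hB.symm

theorem words_of_short {A B : Fin r → Matrix (Fin n) (Fin n) F}
    (h : ∀ w : List (Fin r), w.length ≤ n ^ 2 →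
      Matrix.trace (w.map A).prod = Matrix.trace (w.map B).prod) (w : List (Fin r)) :
    Matrix.trace (w.map A).prod = Matrix.trace (w.map B).prod := by
  rcases Nat.eq_zero_or_pos n with hn | hn
  · subst hn
    simp [Matrix.trace]
  let a : Fin r → Matrix (Fin n) (Fin n) F × Matrix (Fin n) (Fin n) F := fun i => (A i, B i)
  have hw : ∀ w, wprod a w = ((w.map A).prod, (w.map B).prod) := by
    intro w
    induction w with
    | nil => rfl
    | cons i w ih =>
      have : wprod a (i :: w) = a i * wprod a w := by simp [wprod]
      rw [this, ih]
      simp [a]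
  haveI : Nonempty (Fin n) := ⟨⟨0, hn⟩⟩
  have hb := wspan_bound (F := F) a (m := 2 * n) (N := n ^ 2) (by nlinarith [sq_nonneg ((n : ℤ) - 1)])
    (by
      rw [Module.finrank_prod, Module.finrank_matrix]
      simp
      nlinarith)
    (by
      intro i
      refine ⟨(A i).charpoly * (B i).charpoly, (Matrix.charpoly_monic _).mul
        (Matrix.charpoly_monic _), ?_, ?_⟩
      · rw [(Matrix.charpoly_monic _).natDegree_mul (Matrix.charpoly_monic _),
          Matrix.charpoly_natDegree_eq_dim, Matrix.charpoly_natDegree_eq_dim]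
        simp; omega
      · have e1 : Polynomial.aeval (A i) ((A i).charpoly * (B i).charpoly) = 0 := by
          rw [map_mul, Matrix.aeval_self_charpoly, zero_mul]
        have e2 : Polynomial.aeval (B i) ((A i).charpoly * (B i).charpoly) = 0 := by
          rw [map_mul, Matrix.aeval_self_charpoly, mul_zero]
        have h1 := Polynomial.aeval_algHom_apply (AlgHom.fst F (Matrix (Fin n) (Fin n) F)
          (Matrix (Fin n) (Fin n) F)) (a i) ((A i).charpoly * (B i).charpoly)
        have h2 := Polynomial.aeval_algHom_apply (AlgHom.snd F (Matrix (Fin n) (Fin n) F)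
          (Matrix (Fin n) (Fin n) F)) (a i) ((A i).charpoly * (B i).charpoly)
        exact Prod.ext (h1.symm.trans e1) (h2.symm.trans e2)) w
  let φ : Matrix (Fin n) (Fin n) F × Matrix (Fin n) (Fin n) F →ₗ[F] F :=
    (Matrix.traceLinearMap (Fin n) F F) ∘ₗ LinearMap.fst F _ _ -
      (Matrix.traceLinearMap (Fin n) F F) ∘ₗ LinearMap.snd F _ _
  have hφ : wspan F a (n ^ 2) ≤ LinearMap.ker φ := by
    apply Submodule.span_le.mpr
    rintro x ⟨w, hwl, rfl⟩
    rw [hw]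
    simp [φ, h w hwl]
  have := hφ hb
  rw [hw] at this
  simpa [φ, sub_eq_zero] using this

end part5

/-- Over a field of characteristic zero, `f(A) = f(B)` for every
invariant `f ∈ F[M]^{GL_n(F)}` iff `f_ℓ(A,x) = f_ℓ(B,x)` for every `ℓ ∈ {1,…,n²}`. -/
theorem invariants_agree_iff_fpoly_eq {F : Type*} [Field F] [CharZero F] (n r : ℕ)
    (A B : Fin r → Matrix (Fin n) (Fin n) F) :
    (∀ f : MvPolynomial (Fin r × Fin n × Fin n) F,
        IsSimConjInvariant F n r f → evalTuple A f = evalTuple B f) ↔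
      (∀ ℓ : ℕ, 1 ≤ ℓ → ℓ ≤ n ^ 2 → fpoly n r ℓ A = fpoly n r ℓ B) := by
  constructor
  · intro h ℓ _ _
    rw [fpoly_eq_iff]
    intro w _
    exact InvEq.trace_word (A := A) (B := B) h w
  · intro h
    refine invEq_of_words (words_of_short ?_)
    intro w hw
    rcases Nat.eq_zero_or_pos w.length with h0 | h0
    · rw [List.length_eq_zero_iff.mp h0]
      simp
    · exact (fpoly_eq_iff n r w.length A B).mp (h w.length h0 hw) w rfl
end

section
/- Let F be a field of characteristic zero and let H ⊆ F^{n²} be a set with the following hitting property: for every pair of tuples A, B of r matrices of size n×n over F and every ℓ ∈ {1,…,n²}, if the polynomial f_ℓ(A, x) − f_ℓ(B, x) ∈ F[x_1,…,x_ℓ] is nonzero, then there exists α ∈ H such that f_ℓ(A, (α_1,…,α_ℓ)) ≠ f_ℓ(B, (α_1,…,α_ℓ)). Then the set T_H := { A ↦ f_ℓ(A, (α_1,…,α_ℓ)) : α ∈ H, ℓ ∈ {1,…,n²} } is a set of separating invariants: every element of T_H lies in F[M]^{GL_n(F)}, and for all tuples A, B of r matrices of size n×n over F, there exists f ∈ F[M]^{GL_n(F)}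 with f(A) ≠ f(B) if and only if there exists f' ∈ T_H with f'(A) ≠ f'(B). -/
/-- `f_ℓ(M, α)` as a polynomial in the entries of the generic tuple `M`:
`tr(M(α_1) ⋯ M(α_ℓ))` where `M(α_j) := Σ_{i<r} α_j^i M_i`. -/
noncomputable def fAtPoint (F : Type*) [Field F] (n r ℓ : ℕ) (α : Fin ℓ → F) :
    MvPolynomial (Fin r × Fin n × Fin n) F :=
  Matrix.trace
    (List.ofFn fun j : Fin ℓ => ∑ i : Fin r, (α j ^ (i : ℕ)) • genMat F n r i).prod

/-- The set `T_H` of invariants obtained by evaluating `f_ℓ(M, ·)`, `ℓ ∈ {1,…,n²}`, at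
(the first `ℓ` coordinates of) the points of `H`. -/
def TH (F : Type*) [Field F] (n r : ℕ) (H : Set (Fin (n ^ 2) → F)) :
    Set (MvPolynomial (Fin r × Fin n × Fin n) F) :=
  { g | ∃ (ℓ : ℕ) (_ : 1 ≤ ℓ) (h2 : ℓ ≤ n ^ 2), ∃ α ∈ H,
      g = fAtPoint F n r ℓ fun j => α (Fin.castLE h2 j) }


section Part1
variable {F E : Type*} [Field F] [Ring E] [Algebra F E]

theorem SI_pow_eq_span_lists (S : Submodule F E) (k : ℕ) :
    S ^ k = Submodule.span F {u | ∃ l : List E, l.length = k ∧ (∀ a ∈ l, a ∈ S) ∧ l.prod = u} := by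
  apply le_antisymm
  · conv_lhs => rw [← Submodule.span_eq S, Submodule.span_pow]
    apply Submodule.span_mono
    intro u hu
    rw [Set.mem_pow] at hu
    obtain ⟨f, hf⟩ := hu
    refine ⟨List.ofFn fun i => (f i : E), by simp, ?_, hf⟩
    intro a ha
    rw [List.mem_ofFn] at ha
    obtain ⟨i, rfl⟩ := ha
    exact (f i).2
  · rw [Submodule.span_le]
    rintro u ⟨l, hl, hS, rfl⟩
    induction l generalizing k with
    | nil => subst hl; exact ⟨1, by simp⟩
    | cons a l ih =>
      subst hl
      simp only [List.prod_cons, List.length_cons, pow_succ', SetLike.mem_coe]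
      exact Submodule.mul_mem_mul (hS a (by simp)) (ih _ rfl fun b hb => hS b (by simp [hb]))

theorem SI_list_prod_mem (S : Submodule F E) (l : List E) (hS : ∀ a ∈ l, a ∈ S) :
    l.prod ∈ S ^ l.length := by
  rw [SI_pow_eq_span_lists]
  exact Submodule.subset_span ⟨l, rfl, hS, rfl⟩

theorem SI_pow_mono (S : Submodule F E) (h1 : (1 : E) ∈ S) {i j : ℕ} (h : i ≤ j) :
    S ^ i ≤ S ^ j := 
  pow_le_pow_right' (Submodule.one_le.mpr h1) h

theorem SI_stab (S : Submodule F E) (h1 : (1 : E) ∈ S) {k : ℕ} (h : S ^ (k + 1) ≤ S ^ k)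
    (j : ℕ) : S ^ j ≤ S ^ k := by
  rcases le_total j k with hj | hj
  · exact SI_pow_mono S h1 hj
  · induction j, hj using Nat.le_induction with
    | base => exact le_rfl
    | succ j hj ih =>
      calc S ^ (j+1) = S ^ j * S := pow_succ _ _
        _ ≤ S ^ k * S := mul_le_mul_left ih S
        _ = S ^ (k + 1) := (pow_succ _ _).symm
        _ ≤ _ := h

/-- Key: one-dimensional increment forces a power of a single element. -/
theorem SI_one_dim (S : Submodule F E) (k : ℕ)
    (hd : ∀ w ∈ S ^ (k + 1), w ∉ S ^ k → S ^ (k + 1) ≤ S ^ k ⊔ Submodule.span F {w})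
    (hne : ¬ S ^ (k + 2) ≤ S ^ (k + 1)) :
    ∃ y ∈ S, S ^ (k + 1) ≤ S ^ k ⊔ Submodule.span F {y ^ (k + 1)} := by
  have : ∃ l : List E, l.length = k + 2 ∧ (∀ a ∈ l, a ∈ S) ∧ l.prod ∉ S ^ (k + 1) := by
    by_contra hcon
    push Not at hcon
    apply hne
    rw [SI_pow_eq_span_lists S (k + 2), Submodule.span_le]
    rintro u ⟨l, hl, hS, rfl⟩
    exact hcon l hl hS
  obtain ⟨l, hl, hS, hu⟩ := this
  match l, hl with
  | y :: l, hl =>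
  have hl : l.length = k + 1 := by simpa using hl
  have hy : y ∈ S := hS y (by simp)
  have hlS : ∀ a ∈ l, a ∈ S := fun a ha => hS a (by simp [ha])
  rw [List.prod_cons] at hu
  have key : ∀ j ≤ k + 1, y ^ j * (l.take (k + 1 - j)).prod ∈ S ^ (k + 1) ∧
      y * (y ^ j * (l.take (k + 1 - j)).prod) ∉ S ^ (k + 1) := by
    have mem : ∀ j ≤ k + 1, y ^ j * (l.take (k + 1 - j)).prod ∈ S ^ (k + 1) := by
      intro j hj
      have e : k + 1 = j + (k + 1 - j) := by omega
      have h2 := SI_list_prod_mem S (l.take (k + 1 - j))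
        (fun a ha => hlS a (List.mem_of_mem_take ha))
      rw [List.length_take, hl, min_eq_left (by omega)] at h2
      have := Submodule.mul_mem_mul (Submodule.pow_mem_pow S hy j) h2
      rwa [← pow_add, ← e] at this
    intro j hj
    refine ⟨mem j hj, ?_⟩
    induction j with
    | zero =>
      have : l.take (k + 1) = l := List.take_of_length_le (by omega)
      simpa [this] using hu
    | succ j ih =>
      have ih := ih (by omega)
      set w := y ^ j * (l.take (k + 1 - j)).prod with hw
      set w' := y ^ (j+1) * (l.take (k + 1 - (j+1))).prod with hw'
      have hlt : k + 1 - (j + 1) < l.length := by omega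
      have e : l.take (k + 1 - j) = l.take (k + 1 - (j+1)) ++ [l[k + 1 - (j + 1)]] := by
        rw [List.take_append_getElem]
        congr 1; omega
      have e2 : y * w = w' * l[k + 1 - (j + 1)] := by
        rw [hw, e, hw', List.prod_append, pow_succ']; simp [mul_assoc]
      have hw'n : w' ∉ S ^ k := by
        intro hc
        apply ih
        rw [e2, pow_succ]
        exact Submodule.mul_mem_mul hc (hlS _ (List.getElem_mem _))
      have := hd w' (mem _ hj) hw'n (mem j (by omega))
      rw [Submodule.mem_sup] at this
      obtain ⟨a, ha, b, hb, hab⟩ := this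
      obtain ⟨c, rfl⟩ := Submodule.mem_span_singleton.mp hb
      intro hc
      apply ih
      rw [← hw] at hab
      rw [← hab, mul_add, mul_smul_comm]
      refine add_mem ?_ (Submodule.smul_mem _ _ hc)
      rw [pow_succ']
      exact Submodule.mul_mem_mul hy ha
  have hk := key (k + 1) le_rfl
  simp only [Nat.sub_self, List.take_zero, List.prod_nil, mul_one] at hk
  refine ⟨y, hy, hd _ hk.1 ?_⟩
  intro hc
  apply hk.2
  rw [pow_succ']
  exact Submodule.mul_mem_mul hy hc

theorem SI_step (S : Submodule F E) (k : ℕ) (y : E) (hy : y ∈ S)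
    (h : S ^ (k + 1) ≤ S ^ k ⊔ Submodule.span F {y ^ (k + 1)}) (j : ℕ) (hj : k ≤ j) :
    S ^ (j + 1) ≤ S ^ j ⊔ Submodule.span F {y ^ (j + 1)} := by
  induction j, hj using Nat.le_induction with
  | base => exact h
  | succ j hj ih =>
    rw [pow_succ' S (j+1), Submodule.mul_le]
    intro s hs u hu
    obtain ⟨a, ha, b, hb, rfl⟩ := Submodule.mem_sup.mp (ih hu)
    obtain ⟨c, rfl⟩ := Submodule.mem_span_singleton.mp hb
    rw [mul_add, mul_smul_comm]
    refine add_mem (Submodule.mem_sup_left ?_) (Submodule.smul_mem _ _ ?_)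
    · rw [pow_succ']; exact Submodule.mul_mem_mul hs ha
    · have : s * y ^ j ∈ S ^ (j + 1) := by
        rw [pow_succ']; exact Submodule.mul_mem_mul hs (Submodule.pow_mem_pow S hy j)
      obtain ⟨a, ha, b, hb, e⟩ := Submodule.mem_sup.mp (ih this)
      obtain ⟨c, rfl⟩ := Submodule.mem_span_singleton.mp hb
      rw [pow_succ y j, ← mul_assoc, ← e, add_mul, smul_mul_assoc, ← pow_succ]
      refine add_mem (Submodule.mem_sup_left ?_) (Submodule.smul_mem _ _ (Submodule.mem_sup_right (Submodule.mem_span_singleton_self _)))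
      rw [pow_succ]; exact Submodule.mul_mem_mul ha hy

theorem SI_length_bound [FiniteDimensional F E] (S : Submodule F E) (h1 : (1 : E) ∈ S) (N M : ℕ)
    (hN : Module.finrank F E ≤ 2 * N) (hM1 : 1 ≤ M) (hM : M ≤ N + 1) [Nontrivial E]
    (hpoly : ∀ y : E, ∃ c : ℕ → F, y ^ M = ∑ i ∈ Finset.range M, c i • y ^ i) (j : ℕ) :
    S ^ j ≤ S ^ N := by
  by_contra hcon
  have strict : ∀ k ≤ N, ¬ S ^ (k + 1) ≤ S ^ k := by
    intro k hk h
    exact hcon ((SI_stab S h1 h j).trans (SI_pow_mono S h1 hk))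
  -- some one-dimensional increment
  have : ∃ k < N, Module.finrank F ↥(S ^ (k + 1)) ≤ Module.finrank F ↥(S ^ k) + 1 := by
    by_contra hc
    push Not at hc
    have : ∀ k ≤ N, 1 + 2 * k ≤ Module.finrank F ↥(S ^ k) := by
      intro k hk
      induction k with
      | zero =>
        have e : S ^ 0 = Submodule.span F {1} := by rw [pow_zero, Submodule.one_eq_span]
        rw [e, finrank_span_singleton one_ne_zero]
      | succ k ih => have := hc k (by omega); have := ih (by omega); omega
    have h2 := this N le_rfl
    have h3 := Submodule.finrank_le (S ^ N)
    omega
  obtain ⟨k, hk, hfr⟩ := this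
  obtain ⟨y, hy, h⟩ := SI_one_dim S k (by
    intro w hw hwn
    have hle : S ^ k ⊔ Submodule.span F {w} ≤ S ^ (k + 1) :=
      sup_le (SI_pow_mono S h1 (by omega)) (by simpa using hw)
    refine (Submodule.eq_of_le_of_finrank_le hle ?_).ge
    have : S ^ k < S ^ k ⊔ Submodule.span F {w} := by
      refine lt_of_le_of_ne le_sup_left ?_
      intro hc
      apply hwn
      rw [hc]
      exact Submodule.mem_sup_right (Submodule.mem_span_singleton_self _)
    have := Submodule.finrank_lt_finrank_of_lt this
    omega) (strict (k + 1) (by omega))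
  have hyM : y ^ M ∈ S ^ (M - 1) := by
    obtain ⟨c, hc⟩ := hpoly y
    rw [hc]
    refine sum_mem fun i hi => Submodule.smul_mem _ _ ?_
    exact SI_pow_mono S h1 (by have := Finset.mem_range.mp hi; omega) (Submodule.pow_mem_pow S hy i)
  let j := max k (M - 1)
  have hj : k ≤ j := le_max_left _ _
  have hj2 : M - 1 ≤ j := le_max_right _ _
  have hjN : j ≤ N := max_le (by omega) (by omega)
  apply strict j hjN
  refine (SI_step S k y hy h j hj).trans (sup_le le_rfl ?_)
  rw [Submodule.span_singleton_le_iff_mem]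
  have e : j + 1 = M + (j + 1 - M) := by omega
  have e2 : j = (M - 1) + (j + 1 - M) := by omega
  have h3 : y ^ M * y ^ (j + 1 - M) ∈ S ^ (M - 1) * S ^ (j + 1 - M) :=
    Submodule.mul_mem_mul hyM (Submodule.pow_mem_pow S hy _)
  rwa [← pow_add, ← pow_add, ← e, ← e2] at h3
end Part1

section Part5

theorem SI_trace_prod {F C V V1 V2 : Type*} [Field F] [Ring C] [Algebra F C]
    [AddCommGroup V] [Module F V] [Module C V] [IsScalarTower F C V]
    [AddCommGroup V1] [Module F V1] [Module C V1] [IsScalarTower F C V1] [FiniteDimensional F V1]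
    [AddCommGroup V2] [Module F V2] [Module C V2] [IsScalarTower F C V2] [FiniteDimensional F V2]
    (e : V ≃ₗ[C] V1 × V2) (c : C) :
    LinearMap.trace F V (Algebra.lsmul F F V c) =
      LinearMap.trace F V1 (Algebra.lsmul F F V1 c) +
      LinearMap.trace F V2 (Algebra.lsmul F F V2 c) := by
  rw [← LinearMap.trace_prodMap', ← LinearMap.trace_conj' _ (e.restrictScalars F)]
  congr 1
  ext v <;> simp [LinearEquiv.conj_apply]

theorem SI_trace_equiv {F C V V1 : Type*} [Field F] [Ring C] [Algebra F C]
    [AddCommGroup V] [Module F V] [Module C V] [IsScalarTower F C V]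
    [AddCommGroup V1] [Module F V1] [Module C V1] [IsScalarTower F C V1]
    (e : V ≃ₗ[C] V1) (c : C) :
    LinearMap.trace F V (Algebra.lsmul F F V c) =
      LinearMap.trace F V1 (Algebra.lsmul F F V1 c) := by
  rw [← LinearMap.trace_conj' _ (e.restrictScalars F)]
  congr 1
  ext v; simp [LinearEquiv.conj_apply]

universe u v
theorem SI_iso {F C : Type*} [Field F] [CharZero F] [Ring C] [Algebra F C] [IsSemisimpleRing C]
    (d : ℕ) : ∀ (V : Type u) (W : Type v)
    [AddCommGroup V] [Module F V] [Module C V] [IsScalarTower F C V] [FiniteDimensional F V]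
    [AddCommGroup W] [Module F W] [Module C W] [IsScalarTower F C W] [FiniteDimensional F W]
    (_ : Module.finrank F V = d)
    (_ : ∀ c : C, LinearMap.trace F V (Algebra.lsmul F F V c) =
      LinearMap.trace F W (Algebra.lsmul F F W c)), Nonempty (V ≃ₗ[C] W) := by
  induction d using Nat.strong_induction_on with
  | _ d ih =>
  intro V W _ _ _ _ _ _ _ _ _ _ hd htr
  have hdim : Module.finrank F V = Module.finrank F W := by
    have := htr 1
    rw [map_one (Algebra.lsmul F F V), map_one (Algebra.lsmul F F W), LinearMap.trace_one,
      LinearMap.trace_one] at this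
    exact_mod_cast this
  rcases subsingleton_or_nontrivial V with hV | hV
  · have : Subsingleton W := by
      rw [Module.finrank_zero_of_subsingleton] at hdim
      exact Module.finrank_zero_iff.mp hdim.symm
    exact ⟨{ toFun := fun _ => 0, invFun := fun _ => 0, map_add' := by simp, map_smul' := by simp, left_inv := fun _ => Subsingleton.elim _ _, right_inv := fun _ => Subsingleton.elim _ _ }⟩
  · obtain ⟨S, hS⟩ := IsSemisimpleModule.exists_simple_submodule C V
    obtain ⟨I, ⟨φ⟩⟩ := IsSemisimpleRing.exists_linearEquiv_ideal_of_isSimpleModule C S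
    obtain ⟨e, he, rfl⟩ := IsSemisimpleRing.ideal_eq_span_idempotent I
    have heI : e ∈ Ideal.span {e} := Ideal.mem_span_singleton_self e
    have he0 : e ≠ 0 := by
      rintro rfl
      have := hS.nontrivial
      have := φ.symm.toEquiv.nontrivial
      obtain ⟨x, hx⟩ := exists_ne (0 : Ideal.span {(0 : C)})
      apply hx
      ext
      simpa using x.2
    have h1 : (Algebra.lsmul F F V e) ≠ 0 := by
      intro hc
      have h2 : e • (φ.symm ⟨e, heI⟩) = φ.symm ⟨e, heI⟩ := by
        rw [← map_smul]; congr 1; ext; exact he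
      have h3 : e • ((φ.symm ⟨e, heI⟩ : S) : V) = 0 := by
        have := LinearMap.congr_fun hc ((φ.symm ⟨e, heI⟩ : S) : V)
        simpa using this
      rw [← Submodule.coe_smul, h2] at h3
      have h4 := (Submodule.coe_eq_zero).mp h3
      rw [LinearEquiv.map_eq_zero_iff] at h4
      exact he0 (congrArg Subtype.val h4)
    have h2 : (Algebra.lsmul F F W e) ≠ 0 := by
      intro hc
      apply h1
      have hi : IsIdempotentElem (Algebra.lsmul F F V e) := he.map _
      apply LinearMap.IsIdempotentElem.eq_zero_of_trace_eq_zero hi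
      rw [htr, hc, map_zero]
    obtain ⟨w, hw⟩ : ∃ w : W, e • w ≠ 0 := by
      by_contra hc
      push Not at hc
      apply h2
      ext w
      simpa using hc w
    let g : S →ₗ[C] W := (LinearMap.toSpanSingleton C W w) ∘ₗ (Submodule.subtype _) ∘ₗ φ.toLinearMap
    have hg : g ≠ 0 := by
      intro hc
      apply hw
      have := LinearMap.congr_fun hc (φ.symm ⟨e, heI⟩)
      simpa [g] using this
    have hginj : Function.Injective g := LinearMap.injective_of_ne_zero hg
    obtain ⟨V', hV'⟩ := exists_isCompl S
    obtain ⟨W', hW'⟩ := exists_isCompl (LinearMap.range g)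
    have f1 : FiniteDimensional F S :=
      FiniteDimensional.of_injective (S.subtype.restrictScalars F) Subtype.val_injective
    have f2 : FiniteDimensional F V' :=
      FiniteDimensional.of_injective (V'.subtype.restrictScalars F) Subtype.val_injective
    have f3 : FiniteDimensional F W' :=
      FiniteDimensional.of_injective (W'.subtype.restrictScalars F) Subtype.val_injective
    let eV : V ≃ₗ[C] S × V' := (Submodule.prodEquivOfIsCompl _ _ hV').symm
    let eW : W ≃ₗ[C] S × W' := (Submodule.prodEquivOfIsCompl _ _ hW').symm.trans
      (LinearEquiv.prodCongr (LinearEquiv.ofInjective g hginj).symm (LinearEquiv.refl C W'))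
    have hlt : Module.finrank F V' < d := by
      have h5 := (eV.restrictScalars F).finrank_eq
      rw [Module.finrank_prod, hd] at h5
      have := hS.nontrivial
      have : 0 < Module.finrank F S := Module.finrank_pos
      omega
    obtain ⟨ψ⟩ := ih _ hlt V' W' rfl (fun c => by
      have h6 := htr c
      rw [SI_trace_prod eV, SI_trace_prod eW] at h6
      exact add_left_cancel h6)
    exact ⟨eV.trans ((LinearEquiv.prodCongr (LinearEquiv.refl C S) ψ).trans eW.symm)⟩

theorem SI_iso' {F C : Type*} [Field F] [CharZero F] [Ring C] [Algebra F C] [IsSemisimpleRing C]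
    {V : Type u} {W : Type v}
    [AddCommGroup V] [Module F V] [FiniteDimensional F V]
    [AddCommGroup W] [Module F W] [FiniteDimensional F W]
    (ρ : C →ₐ[F] Module.End F V) (σ : C →ₐ[F] Module.End F W)
    (h : ∀ c, LinearMap.trace F V (ρ c) = LinearMap.trace F W (σ c)) :
    ∃ e : V ≃ₗ[F] W, ∀ c v, e (ρ c v) = σ c (e v) := by
  let : Module C V := Module.compHom V ρ.toRingHom
  let : Module C W := Module.compHom W σ.toRingHom
  have hV : ∀ (c : C) (v : V), c • v = ρ c v := fun _ _ => rfl
  have hW : ∀ (c : C) (v : W), c • v = σ c v := fun _ _ => rfl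
  have : IsScalarTower F C V := ⟨fun a c v => by simp [hV]⟩
  have : IsScalarTower F C W := ⟨fun a c v => by simp [hW]⟩
  obtain ⟨e⟩ := SI_iso (F := F) (C := C) _ V W rfl (by
    intro c
    exact h c)
  exact ⟨e.restrictScalars F, fun c v => e.map_smul c v⟩
end Part5

section Part2
open Matrix

variable {F : Type*} [Field F] {n r : ℕ}

theorem SI_eval_eq_aeval {σ : Type*} (x : σ → F) (f : MvPolynomial σ F) :
    MvPolynomial.eval x f = MvPolynomial.aeval x f := by
  rw [MvPolynomial.aeval_def, MvPolynomial.eval, MvPolynomial.coe_eval₂Hom,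
    Algebra.algebraMap_self]

theorem SI_evalTuple_eq_aeval (A : Fin r → Matrix (Fin n) (Fin n) F)
    (f : MvPolynomial (Fin r × Fin n × Fin n) F) :
    evalTuple A f = MvPolynomial.aeval (fun v => A v.1 v.2.1 v.2.2) f := by
  unfold evalTuple
  exact SI_eval_eq_aeval _ f

theorem SI_eval_conj (P : GL (Fin n) F) (A : Fin r → Matrix (Fin n) (Fin n) F)
    (f : MvPolynomial (Fin r × Fin n × Fin n) F) (hf : IsSimConjInvariant F n r f) :
    evalTuple (fun i => (P : Matrix (Fin n) (Fin n) F) * A i *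
      ((P⁻¹ : GL (Fin n) F) : Matrix (Fin n) (Fin n) F)) f = evalTuple A f := by
  conv_rhs => rw [← hf P]
  rw [SI_evalTuple_eq_aeval, SI_evalTuple_eq_aeval, MvPolynomial.comp_aeval_apply]
  congr 2
  ext v
  simp only [Matrix.mul_apply, map_sum, map_mul, genMat, Matrix.map_apply, Matrix.of_apply,
    MvPolynomial.aeval_X, MvPolynomial.aeval_C, Algebra.algebraMap_self, RingHom.id_apply]

/-- trace polynomial attached to a noncommutative polynomial -/
noncomputable def SI_trPoly (F : Type*) [Field F] (n r : ℕ) (q : FreeAlgebra F (Fin r)) :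
    MvPolynomial (Fin r × Fin n × Fin n) F :=
  Matrix.trace (FreeAlgebra.lift F (genMat F n r) q)

theorem SI_eval_trPoly (A : Fin r → Matrix (Fin n) (Fin n) F) (q : FreeAlgebra F (Fin r)) :
    evalTuple A (SI_trPoly F n r q) = Matrix.trace (FreeAlgebra.lift F A q) := by
  rw [SI_evalTuple_eq_aeval, SI_trPoly, AddMonoidHom.map_trace]
  congr 1
  let φ : MvPolynomial (Fin r × Fin n × Fin n) F →ₐ[F] F :=
    MvPolynomial.aeval (fun v => A v.1 v.2.1 v.2.2)
  have : (φ.mapMatrix (m := Fin n)).comp (FreeAlgebra.lift F (genMat F n r)) =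
      FreeAlgebra.lift F A := by
    apply FreeAlgebra.hom_ext
    ext i a b
    simp [φ, genMat]
  exact DFunLike.congr_fun this q

theorem SI_trPoly_inv (q : FreeAlgebra F (Fin r)) :
    IsSimConjInvariant F n r (SI_trPoly F n r q) := by
  intro P
  set P' : Matrix (Fin n) (Fin n) (MvPolynomial (Fin r × Fin n × Fin n) F) :=
    (P : Matrix (Fin n) (Fin n) F).map MvPolynomial.C with hP'
  set Q' : Matrix (Fin n) (Fin n) (MvPolynomial (Fin r × Fin n × Fin n) F) :=
    ((P⁻¹ : GL (Fin n) F) : Matrix (Fin n) (Fin n) F).map MvPolynomial.C with hQ'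
  have hQP : Q' * P' = 1 := by
    rw [hP', hQ', ← Matrix.map_mul, ← Units.val_mul, inv_mul_cancel, Units.val_one]
    exact Matrix.map_one _ (map_zero _) (map_one _)
  have hPQ : P' * Q' = 1 := by
    rw [hP', hQ', ← Matrix.map_mul, ← Units.val_mul, mul_inv_cancel, Units.val_one]
    exact Matrix.map_one _ (map_zero _) (map_one _)
  let φ : MvPolynomial (Fin r × Fin n × Fin n) F →ₐ[F] MvPolynomial (Fin r × Fin n × Fin n) F :=
    MvPolynomial.aeval (fun v : Fin r × Fin n × Fin n =>
        (P' * genMat F n r v.1 * Q') v.2.1 v.2.2)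
  change φ (SI_trPoly F n r q) = _
  rw [SI_trPoly, AddMonoidHom.map_trace]
  have key : ∀ q : FreeAlgebra F (Fin r), φ.mapMatrix (FreeAlgebra.lift F (genMat F n r) q) =
      P' * FreeAlgebra.lift F (genMat F n r) q * Q' := by
    intro q
    induction q using FreeAlgebra.induction with
    | grade0 c =>
      rw [AlgHom.commutes, AlgHom.commutes, ← Algebra.commutes, mul_assoc, hPQ, mul_one]
    | grade1 i =>
      ext1 a b
      simp [φ, genMat]
    | mul a b ha hb =>
      rw [map_mul, map_mul, ha, hb]
      calc _ = P' * (FreeAlgebra.lift F (genMat F n r)) a * (Q' * P') *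
              (FreeAlgebra.lift F (genMat F n r)) b * Q' := by simp only [mul_assoc]
        _ = _ := by rw [hQP]; simp only [mul_assoc, one_mul]
    | add a b ha hb => rw [map_add, map_add, ha, hb, mul_add, add_mul]
  have h := key q
  rw [AlgHom.mapMatrix_apply] at h
  rw [h, Matrix.trace_mul_comm, ← mul_assoc, hQP, one_mul]

theorem SI_fAtPoint_eq (ℓ : ℕ) (α : Fin ℓ → F) :
    fAtPoint F n r ℓ α = SI_trPoly F n r
      (List.ofFn fun j : Fin ℓ => ∑ i : Fin r, (α j ^ (i : ℕ)) • FreeAlgebra.ι F i).prod := by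
  rw [fAtPoint, SI_trPoly, map_list_prod, List.map_ofFn]
  congr 3
  ext1 j
  simp

theorem SI_eval_fpoly (ℓ : ℕ) (α : Fin ℓ → F) (A : Fin r → Matrix (Fin n) (Fin n) F) :
    MvPolynomial.eval α (fpoly n r ℓ A) = evalTuple A (fAtPoint F n r ℓ α) := by
  rw [SI_fAtPoint_eq, SI_eval_trPoly, fpoly, AddMonoidHom.map_trace, map_list_prod, List.map_ofFn]
  congr 1
  have := map_list_prod ((MvPolynomial.eval α).mapMatrix (m := Fin n)) (List.ofFn fun j : Fin ℓ =>
      ∑ i : Fin r, (A i).map fun a => MvPolynomial.C a * MvPolynomial.X j ^ (i : ℕ))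
  rw [RingHom.mapMatrix_apply] at this
  rw [this, List.map_ofFn]
  congr 2
  ext1 j
  simp only [Function.comp_apply, map_sum, map_smul, FreeAlgebra.lift_ι_apply]
  refine Finset.sum_congr rfl fun i _ => ?_
  ext a b
  simp [mul_comm]

theorem SI_fpoly_expand (ℓ : ℕ) (A : Fin r → Matrix (Fin n) (Fin n) F) :
    fpoly n r ℓ A = ∑ w : Fin ℓ → Fin r, MvPolynomial.monomial
      (Finsupp.equivFunOnFinite.symm fun j => (w j : ℕ))
      (Matrix.trace (List.ofFn fun j => A (w j)).prod) := by
  have h1 : ∀ j : Fin ℓ, (∑ i : Fin r, (A i).map fun a =>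
      (MvPolynomial.C a * MvPolynomial.X j ^ (i : ℕ) : MvPolynomial (Fin ℓ) F)) =
      ∑ i : Fin r, (MvPolynomial.X j ^ (i : ℕ) : MvPolynomial (Fin ℓ) F) •
        (MvPolynomial.C.mapMatrix (A i)) := by
    intro j
    refine Finset.sum_congr rfl fun i _ => ?_
    ext1 a b
    simp [mul_comm]
  rw [fpoly]
  simp only [h1]
  rw [← MultilinearMap.mkPiAlgebraFin_apply (R := MvPolynomial (Fin ℓ) F)
    (A := Matrix (Fin n) (Fin n) (MvPolynomial (Fin ℓ) F)), MultilinearMap.map_sum,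
    Matrix.trace_sum]
  refine Finset.sum_congr rfl fun w _ => ?_
  rw [MultilinearMap.map_smul_univ, MultilinearMap.mkPiAlgebraFin_apply, Matrix.trace_smul]
  have h2 := map_list_prod ((MvPolynomial.C (R := F) (σ := Fin ℓ)).mapMatrix (m := Fin n))
    (List.ofFn fun j => A (w j))
  rw [List.map_ofFn] at h2
  have h3 : (List.ofFn fun i => (MvPolynomial.C (R := F) (σ := Fin ℓ)).mapMatrix (A (w i))).prod =
    (MvPolynomial.C (R := F) (σ := Fin ℓ)).mapMatrix (List.ofFn fun j => A (w j)).prod := h2.symm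
  rw [h3, RingHom.mapMatrix_apply, ← AddMonoidHom.map_trace, MvPolynomial.monomial_eq, smul_eq_mul,
    mul_comm, Finsupp.prod_fintype _ _ (by simp)]
  simp

theorem SI_coeff_fpoly (ℓ : ℕ) (A : Fin r → Matrix (Fin n) (Fin n) F) (w : Fin ℓ → Fin r) :
    MvPolynomial.coeff (Finsupp.equivFunOnFinite.symm fun j => (w j : ℕ)) (fpoly n r ℓ A) =
      Matrix.trace (List.ofFn fun j => A (w j)).prod := by
  classical
  rw [SI_fpoly_expand, MvPolynomial.coeff_sum, Finset.sum_eq_single w]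
  · simp
  · intro v _ hv
    rw [MvPolynomial.coeff_monomial, if_neg]
    intro hc
    apply hv
    have := Finsupp.equivFunOnFinite.symm.injective hc
    ext j
    exact congrFun this j
  · simp

end Part2

section Part3
open Matrix

variable {F : Type*} [Field F] {n r : ℕ}

theorem SI_calc1 {E : Type*} [Ring E] [Algebra F E] (p : E) (hp : p * p = p) (t : F)
    (ht : t ≠ 0) : (t • p + (1 - p)) * (t⁻¹ • p + (1 - p)) = 1 := by
  have hp1 : p * (1 - p) = 0 := by rw [mul_sub, mul_one, hp, sub_self]
  have hp2 : (1 - p) * p = 0 := by rw [sub_mul, one_mul, hp, sub_self]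
  have hp3 : (1 - p) * (1 - p) = 1 - p := by rw [mul_sub, hp2, mul_one, sub_zero]
  have s1 : (t • p) * (t⁻¹ • p) = p := by
    rw [smul_mul_smul_comm, mul_inv_cancel₀ ht, one_smul, hp]
  rw [add_mul, mul_add, mul_add, s1, smul_mul_assoc, hp1, mul_smul_comm, hp2, hp3]
  simp

theorem SI_calc2 {E : Type*} [Ring E] [Algebra F E] (p A : E) (hA : (1 - p) * A * p = 0) (t : F)
    (ht : t ≠ 0) : p * A * p + (1 - p) * A * (1 - p) + t • (p * A * (1 - p)) =
      (t • p + (1 - p)) * A * (t⁻¹ • p + (1 - p)) := by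
  generalize 1 - p = q at *
  have s1 : (t • p) * A * (t⁻¹ • p) = p * A * p := by
    rw [smul_mul_assoc t p A, smul_mul_smul_comm, mul_inv_cancel₀ ht, one_smul]
  rw [add_mul, mul_add, add_mul, add_mul, s1, smul_mul_assoc t p A, smul_mul_assoc,
    mul_smul_comm, hA, smul_zero, add_zero]
  abel

theorem SI_degenerate [Infinite F] (A : Fin r → Matrix (Fin n) (Fin n) F)
    (p : Matrix (Fin n) (Fin n) F) (hp : p * p = p) (hA : ∀ i, (1 - p) * A i * p = 0)
    (f : MvPolynomial (Fin r × Fin n × Fin n) F) (hf : IsSimConjInvariant F n r f) :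
    evalTuple (fun i => p * A i * p + (1 - p) * A i * (1 - p)) f = evalTuple A f := by
  let D : Fin r → Matrix (Fin n) (Fin n) F := fun i => p * A i * p + (1 - p) * A i * (1 - p)
  let N : Fin r → Matrix (Fin n) (Fin n) F := fun i => p * A i * (1 - p)
  let g : Polynomial F := MvPolynomial.aeval (fun v : Fin r × Fin n × Fin n =>
    Polynomial.C (D v.1 v.2.1 v.2.2) + Polynomial.X * Polynomial.C (N v.1 v.2.1 v.2.2)) f
  have hg : ∀ t : F, g.eval t = evalTuple (fun i => D i + t • N i) f := by
    intro t
    rw [SI_evalTuple_eq_aeval, ← Polynomial.coe_aeval_eq_eval]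
    simp only [g]
    rw [MvPolynomial.comp_aeval_apply]
    congr 2
    ext v
    simp only [map_add, map_mul, Polynomial.aeval_C, Polynomial.aeval_X, Matrix.add_apply,
      Matrix.smul_apply, smul_eq_mul, Algebra.algebraMap_self, RingHom.id_apply]
  have hp1 : p * (1 - p) = 0 := by rw [mul_sub, mul_one, hp, sub_self]
  have hp2 : (1 - p) * p = 0 := by rw [sub_mul, one_mul, hp, sub_self]
  have hp3 : (1 - p) * (1 - p) = 1 - p := by rw [mul_sub, hp2, mul_one, sub_zero]
  have hgt : ∀ t : F, t ≠ 0 → g.eval t = evalTuple A f := by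
    intro t ht
    have e1 : (t • p + (1 - p)) * (t⁻¹ • p + (1 - p)) = 1 := SI_calc1 p hp t ht
    have e2 : (t⁻¹ • p + (1 - p)) * (t • p + (1 - p)) = 1 := by
      have := SI_calc1 p hp t⁻¹ (inv_ne_zero ht)
      rwa [inv_inv] at this
    let P : GL (Fin n) F := ⟨t • p + (1 - p), t⁻¹ • p + (1 - p), e1, e2⟩
    rw [hg, ← SI_eval_conj P A f hf]
    congr 1
    ext1 i
    change D i + t • N i = (t • p + (1 - p)) * A i * (t⁻¹ • p + (1 - p))
    exact SI_calc2 p (A i) (hA i) t ht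
  have hconst : g = Polynomial.C (evalTuple A f) := by
    apply Polynomial.eq_of_infinite_eval_eq
    apply (Set.Finite.infinite_compl (Set.finite_singleton (0 : F))).mono
    intro t ht
    simpa using hgt t ht
  have h0 := hg 0
  rw [hconst, Polynomial.eval_C] at h0
  simpa [D] using h0.symm

theorem SI_proj (S K : Set (Matrix (Fin n) (Fin n) F))
    (h1 : ∀ c ∈ S, ∀ k ∈ K, c * k ∈ K) (h2 : ∀ k ∈ K, ∀ k' ∈ K, k * k' = 0) :
    ∃ p : Matrix (Fin n) (Fin n) F, p * p = p ∧ (∀ c ∈ S, (1 - p) * c * p = 0) ∧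
      ∀ k ∈ K, p * k * p + (1 - p) * k * (1 - p) = 0 := by
  let U : Submodule F (Fin n → F) := Submodule.span F {u | ∃ k ∈ K, ∃ v, u = k *ᵥ v}
  obtain ⟨Q, hQ⟩ := Submodule.exists_isCompl U
  let p : Matrix (Fin n) (Fin n) F := LinearMap.toMatrix' (U.projection Q hQ)
  have hpv : ∀ v, p *ᵥ v = U.projection Q hQ v := fun v => by
    simp [p, LinearMap.toMatrix'_mulVec]
  have hmem : ∀ v, p *ᵥ v ∈ U := fun v => by rw [hpv]; exact Submodule.projection_apply_mem hQ v
  have hfix : ∀ u ∈ U, p *ᵥ u = u := fun u hu => by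
    rw [hpv]; exact Submodule.projection_apply_of_mem_left hQ hu
  have hcU : ∀ c ∈ S, ∀ u ∈ U, c *ᵥ u ∈ U := by
    intro c hc u hu
    induction hu using Submodule.span_induction with
    | mem u hu =>
      obtain ⟨k, hk, v, rfl⟩ := hu
      rw [Matrix.mulVec_mulVec]
      exact Submodule.subset_span ⟨_, h1 c hc k hk, v, rfl⟩
    | zero => simp
    | add x y _ _ hx hy => rw [Matrix.mulVec_add]; exact add_mem hx hy
    | smul a x _ hx => rw [Matrix.mulVec_smul]; exact Submodule.smul_mem _ _ hx
  have hkU : ∀ k ∈ K, ∀ u ∈ U, k *ᵥ u = 0 := by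
    intro c hc u hu
    induction hu using Submodule.span_induction with
    | mem u hu =>
      obtain ⟨k, hk, v, rfl⟩ := hu
      rw [Matrix.mulVec_mulVec, h2 c hc k hk, Matrix.zero_mulVec]
    | zero => simp
    | add x y _ _ hx hy => rw [Matrix.mulVec_add, hx, hy, add_zero]
    | smul a x _ hx => rw [Matrix.mulVec_smul, hx, smul_zero]
  refine ⟨p, ?_, ?_, ?_⟩
  · refine Matrix.ext_iff_mulVec.mpr fun v => ?_
    rw [← Matrix.mulVec_mulVec, hfix _ (hmem v)]
  · intro c hc
    refine Matrix.ext_iff_mulVec.mpr fun v => ?_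
    rw [← Matrix.mulVec_mulVec, ← Matrix.mulVec_mulVec, Matrix.sub_mulVec, Matrix.one_mulVec,
      hfix _ (hcU c hc _ (hmem v)), sub_self, Matrix.zero_mulVec]
  · intro k hk
    have a1 : k * p = 0 := by
      refine Matrix.ext_iff_mulVec.mpr fun v => ?_
      rw [← Matrix.mulVec_mulVec, hkU k hk _ (hmem v), Matrix.zero_mulVec]
    have a2 : (1 - p) * k = 0 := by
      refine Matrix.ext_iff_mulVec.mpr fun v => ?_
      rw [← Matrix.mulVec_mulVec, Matrix.sub_mulVec, Matrix.one_mulVec,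
        hfix _ (Submodule.subset_span ⟨k, hk, v, rfl⟩), sub_self, Matrix.zero_mulVec]
    rw [mul_assoc p k p, a1, a2]
    simp

/-- block-diagonal part -/
noncomputable def SI_blk (p : Matrix (Fin n) (Fin n) F) :
    Matrix (Fin n) (Fin n) F →ₗ[F] Matrix (Fin n) (Fin n) F where
  toFun X := p * X * p + (1 - p) * X * (1 - p)
  map_add' X Y := by simp only [mul_add, add_mul]; abel
  map_smul' c X := by simp

theorem SI_blk_apply (p X : Matrix (Fin n) (Fin n) F) :
    SI_blk p X = p * X * p + (1 - p) * X * (1 - p) := rfl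

theorem SI_blk_mul (p : Matrix (Fin n) (Fin n) F) (hp : p * p = p) (X Y : Matrix (Fin n) (Fin n) F)
    (hX : (1 - p) * X * p = 0) (hY : (1 - p) * Y * p = 0) :
    SI_blk p X * SI_blk p Y = SI_blk p (X * Y) := by
  have hp1 : p * (1 - p) = 0 := by rw [mul_sub, mul_one, hp, sub_self]
  have hp2 : (1 - p) * p = 0 := by rw [sub_mul, one_mul, hp, sub_self]
  have hp3 : (1 - p) * (1 - p) = 1 - p := by rw [mul_sub, hp2, mul_one, sub_zero]
  have e1 : p * (X * Y) * p = p * X * p * Y * p := by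
    calc p * (X * Y) * p = p * X * (p + (1 - p)) * Y * p := by
          rw [add_sub_cancel, mul_one, mul_assoc p X Y]
      _ = p * X * p * Y * p + p * X * ((1 - p) * Y * p) := by
          rw [mul_add (p * X), add_mul, add_mul]; simp only [mul_assoc]
      _ = _ := by rw [hY, mul_zero, add_zero]
  have e2 : (1 - p) * (X * Y) * (1 - p) = (1 - p) * X * (1 - p) * Y * (1 - p) := by
    calc (1 - p) * (X * Y) * (1 - p) = (1 - p) * X * (p + (1 - p)) * Y * (1 - p) := by
          rw [add_sub_cancel, mul_one, mul_assoc (1 - p) X Y]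
      _ = ((1 - p) * X * p) * Y * (1 - p) + (1 - p) * X * (1 - p) * Y * (1 - p) := by
          rw [mul_add ((1 - p) * X), add_mul, add_mul]
      _ = _ := by rw [hX, zero_mul, zero_mul, zero_add]
  rw [SI_blk_apply, SI_blk_apply, SI_blk_apply, e1, e2, add_mul, mul_add, mul_add]
  have f1 : p * X * p * (p * Y * p) = p * X * (p * p) * Y * p := by simp only [mul_assoc]
  have f2 : p * X * p * ((1 - p) * Y * (1 - p)) = p * X * (p * (1 - p)) * Y * (1 - p) := by
    simp only [mul_assoc]
  have f3 : (1 - p) * X * (1 - p) * (p * Y * p) = (1 - p) * X * ((1 - p) * p) * Y * p := by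
    simp only [mul_assoc]
  have f4 : (1 - p) * X * (1 - p) * ((1 - p) * Y * (1 - p)) =
      (1 - p) * X * ((1 - p) * (1 - p)) * Y * (1 - p) := by
    simp only [mul_assoc]
  rw [f1, f2, f3, f4, hp, hp1, hp2, hp3]
  simp

end Part3

section Part4
open Matrix

variable {F : Type*} [Field F] {n r : ℕ}

/-- the algebra generated by the pairs -/
abbrev SI_alg (A B : Fin r → Matrix (Fin n) (Fin n) F) :
    Subalgebra F (Matrix (Fin n) (Fin n) F × Matrix (Fin n) (Fin n) F) :=
  Algebra.adjoin F (Set.range fun i => (A i, B i))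

theorem SI_gen_mem (A B : Fin r → Matrix (Fin n) (Fin n) F) (i : Fin r) :
    (A i, B i) ∈ SI_alg A B := Algebra.subset_adjoin ⟨i, rfl⟩

theorem SI_mem_alg (A B : Fin r → Matrix (Fin n) (Fin n) F)
    (x : Matrix (Fin n) (Fin n) F × Matrix (Fin n) (Fin n) F) :
    x ∈ SI_alg A B ↔ ∃ q, x = (FreeAlgebra.lift F A q, FreeAlgebra.lift F B q) := by
  rw [SI_alg, Algebra.adjoin_range_eq_range_freeAlgebra_lift, AlgHom.mem_range]
  have : ∀ q, FreeAlgebra.lift F (fun i => (A i, B i)) q =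
      (FreeAlgebra.lift F A q, FreeAlgebra.lift F B q) := by
    intro q
    have : FreeAlgebra.lift F (fun i => (A i, B i)) =
        (FreeAlgebra.lift F A).prod (FreeAlgebra.lift F B) := by
      apply FreeAlgebra.hom_ext
      ext1 i
      simp
    rw [this]; rfl
  constructor
  · rintro ⟨q, rfl⟩
    exact ⟨q, this q⟩
  · rintro ⟨q, rfl⟩
    exact ⟨q, this q⟩

theorem SI_drop (A B : Fin r → Matrix (Fin n) (Fin n) F)
    (K : Ideal (SI_alg A B)) (hK : K ≠ ⊥) (hKK : ∀ x ∈ K, ∀ y ∈ K, x * y = 0) :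
    ∃ p q : Matrix (Fin n) (Fin n) F, p * p = p ∧ q * q = q ∧
      (∀ i, (1 - p) * A i * p = 0) ∧ (∀ i, (1 - q) * B i * q = 0) ∧
      Module.finrank F (SI_alg (fun i => SI_blk p (A i)) (fun i => SI_blk q (B i))) <
        Module.finrank F (SI_alg A B) := by
  obtain ⟨p, hp, hpS, hpK⟩ := SI_proj {c | ∃ x : SI_alg A B, x.1.1 = c}
    {c | ∃ x ∈ K, (x : Matrix (Fin n) (Fin n) F × Matrix (Fin n) (Fin n) F).1 = c}
    (by rintro _ ⟨x, rfl⟩ _ ⟨y, hy, rfl⟩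
        exact ⟨x * y, K.mul_mem_left x hy, rfl⟩)
    (by rintro _ ⟨x, hx, rfl⟩ _ ⟨y, hy, rfl⟩
        exact congrArg (fun z : SI_alg A B => z.1.1) (hKK x hx y hy))
  obtain ⟨q, hq, hqS, hqK⟩ := SI_proj {c | ∃ x : SI_alg A B, x.1.2 = c}
    {c | ∃ x ∈ K, (x : Matrix (Fin n) (Fin n) F × Matrix (Fin n) (Fin n) F).2 = c}
    (by rintro _ ⟨x, rfl⟩ _ ⟨y, hy, rfl⟩
        exact ⟨x * y, K.mul_mem_left x hy, rfl⟩)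
    (by rintro _ ⟨x, hx, rfl⟩ _ ⟨y, hy, rfl⟩
        exact congrArg (fun z : SI_alg A B => z.1.2) (hKK x hx y hy))
  refine ⟨p, q, hp, hq, fun i => hpS _ ⟨⟨_, SI_gen_mem A B i⟩, rfl⟩,
    fun i => hqS _ ⟨⟨_, SI_gen_mem A B i⟩, rfl⟩, ?_⟩
  let φ : SI_alg A B →ₗ[F] Matrix (Fin n) (Fin n) F × Matrix (Fin n) (Fin n) F :=
    ((SI_blk p).prodMap (SI_blk q)).comp (SI_alg A B).val.toLinearMap
  have hφ : ∀ x, φ x = (SI_blk p x.1.1, SI_blk q x.1.2) := fun x => rfl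
  have hmul : ∀ x y, φ x * φ y = φ (x * y) := by
    intro x y
    rw [hφ, hφ, hφ, Prod.mk_mul_mk, SI_blk_mul p hp _ _ (hpS _ ⟨x, rfl⟩) (hpS _ ⟨y, rfl⟩),
      SI_blk_mul q hq _ _ (hqS _ ⟨x, rfl⟩) (hqS _ ⟨y, rfl⟩)]
    rfl
  have hblk1 : ∀ p : Matrix (Fin n) (Fin n) F, p * p = p → SI_blk p 1 = 1 := by
    intro p hp
    have hp2 : (1 - p) * p = 0 := by rw [sub_mul, one_mul, hp, sub_self]
    rw [SI_blk_apply, mul_one, mul_one, hp, mul_sub, hp2, mul_one, sub_zero, add_sub_cancel]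
  have hone : φ 1 = 1 := by
    rw [hφ]
    change (SI_blk p 1, SI_blk q 1) = 1
    rw [hblk1 p hp, hblk1 q hq]; rfl
  have hle : Subalgebra.toSubmodule (SI_alg (fun i => SI_blk p (A i)) (fun i => SI_blk q (B i))) ≤
      LinearMap.range φ := by
    intro x hx
    rw [Subalgebra.mem_toSubmodule] at hx
    induction hx using Algebra.adjoin_induction with
    | mem x hx =>
      obtain ⟨i, rfl⟩ := hx
      exact ⟨⟨_, SI_gen_mem A B i⟩, rfl⟩
    | algebraMap c =>
      exact ⟨c • 1, by rw [map_smul, hone, Algebra.algebraMap_eq_smul_one]⟩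
    | add x y _ _ hx hy => exact add_mem hx hy
    | mul x y _ _ hx hy =>
      obtain ⟨a, rfl⟩ := hx
      obtain ⟨b, rfl⟩ := hy
      exact ⟨a * b, (hmul a b).symm⟩
  have hker : LinearMap.ker φ ≠ ⊥ := by
    obtain ⟨x, hx, hx0⟩ := Submodule.exists_mem_ne_zero_of_ne_bot hK
    intro hbot
    apply hx0
    have : x ∈ LinearMap.ker φ := by
      rw [LinearMap.mem_ker, hφ, SI_blk_apply, SI_blk_apply, hpK _ ⟨x, hx, rfl⟩,
        hqK _ ⟨x, hx, rfl⟩]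
      rfl
    rw [hbot] at this
    exact (Submodule.mem_bot F).1 this
  have h1 := Submodule.finrank_mono hle
  have h2 := LinearMap.finrank_range_add_finrank_ker φ
  have h3 : 0 < Module.finrank F (LinearMap.ker φ) :=
    Nat.pos_of_ne_zero fun h => hker (Submodule.finrank_eq_zero.1 h)
  have h4 : Module.finrank F (Subalgebra.toSubmodule
      (SI_alg (fun i => SI_blk p (A i)) (fun i => SI_blk q (B i)))) =
      Module.finrank F (SI_alg (fun i => SI_blk p (A i)) (fun i => SI_blk q (B i))) := rfl
  omega

theorem SI_semisimple [CharZero F] (A B : Fin r → Matrix (Fin n) (Fin n) F)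
    [IsSemisimpleRing (SI_alg A B)]
    (htr : ∀ q, Matrix.trace (FreeAlgebra.lift F A q) = Matrix.trace (FreeAlgebra.lift F B q))
    (f : MvPolynomial (Fin r × Fin n × Fin n) F) (hf : IsSimConjInvariant F n r f) :
    evalTuple A f = evalTuple B f := by
  let ρ : SI_alg A B →ₐ[F] Module.End F (Fin n → F) :=
    (Matrix.toLinAlgEquiv' (R := F) (n := Fin n)).toAlgHom.comp ((AlgHom.fst F _ _).comp (SI_alg A B).val)
  let σ : SI_alg A B →ₐ[F] Module.End F (Fin n → F) :=
    (Matrix.toLinAlgEquiv' (R := F) (n := Fin n)).toAlgHom.comp ((AlgHom.snd F _ _).comp (SI_alg A B).val)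
  have hρ : ∀ c, ρ c = Matrix.toLin' c.1.1 := fun c => rfl
  have hσ : ∀ c, σ c = Matrix.toLin' c.1.2 := fun c => rfl
  obtain ⟨e, he⟩ := SI_iso' ρ σ (by
    intro c
    rw [hρ, hσ, Matrix.trace_toLin'_eq, Matrix.trace_toLin'_eq]
    obtain ⟨q, hq⟩ := (SI_mem_alg A B c.1).1 c.2
    rw [hq]
    exact htr q)
  let P : GL (Fin n) F := ⟨LinearMap.toMatrix' e.toLinearMap, LinearMap.toMatrix' e.symm.toLinearMap,
    by rw [← LinearMap.toMatrix'_comp]; simp, by rw [← LinearMap.toMatrix'_comp]; simp⟩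
  have hPA : ∀ i, (P : Matrix (Fin n) (Fin n) F) * A i = B i * (P : Matrix (Fin n) (Fin n) F) := by
    intro i
    refine Matrix.ext_iff_mulVec.mpr fun v => ?_
    have h := he ⟨_, SI_gen_mem A B i⟩ v
    rw [hρ, hσ, Matrix.toLin'_apply, Matrix.toLin'_apply] at h
    rw [← Matrix.mulVec_mulVec, ← Matrix.mulVec_mulVec]
    change (LinearMap.toMatrix' e.toLinearMap) *ᵥ _ = _ *ᵥ ((LinearMap.toMatrix' e.toLinearMap) *ᵥ v)
    rw [LinearMap.toMatrix'_mulVec, LinearMap.toMatrix'_mulVec]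
    exact h
  rw [← SI_eval_conj P A f hf]
  congr 1
  ext1 i
  rw [hPA, mul_assoc, ← Units.val_mul, mul_inv_cancel, Units.val_one, mul_one]

theorem SI_main [CharZero F] (d : ℕ) : ∀ A B : Fin r → Matrix (Fin n) (Fin n) F,
    Module.finrank F (SI_alg A B) = d →
    (∀ q, Matrix.trace (FreeAlgebra.lift F A q) = Matrix.trace (FreeAlgebra.lift F B q)) →
    ∀ f : MvPolynomial (Fin r × Fin n × Fin n) F, IsSimConjInvariant F n r f →
    evalTuple A f = evalTuple B f := by
  induction d using Nat.strong_induction_on with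
  | _ d ih =>
  intro A B hd htr f hf
  have hart : IsArtinianRing (SI_alg A B) := IsArtinianRing.of_finite F _
  by_cases hJ : Ring.jacobson (SI_alg A B) = ⊥
  · have : IsSemisimpleRing (SI_alg A B) := IsArtinianRing.isSemisimpleRing_iff_jacobson.2 hJ
    exact SI_semisimple A B htr f hf
  · obtain ⟨K, hK, hKK⟩ : ∃ K : Ideal (SI_alg A B), K ≠ ⊥ ∧ ∀ x ∈ K, ∀ y ∈ K, x * y = 0 := by
      have hnil : IsNilpotent (Ring.jacobson (SI_alg A B)) := IsSemiprimaryRing.isNilpotent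
      classical
      have hk0 := Nat.find_spec hnil
      have hmin := fun m => Nat.find_min (m := m) hnil
      set k := Nat.find hnil
      have hk1 : 2 ≤ k := by
        by_contra hlt
        apply hJ
        have : k ≤ 1 := by omega
        have h := Ideal.pow_le_pow_right (I := Ring.jacobson (SI_alg A B)) this
        rw [hk0, Submodule.pow_one] at h
        exact le_bot_iff.1 h
      refine ⟨Ring.jacobson (SI_alg A B) ^ (k - 1), hmin _ (by omega), ?_⟩
      intro x hx y hy
      have h1 := Ideal.mul_mem_mul hx hy
      rw [← Submodule.pow_add _ (by omega)] at h1
      have h2 := Ideal.pow_le_pow_right (I := Ring.jacobson (SI_alg A B))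
        (show k ≤ k - 1 + (k - 1) by omega) h1
      rw [hk0] at h2
      exact (Submodule.mem_bot _).1 h2
    obtain ⟨p, q, hp, hq, hA, hB, hlt⟩ := SI_drop A B K hK hKK
    have eA := SI_degenerate A p hp hA
    have eB := SI_degenerate B q hq hB
    have h := ih _ (hd ▸ hlt) (fun i => SI_blk p (A i)) (fun i => SI_blk q (B i)) rfl (by
      intro w
      have h1 := eA _ (SI_trPoly_inv w)
      have h2 := eB _ (SI_trPoly_inv w)
      rw [SI_eval_trPoly, SI_eval_trPoly] at h1 h2
      exact h1.trans ((htr w).trans h2.symm)) f hf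
    exact (eA f hf).symm.trans (h.trans (eB f hf))

end Part4

section Part6
open Matrix

variable {F : Type*} [Field F] {n r : ℕ}

theorem SI_poly_rel (hn : 1 ≤ n) (y : Matrix (Fin n) (Fin n) F × Matrix (Fin n) (Fin n) F) :
    ∃ c : ℕ → F, y ^ (2 * n) = ∑ i ∈ Finset.range (2 * n), c i • y ^ i := by
  let g : Polynomial F := y.1.charpoly * y.2.charpoly
  have hmon : g.Monic := (Matrix.charpoly_monic _).mul (Matrix.charpoly_monic _)
  have hdeg : g.natDegree = 2 * n := by
    rw [(Matrix.charpoly_monic y.1).natDegree_mul (Matrix.charpoly_monic y.2),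
      Matrix.charpoly_natDegree_eq_dim, Matrix.charpoly_natDegree_eq_dim, Fintype.card_fin]
    omega
  have h0 : Polynomial.aeval y g = 0 := by
    have e1 : (Polynomial.aeval y g).1 = Polynomial.aeval y.1 g :=
      (Polynomial.aeval_algHom_apply (AlgHom.fst F _ _) y g).symm
    have e2 : (Polynomial.aeval y g).2 = Polynomial.aeval y.2 g :=
      (Polynomial.aeval_algHom_apply (AlgHom.snd F _ _) y g).symm
    apply Prod.ext
    · rw [e1, map_mul, Matrix.aeval_self_charpoly, zero_mul]; rfl
    · rw [e2, map_mul, Matrix.aeval_self_charpoly, mul_zero]; rfl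
  refine ⟨fun i => - g.coeff i, ?_⟩
  rw [Polynomial.aeval_eq_sum_range, hdeg, Finset.sum_range_succ, ← hdeg, hmon.coeff_natDegree,
    one_smul, hdeg] at h0
  rw [eq_neg_of_add_eq_zero_right h0, ← Finset.sum_neg_distrib]
  simp only [neg_smul]

theorem SI_words (A B : Fin r → Matrix (Fin n) (Fin n) F)
    (l : List (Matrix (Fin n) (Fin n) F × Matrix (Fin n) (Fin n) F))
    (hl : ∀ a ∈ l, a ∈ insert 1 (Set.range fun i => (A i, B i))) :
    ∃ w : List (Fin r), w.length ≤ l.length ∧ l.prod = ((w.map A).prod, (w.map B).prod) := by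
  induction l with
  | nil => exact ⟨[], le_rfl, rfl⟩
  | cons a l ih =>
    obtain ⟨w, hw, hp⟩ := ih fun b hb => hl b (List.mem_cons_of_mem _ hb)
    rcases hl a List.mem_cons_self with rfl | ⟨i, rfl⟩
    · exact ⟨w, hw.trans (by simp), by rw [List.prod_cons, hp, one_mul]⟩
    · refine ⟨i :: w, by simpa using hw, ?_⟩
      rw [List.prod_cons, hp, List.map_cons, List.map_cons, List.prod_cons, List.prod_cons]
      rfl

theorem SI_trace_all (hn : 1 ≤ n) (A B : Fin r → Matrix (Fin n) (Fin n) F)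
    (hw : ∀ ℓ, 1 ≤ ℓ → ℓ ≤ n ^ 2 → ∀ w : Fin ℓ → Fin r,
      Matrix.trace (List.ofFn fun j => A (w j)).prod =
        Matrix.trace (List.ofFn fun j => B (w j)).prod) (q : FreeAlgebra F (Fin r)) :
    Matrix.trace (FreeAlgebra.lift F A q) = Matrix.trace (FreeAlgebra.lift F B q) := by
  let E := Matrix (Fin n) (Fin n) F × Matrix (Fin n) (Fin n) F
  let s : Set E := insert 1 (Set.range fun i => (A i, B i))
  let S : Submodule F E := Submodule.span F s
  have h1 : (1 : E) ∈ S := Submodule.subset_span (Set.mem_insert _ _)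
  have : NeZero n := ⟨by omega⟩
  have : Nontrivial E := by
    refine ⟨⟨0, 1, fun h => ?_⟩⟩
    have := congrFun (congrFun (congrArg Prod.fst h) 0) 0
    simp at this
  have hbound : ∀ j, S ^ j ≤ S ^ (n ^ 2) := by
    refine SI_length_bound S h1 (n ^ 2) (2 * n) ?_ (by omega) ?_ (SI_poly_rel hn)
    · rw [Module.finrank_prod, Module.finrank_matrix, Module.finrank_self, Fintype.card_fin]
      apply le_of_eq; ring
    · zify
      nlinarith [sq_nonneg ((n : ℤ) - 1)]
  let τ : E →ₗ[F] F := (Matrix.traceLinearMap (Fin n) F F).comp (LinearMap.fst F _ _) -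
    (Matrix.traceLinearMap (Fin n) F F).comp (LinearMap.snd F _ _)
  have hτ : ∀ x : E, τ x = Matrix.trace x.1 - Matrix.trace x.2 := fun x => rfl
  have hker : S ^ (n ^ 2) ≤ LinearMap.ker τ := by
    rw [Submodule.span_pow, Submodule.span_le]
    intro u hu
    rw [Set.mem_pow] at hu
    obtain ⟨f, rfl⟩ := hu
    obtain ⟨w, hwl, hp⟩ := SI_words A B (List.ofFn fun i => (f i : E)) (by
      intro a ha
      rw [List.mem_ofFn] at ha
      obtain ⟨i, rfl⟩ := ha
      exact (f i).2)
    rw [List.length_ofFn] at hwl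
    rw [SetLike.mem_coe, LinearMap.mem_ker, hp, hτ, sub_eq_zero]
    rcases Nat.eq_zero_or_pos w.length with h0 | h0
    · rw [List.length_eq_zero_iff] at h0
      subst h0
      rfl
    · have h := hw w.length h0 hwl w.get
      have hA : ∀ A : Fin r → Matrix (Fin n) (Fin n) F,
          (List.ofFn fun j => A (w.get j)) = w.map A := by
        intro A
        conv_rhs => rw [← List.ofFn_get w]
        rw [List.map_ofFn]
        rfl
      rw [hA, hA] at h
      exact h
  have hall : ∀ x ∈ SI_alg A B, x ∈ S ^ (n ^ 2) := by
    intro x hx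
    have hS1 : S ≤ S ^ (n ^ 2) := by
      have := hbound 1
      rwa [Submodule.pow_one] at this
    induction hx using Algebra.adjoin_induction with
    | mem x hx => exact hS1 (Submodule.subset_span (Set.mem_insert_of_mem _ hx))
    | algebraMap c =>
      rw [Algebra.algebraMap_eq_smul_one]
      exact Submodule.smul_mem _ _ (hS1 h1)
    | add x y _ _ hx hy => exact add_mem hx hy
    | mul x y _ _ hx hy =>
      have := Submodule.mul_mem_mul hx hy
      rw [← pow_add] at this
      exact hbound _ this
  have h := hker (hall _ ((SI_mem_alg A B _).2 ⟨q, rfl⟩))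
  rw [LinearMap.mem_ker, hτ, sub_eq_zero] at h
  exact h

end Part6

/-- If `H ⊆ F^{n²}` hits every nonzero difference
`f_ℓ(A,x) − f_ℓ(B,x)` (for all tuples `A`, `B` and all `ℓ ∈ {1,…,n²}`), then
`T_H` is a set of separating invariants: every element of `T_H` is an invariant, and two
tuples are separated by some invariant iff they are separated by some member of `T_H`. -/
theorem TH_separating_invariants {F : Type*} [Field F] [CharZero F] (n r : ℕ)
    (H : Set (Fin (n ^ 2) → F))
    (hH : ∀ (A B : Fin r → Matrix (Fin n) (Fin n) F) (ℓ : ℕ)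
        (_ : 1 ≤ ℓ) (h2 : ℓ ≤ n ^ 2),
      fpoly n r ℓ A - fpoly n r ℓ B ≠ 0 →
        ∃ α ∈ H,
          MvPolynomial.eval (fun j : Fin ℓ => α (Fin.castLE h2 j)) (fpoly n r ℓ A) ≠
            MvPolynomial.eval (fun j : Fin ℓ => α (Fin.castLE h2 j)) (fpoly n r ℓ B)) :
    (∀ g ∈ TH F n r H, IsSimConjInvariant F n r g) ∧
      ∀ A B : Fin r → Matrix (Fin n) (Fin n) F,
        (∃ f, IsSimConjInvariant F n r f ∧ evalTuple A f ≠ evalTuple B f) ↔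
          ∃ g ∈ TH F n r H, evalTuple A g ≠ evalTuple B g := by
  have hinv : ∀ g ∈ TH F n r H, IsSimConjInvariant F n r g := by
    rintro g ⟨ℓ, h1, h2, α, hα, rfl⟩
    rw [SI_fAtPoint_eq]
    exact SI_trPoly_inv _
  refine ⟨hinv, fun A B => ⟨?_, ?_⟩⟩
  · rintro ⟨f, hf, hne⟩
    by_contra hcon
    push Not at hcon
    apply hne
    rcases Nat.eq_zero_or_pos n with h0 | hn
    · subst h0
      have : A = B := Subsingleton.elim _ _
      rw [this]
    · refine SI_main _ A B rfl (SI_trace_all hn A B ?_) f hf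
      intro ℓ h1 h2 w
      have heq : fpoly n r ℓ A = fpoly n r ℓ B := by
        by_contra hh
        obtain ⟨α, hα, hαne⟩ := hH A B ℓ h1 h2 (sub_ne_zero.2 hh)
        apply hαne
        rw [SI_eval_fpoly, SI_eval_fpoly]
        exact hcon _ ⟨ℓ, h1, h2, α, hα, rfl⟩
      rw [← SI_coeff_fpoly, ← SI_coeff_fpoly, heq]
  · rintro ⟨g, hg, hne⟩
    exact ⟨g, hinv g hg, hne⟩
end

section
/- Let F be a field and f ∈ F[x_1,…,x_n]. Suppose f = tr(M_1 M_2 ⋯ M_d), where each M_i is a w×w matrix whose entries are polynomials in F[x_1,…,x_n] of total degree at most 1. Let d' ≥ d be an integer such that the characteristic of F does not divide d'. Then there exists a matrix A of size (w·d')×(w·d') whose entries are polynomials in F[x_1,…,x_n] of total degree at most 1 such that f = tr(A^{d'}). -/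
/-- Product of `k` consecutive matrices, starting at index `i`, cyclically. -/
def cycProd {R : Type*} [CommRing R] {w m : ℕ} (N : ZMod m → Matrix (Fin w) (Fin w) R)
    (i : ZMod m) : ℕ → Matrix (Fin w) (Fin w) R
  | 0 => 1
  | k + 1 => cycProd N i k * N (i + k)

lemma cycProd_succ' {R : Type*} [CommRing R] {w m : ℕ} (N : ZMod m → Matrix (Fin w) (Fin w) R)
    (i : ZMod m) (k : ℕ) : cycProd N i (k + 1) = N i * cycProd N (i + 1) k := by
  induction k with
  | zero => simp [cycProd]
  | succ k ih =>
    rw [cycProd, ih, cycProd, Matrix.mul_assoc]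
    congr 3
    push_cast
    ring

lemma trace_cycProd_succ {R : Type*} [CommRing R] {w m : ℕ} [NeZero m]
    (N : ZMod m → Matrix (Fin w) (Fin w) R)
    (i : ZMod m) : (cycProd N i m).trace = (cycProd N (i + 1) m).trace := by
  obtain ⟨k, hk⟩ := Nat.exists_eq_succ_of_ne_zero (NeZero.ne m)
  have h0 : ((k + 1 : ℕ) : ZMod m) = 0 := by
    rw [← Nat.succ_eq_add_one, ← hk]; simp
  have e : ∀ j, cycProd N j m = cycProd N j (k + 1) := fun j => congrArg (cycProd N j) hk
  rw [e, e, cycProd_succ', cycProd, Matrix.trace_mul_comm]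
  have : i + 1 + (k : ZMod m) = i := by
    push_cast at h0
    linear_combination h0
  rw [this]

lemma trace_cycProd_eq {R : Type*} [CommRing R] {w m : ℕ} [NeZero m]
    (N : ZMod m → Matrix (Fin w) (Fin w) R)
    (i : ZMod m) : (cycProd N i m).trace = (cycProd N 0 m).trace := by
  have h : ∀ k : ℕ, (cycProd N (k : ZMod m) m).trace = (cycProd N 0 m).trace := by
    intro k
    induction k with
    | zero => simp
    | succ k ih => rw [← ih, trace_cycProd_succ N (k : ZMod m)]; push_cast; rfl
  have := h i.val
  rwa [ZMod.natCast_zmod_val] at this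

/-- The block-cyclic matrix. -/
def blockCyc {R : Type*} [CommRing R] {w m : ℕ} (N : ZMod m → Matrix (Fin w) (Fin w) R) :
    Matrix (Fin w × ZMod m) (Fin w × ZMod m) R :=
  fun p q => if q.2 = p.2 + 1 then N p.2 p.1 q.1 else 0

lemma blockCyc_pow {R : Type*} [CommRing R] {w m : ℕ} [NeZero m]
    (N : ZMod m → Matrix (Fin w) (Fin w) R) (k : ℕ) (p q : Fin w × ZMod m) :
    (blockCyc N ^ k) p q = if q.2 = p.2 + k then cycProd N p.2 k p.1 q.1 else 0 := by
  induction k generalizing q with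
  | zero =>
    obtain ⟨a, i⟩ := p
    obtain ⟨b, j⟩ := q
    simp only [pow_zero, cycProd, Matrix.one_apply, Prod.mk.injEq, Nat.cast_zero, add_zero]
    by_cases h1 : a = b <;> by_cases h2 : i = j <;> simp [h1, h2, eq_comm]
  | succ k ih =>
    have hb : ∀ p q : Fin w × ZMod m,
        blockCyc N p q = if q.2 = p.2 + 1 then N p.2 p.1 q.1 else 0 := fun _ _ => rfl
    rw [pow_succ, Matrix.mul_apply, Fintype.sum_prod_type_right,
      Finset.sum_eq_single (p.2 + (k : ZMod m))]
    · by_cases h : q.2 = p.2 + k + 1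
      · simp [ih, hb, h, cycProd, Matrix.mul_apply, add_assoc]
      · have h' : ¬ q.2 = p.2 + ((k + 1 : ℕ) : ZMod m) := by
          push_cast; rwa [← add_assoc]
        rw [if_neg h']
        simp [hb, h]
    · intro z _ hz
      simp [ih, hz]
    · simp

lemma trace_blockCyc_pow {R : Type*} [CommRing R] {w m : ℕ} [NeZero m]
    (N : ZMod m → Matrix (Fin w) (Fin w) R) :
    (blockCyc N ^ m).trace = (m : R) * (cycProd N 0 m).trace := by
  rw [Matrix.trace, Fintype.sum_prod_type_right]
  have : ∀ i : ZMod m, ∑ a, (blockCyc N ^ m).diag (a, i) = (cycProd N 0 m).trace := by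
    intro i
    rw [← trace_cycProd_eq N i]
    simp [Matrix.trace, blockCyc_pow]
  rw [Finset.sum_congr rfl (fun i _ => this i)]
  simp [ZMod.card]

theorem abp_to_trace_of_matrix_power {F : Type*} [Field F] (n w d : ℕ)
    (f : MvPolynomial (Fin n) F)
    (M : Fin d → Matrix (Fin w) (Fin w) (MvPolynomial (Fin n) F))
    (hM : ∀ (i : Fin d) (a b : Fin w), (M i a b).totalDegree ≤ 1)
    (hf : f = Matrix.trace (List.ofFn M).prod)
    (d' : ℕ) (hd' : d ≤ d') (hchar : ¬ (ringChar F ∣ d')) :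
    ∃ A : Matrix (Fin (w * d')) (Fin (w * d')) (MvPolynomial (Fin n) F),
      (∀ a b, (A a b).totalDegree ≤ 1) ∧ f = Matrix.trace (A ^ d') := by
  have hF : (d' : F) ≠ 0 := fun h => hchar ((ringChar.spec F d').1 h)
  have hne : d' ≠ 0 := by rintro rfl; simp at hF
  haveI : NeZero d' := ⟨hne⟩
  let L : ℕ → Matrix (Fin w) (Fin w) (MvPolynomial (Fin n) F) :=
    fun t => if h : t < d then M ⟨t, h⟩ else 1
  have hL : ∀ t a b, (L t a b).totalDegree ≤ 1 := by
    intro t a b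
    by_cases h : t < d
    · simp only [L, h, dif_pos]; exact hM _ _ _
    · simp only [L, h, dif_neg, not_false_eq_true, Matrix.one_apply]
      split_ifs <;> simp
  let c : F := (d' : F)⁻¹
  let N : ZMod d' → Matrix (Fin w) (Fin w) (MvPolynomial (Fin n) F) :=
    fun z => (if z = 0 then c else 1) • L z.val
  have hN : ∀ z a b, (N z a b).totalDegree ≤ 1 := fun z a b =>
    (MvPolynomial.totalDegree_smul_le _ _).trans (hL _ _ _)
  have hP : ∀ k, k + 1 ≤ d' → cycProd N 0 (k + 1) = c • ((List.range (k + 1)).map L).prod := by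
    intro k
    induction k with
    | zero => intro _; simp [cycProd, N]
    | succ k ih =>
      intro hk
      have hv : ((k + 1 : ℕ) : ZMod d').val = k + 1 := ZMod.val_cast_of_lt (by omega)
      have hz : ((k + 1 : ℕ) : ZMod d') ≠ 0 := by
        intro h
        rw [h, ZMod.val_zero] at hv
        omega
      rw [cycProd, ih (by omega), List.range_succ (n := k + 1), List.map_append, List.prod_append]
      simp only [N, zero_add, hz, if_false, one_smul, hv]
      simp
  have hQ : ∀ k, ((List.range (d + k)).map L).prod = (List.ofFn M).prod := by
    intro k
    induction k with
    | zero =>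
      congr 1
      apply List.ext_getElem
      · simp
      · intro i h1 h2
        have : i < d := by simpa using h1
        simp [L, this]
    | succ k ih =>
      rw [← add_assoc, List.range_succ, List.map_append, List.prod_append, ih]
      simp [L]
  have hfin : cycProd N 0 d' = c • (List.ofFn M).prod := by
    have h1 := hP (d' - 1) (by omega)
    have h2 := hQ (d' - d)
    rw [show d' - 1 + 1 = d' by omega] at h1
    rw [show d + (d' - d) = d' by omega] at h2
    rw [h1, h2]
  let e : Fin w × ZMod d' ≃ Fin (w * d') :=
    Fintype.equivFinOfCardEq (by simp [ZMod.card])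
  refine ⟨Matrix.reindexAlgEquiv F _ e (blockCyc N), ?_, ?_⟩
  · intro a b
    simp only [Matrix.reindexAlgEquiv_apply, Matrix.reindex_apply, Matrix.submatrix_apply, blockCyc]
    split_ifs
    · exact hN _ _ _
    · simp
  · rw [← map_pow, Matrix.reindexAlgEquiv_apply, Matrix.reindex_apply]
    have ht : ((blockCyc N ^ d').submatrix e.symm e.symm).trace = (blockCyc N ^ d').trace := by
      simp only [Matrix.trace, Matrix.diag, Matrix.submatrix_apply]
      exact Equiv.sum_comp e.symm (fun x => (blockCyc N ^ d') x x)
    rw [ht, trace_blockCyc_pow, hfin, Matrix.trace_smul, ← hf, MvPolynomial.smul_eq_C_mul,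
      ← mul_assoc, ← map_natCast (MvPolynomial.C (σ := Fin n) (R := F)), ← map_mul,
      mul_inv_cancel₀ hF, map_one, one_mul]
end

section
/- Chain rule for Hasse derivatives: let R be a commutative ring, f ∈ R[x_1,…,x_n], g_1,…,g_n ∈ R[y_1,…,y_p], u ∈ R^p, and k ≥ 1. Then ∂_{u^k}(f(g_1,…,g_n)) = Σ [ ∏_{j=1}^{k} ∏_{i=1}^{n} (∂_{u^j}(g_i))^{ℓ_{j,i}} ] · [ ∏_{i=1}^{n} (ℓ_{1,i}+⋯+ℓ_{k,i})! / (ℓ_{1,i}! ⋯ ℓ_{k,i}!) ] · (∂_{x^{ℓ_1+⋯+ℓ_k}} f)(g_1,…,g_n), where the sum ranges over all tuples (ℓ_1,…,ℓ_k) ∈ (ℕ^n)^k satisfying Σ_{j=1}^{k} j·|ℓ_j| = k (with |ℓ_j| the sum of the coordinates of ℓ_j), ℓ_1+⋯+ℓ_k is coordinatewise addition of multi-indices, and the multinomial coefficients are interpreted in R via the canonical ring map ℤ → R. -/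
/-- The `k`-th Hasse derivative of `f` in direction `u`: the coefficient of `y^k` in
`f(x_1 + u_1 y, …, x_m + u_m y)`. -/
noncomputable def hasseDeriv {R : Type*} [CommRing R] {m : ℕ} (u : Fin m → R) (k : ℕ)
    (f : MvPolynomial (Fin m) R) : MvPolynomial (Fin m) R :=
  ((MvPolynomial.aeval fun i : Fin m =>
      Polynomial.C (MvPolynomial.X i) + Polynomial.C (MvPolynomial.C (u i)) * Polynomial.X)
    f).coeff k

/-- `∂_{x_j^k}`, the `k`-th Hasse derivative with respect to the variable `x_j`
(direction the standard basis vector `e_j`). -/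
noncomputable def hasseDerivAt {R : Type*} [CommRing R] {m : ℕ} (j : Fin m) (k : ℕ) :
    MvPolynomial (Fin m) R → MvPolynomial (Fin m) R :=
  hasseDeriv (Pi.single j (1 : R)) k

/-- `∂_{x^i} := ∂_{x_1^{i_1}} ∘ ⋯ ∘ ∂_{x_m^{i_m}}` for a multi-index `i`. -/
noncomputable def multiHasseDeriv {R : Type*} [CommRing R] {m : ℕ} (i : Fin m → ℕ)
    (f : MvPolynomial (Fin m) R) : MvPolynomial (Fin m) R :=
  List.foldr (fun j g => hasseDerivAt j (i j) g) f (List.finRange m)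


open Finset in
theorem hd_add {R : Type*} [CommRing R] {m : ℕ} (u : Fin m → R) (k : ℕ)
    (f g : MvPolynomial (Fin m) R) : hasseDeriv u k (f + g) = hasseDeriv u k f + hasseDeriv u k g := by
  simp [hasseDeriv]

theorem hdAt_monomial {R : Type*} [CommRing R] {m : ℕ} (j : Fin m) (k : ℕ)
    (a : Fin m →₀ ℕ) (c : R) :
    hasseDerivAt j k (MvPolynomial.monomial a c) =
      MvPolynomial.monomial (a - Finsupp.single j k) (c * ((a j).choose k : ℕ)) := by
  classical
  have h1 : (MvPolynomial.aeval fun i : Fin m =>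
      (Polynomial.C (MvPolynomial.X i) + Polynomial.C (MvPolynomial.C ((Pi.single j (1 : R) : Fin m → R) i)) *
        Polynomial.X : Polynomial (MvPolynomial (Fin m) R))) (MvPolynomial.monomial a c) =
      Polynomial.C (MvPolynomial.C c * ∏ i ∈ Finset.univ.erase j, MvPolynomial.X i ^ a i) *
        (Polynomial.X + Polynomial.C (MvPolynomial.X j)) ^ a j := by
    rw [MvPolynomial.aeval_monomial, Finsupp.prod_fintype _ _ (by simp),
      ← Finset.mul_prod_erase _ _ (Finset.mem_univ j)]
    have : ∀ i ∈ Finset.univ.erase j, (Polynomial.C (MvPolynomial.X i) +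
        Polynomial.C (MvPolynomial.C ((Pi.single j (1 : R) : Fin m → R) i)) *
        Polynomial.X : Polynomial (MvPolynomial (Fin m) R)) ^ a i =
        Polynomial.C (MvPolynomial.X i ^ a i) := by
      intro i hi
      simp [Pi.single_eq_of_ne (Finset.ne_of_mem_erase hi)]
    rw [Finset.prod_congr rfl this, ← map_prod]
    have h2 : (algebraMap R (Polynomial (MvPolynomial (Fin m) R))) c =
      Polynomial.C (MvPolynomial.C c) := rfl
    rw [h2]
    simp only [Pi.single_eq_same, map_one, one_mul, map_mul]
    ring
  rw [hasseDerivAt, hasseDeriv, h1, Polynomial.coeff_C_mul, Polynomial.coeff_X_add_C_pow,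
    MvPolynomial.monomial_eq, Finsupp.prod_fintype _ _ (by simp),
    ← Finset.mul_prod_erase _ _ (Finset.mem_univ j)]
  have : ∀ i ∈ Finset.univ.erase j,
      (MvPolynomial.X i : MvPolynomial (Fin m) R) ^ (a - Finsupp.single j k) i =
      MvPolynomial.X i ^ a i := by
    intro i hi
    simp [Finsupp.single_apply, (Finset.ne_of_mem_erase hi).symm]
  rw [Finset.prod_congr rfl this]
  simp
  ring

theorem foldr_hd_monomial {R : Type*} [CommRing R] {m : ℕ} (i : Fin m → ℕ)
    (a : Fin m →₀ ℕ) (c : R) (L : List (Fin m)) (hL : L.Nodup) :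
    List.foldr (fun j g => hasseDerivAt j (i j) g) (MvPolynomial.monomial a c) L =
      MvPolynomial.monomial (Finsupp.equivFunOnFinite.symm
        (fun j => if j ∈ L then a j - i j else a j))
        (c * (L.map fun j => (((a j).choose (i j) : ℕ) : R)).prod) := by
  induction L with
  | nil =>
    simp only [List.foldr_nil, List.not_mem_nil, if_false, List.map_nil, List.prod_nil, mul_one]
    congr 1
    congr 1
    ext x
    rfl
  | cons j L ih =>
    rw [List.nodup_cons] at hL
    rw [List.foldr_cons, ih hL.2, hdAt_monomial]
    congr 1
    · congr 1
      ext x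
      by_cases hx : x = j
      · subst hx; simp [hL.1]
      · simp [hx, Finsupp.single_apply, Ne.symm hx]
    · simp [hL.1]; ring

theorem multi_monomial {R : Type*} [CommRing R] {m : ℕ} (i : Fin m → ℕ)
    (a : Fin m →₀ ℕ) (c : R) :
    multiHasseDeriv i (MvPolynomial.monomial a c) =
      MvPolynomial.monomial (Finsupp.equivFunOnFinite.symm (fun j => a j - i j))
        (c * ∏ j, (((a j).choose (i j) : ℕ) : R)) := by
  rw [multiHasseDeriv, foldr_hd_monomial _ _ _ _ (List.nodup_finRange m)]
  simp [Fin.prod_univ_def]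

theorem hdAt_add {R : Type*} [CommRing R] {m : ℕ} (i : Fin m → ℕ)
    (f g : MvPolynomial (Fin m) R) :
    multiHasseDeriv i (f + g) = multiHasseDeriv i f + multiHasseDeriv i g := by
  unfold multiHasseDeriv
  induction List.finRange m with
  | nil => rfl
  | cons j L ih => rw [List.foldr_cons, ih, hasseDerivAt, hd_add]; rfl

theorem single_expand {A : Type*} [CommRing A] {k : ℕ} (x : A) (s : Fin k → A) (a N : ℕ)
    (hN : a ≤ N) :
    (x + ∑ j, s j) ^ a = ∑ l ∈ Fintype.piFinset (fun _ : Fin k => Finset.range (N + 1)),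
      ((a.choose (∑ j, l j) : ℕ) : A) * ((Nat.multinomial Finset.univ l : ℕ) : A) *
        x ^ (a - ∑ j, l j) * ∏ j, s j ^ l j := by
  classical
  rw [add_comm, add_pow]
  have h1 : ∑ l ∈ Fintype.piFinset (fun _ : Fin k => Finset.range (N + 1)),
      ((a.choose (∑ j, l j) : ℕ) : A) * ((Nat.multinomial Finset.univ l : ℕ) : A) *
        x ^ (a - ∑ j, l j) * ∏ j, s j ^ l j =
      ∑ l ∈ (Fintype.piFinset (fun _ : Fin k => Finset.range (N + 1))).filter
        (fun l => ∑ j, l j ∈ Finset.range (a + 1)),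
      ((a.choose (∑ j, l j) : ℕ) : A) * ((Nat.multinomial Finset.univ l : ℕ) : A) *
        x ^ (a - ∑ j, l j) * ∏ j, s j ^ l j := by
    symm
    apply Finset.sum_filter_of_ne
    intro l _ h
    by_contra h'
    apply h
    rw [Nat.choose_eq_zero_of_lt (by simpa using h')]
    simp
  rw [h1, ← Finset.sum_fiberwise_of_maps_to (g := fun l : Fin k → ℕ => ∑ j, l j)
    (t := Finset.range (a + 1)) (by intro l hl; exact (Finset.mem_filter.1 hl).2)]
  refine Finset.sum_congr rfl fun M hM => ?_
  rw [Finset.sum_pow_eq_sum_piAntidiag, Finset.sum_mul, Finset.sum_mul]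
  refine Finset.sum_congr ?_ ?_
  · ext l
    simp only [Finset.mem_piAntidiag, Finset.mem_filter, Fintype.mem_piFinset, Finset.mem_range]
      at hM ⊢
    constructor
    · rintro ⟨h, -⟩
      have h : ∑ j, l j = M := h
      refine ⟨⟨fun j => ?_, by omega⟩, h⟩
      have := Finset.single_le_sum (f := l) (fun _ _ => Nat.zero_le _) (Finset.mem_univ j)
      omega
    · rintro ⟨_, h⟩
      exact ⟨h, by simp⟩
  · intro l hl
    rw [(Finset.mem_filter.1 hl).2]
    ring

theorem finsum_box {A : Type*} [AddCommMonoid A] {n k : ℕ} (N : ℕ) (hN : k ≤ N)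
    (F : (Fin k → Fin n → ℕ) → A) :
    (∑ᶠ (l : Fin k → Fin n → ℕ) (_ : ∑ j : Fin k, ((j : ℕ) + 1) * (∑ i : Fin n, l j i) = k), F l) =
    ∑ l ∈ Fintype.piFinset (fun _ : Fin n => Fintype.piFinset (fun _ : Fin k =>
        Finset.range (N + 1))),
      if ∑ i, ∑ j : Fin k, ((j : ℕ) + 1) * l i j = k then F (fun j i => l i j) else 0 := by
  classical
  have h0 : ∀ l : Fin k → Fin n → ℕ, (∑ᶠ (_ : ∑ j : Fin k, ((j : ℕ) + 1) * (∑ i : Fin n, l j i) = k),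
      F l) = if ∑ j : Fin k, ((j : ℕ) + 1) * (∑ i : Fin n, l j i) = k then F l else 0 := by
    intro l
    rw [finsum_eq_if]
  have h1 : ∀ l : Fin n → Fin k → ℕ, ∑ i, ∑ j : Fin k, ((j : ℕ) + 1) * l i j =
      ∑ j : Fin k, ((j : ℕ) + 1) * (∑ i : Fin n, l i j) := by
    intro l
    rw [Finset.sum_comm]
    simp only [Finset.mul_sum]
  simp only [h0, h1]
  rw [← finsum_comp_equiv (Equiv.piComm (fun (_ : Fin n) (_ : Fin k) => ℕ))]
  apply finsum_eq_sum_of_support_subset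
  intro l hl
  rw [Function.mem_support] at hl
  have hl' := (ite_ne_right_iff.1 hl).1
  simp only [Finset.mem_coe, Fintype.mem_piFinset, Finset.mem_range]
  intro i j
  have a1 := Finset.single_le_sum (f := fun j : Fin k => ((j : ℕ) + 1) * (∑ i : Fin n, l i j))
    (fun _ _ => Nat.zero_le _) (Finset.mem_univ j)
  have a2 := Finset.single_le_sum (f := fun i : Fin n => l i j)
    (fun _ _ => Nat.zero_le _) (Finset.mem_univ i)
  have a3 : (∑ i : Fin n, l i j) ≤ ((j : ℕ) + 1) * (∑ i : Fin n, l i j) :=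
    Nat.le_mul_of_pos_left _ (Nat.succ_pos _)
  have a4 : ∑ j : Fin k, ((j : ℕ) + 1) * (∑ i : Fin n, l i j) = k := hl'
  omega

theorem coeff_congr_trunc {A : Type*} [CommRing A] {n : ℕ} (k : ℕ) (P Q : Fin n → Polynomial A)
    (h : ∀ i, ∀ d ≤ k, (P i).coeff d = (Q i).coeff d) (a : Fin n → ℕ) :
    (∏ i, P i ^ a i).coeff k = (∏ i, Q i ^ a i).coeff k := by
  have h2 : (Polynomial.X : Polynomial A) ^ (k + 1) ∣ ∏ i, P i ^ a i - ∏ i, Q i ^ a i := by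
    rw [← Ideal.mem_span_singleton, ← Ideal.Quotient.eq, map_prod, map_prod]
    refine Finset.prod_congr rfl fun i _ => ?_
    rw [map_pow, map_pow]
    congr 1
    rw [Ideal.Quotient.eq, Ideal.mem_span_singleton, Polynomial.X_pow_dvd_iff]
    intro d hd
    rw [Polynomial.coeff_sub, h i d (by omega), sub_self]
  have := Polynomial.X_pow_dvd_iff.1 h2 k (by omega)
  rwa [Polynomial.coeff_sub, sub_eq_zero] at this

theorem hd_zero {R : Type*} [CommRing R] {m : ℕ} (u : Fin m → R) (f : MvPolynomial (Fin m) R) :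
    hasseDeriv u 0 f = f := by
  unfold hasseDeriv
  rw [← Polynomial.constantCoeff_apply]
  induction f using MvPolynomial.induction_on with
  | C a => simp [Polynomial.algebraMap_apply, MvPolynomial.algebraMap_eq]
  | add p q hp hq => rw [map_add, map_add, hp, hq]
  | mul_X p i hp => rw [map_mul, map_mul, hp]; simp

theorem chain_monomial {R : Type*} [CommRing R] {n p : ℕ}
    (a : Fin n →₀ ℕ) (c : R) (g : Fin n → MvPolynomial (Fin p) R)
    (u : Fin p → R) (k : ℕ) :
    hasseDeriv u k (MvPolynomial.aeval g (MvPolynomial.monomial a c)) =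
      ∑ᶠ (ℓ : Fin k → Fin n → ℕ)
        (_ : ∑ j : Fin k, ((j : ℕ) + 1) * (∑ i : Fin n, ℓ j i) = k),
        (∏ j : Fin k, ∏ i : Fin n, hasseDeriv u ((j : ℕ) + 1) (g i) ^ ℓ j i) *
          (∏ i : Fin n,
            (Nat.multinomial Finset.univ (fun j : Fin k => ℓ j i) :
              MvPolynomial (Fin p) R)) *
          MvPolynomial.aeval g (multiHasseDeriv (fun i : Fin n => ∑ j : Fin k, ℓ j i)
            (MvPolynomial.monomial a c)) := by
  classical
  rw [finsum_box (k + ∑ i, a i) (Nat.le_add_right _ _)]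
  have e1 : hasseDeriv u k (MvPolynomial.aeval g (MvPolynomial.monomial a c)) =
      MvPolynomial.C c * (∏ i, (Polynomial.C (g i) + ∑ j : Fin k,
        Polynomial.C (hasseDeriv u ((j : ℕ) + 1) (g i)) * Polynomial.X ^ ((j : ℕ) + 1)) ^ a i).coeff k := by
    rw [← coeff_congr_trunc k (fun i => (MvPolynomial.aeval fun i : Fin p =>
      (Polynomial.C (MvPolynomial.X i) + Polynomial.C (MvPolynomial.C (u i)) * Polynomial.X :
        Polynomial (MvPolynomial (Fin p) R))) (g i)), ← Polynomial.coeff_C_mul, hasseDeriv,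
        MvPolynomial.aeval_monomial, Finsupp.prod_fintype _ _ (by simp), map_mul, map_prod]
    · simp only [map_pow]
      congr 2
      rw [AlgHom.commutes]
      rfl
    · intro i d hd
      change hasseDeriv u d (g i) = _
      rw [Polynomial.coeff_add, Polynomial.finsetSum_coeff, Polynomial.coeff_C]
      simp only [Polynomial.coeff_C_mul_X_pow]
      rcases d with _ | d
      · simp [hd_zero]
      · rw [Finset.sum_eq_single (⟨d, by omega⟩ : Fin k)]
        · simp
        · intro b _ hb
          rw [if_neg]
          intro h
          apply hb
          ext
          simp only
          omega
        · simp
  rw [e1]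
  have hle : ∀ i, a i ≤ k + ∑ i, a i := fun i =>
    (Finset.single_le_sum (f := fun i => a i) (fun _ _ => Nat.zero_le _) (Finset.mem_univ i)).trans
      (Nat.le_add_left _ _)
  rw [Finset.prod_congr rfl fun i _ => single_expand _ _ (a i) _ (hle i), Finset.prod_univ_sum,
    Polynomial.finsetSum_coeff, Finset.mul_sum]
  refine Finset.sum_congr rfl fun l _ => ?_
  have e2 : (∏ i, (((a i).choose (∑ j, l i j) : ℕ) : Polynomial (MvPolynomial (Fin p) R)) *
      ((Nat.multinomial Finset.univ (l i) : ℕ) : Polynomial (MvPolynomial (Fin p) R)) *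
      Polynomial.C (g i) ^ (a i - ∑ j, l i j) *
      ∏ j : Fin k, (Polynomial.C (hasseDeriv u ((j : ℕ) + 1) (g i)) *
        Polynomial.X ^ ((j : ℕ) + 1)) ^ l i j) =
      Polynomial.C (∏ i, (((a i).choose (∑ j, l i j) : ℕ) : MvPolynomial (Fin p) R) *
      ((Nat.multinomial Finset.univ (l i) : ℕ) : MvPolynomial (Fin p) R) *
      g i ^ (a i - ∑ j, l i j) *
      ∏ j : Fin k, hasseDeriv u ((j : ℕ) + 1) (g i) ^ l i j) *
      Polynomial.X ^ (∑ i, ∑ j : Fin k, ((j : ℕ) + 1) * l i j) := by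
    rw [← Finset.prod_pow_eq_pow_sum, map_prod, ← Finset.prod_mul_distrib]
    refine Finset.prod_congr rfl fun i _ => ?_
    rw [← Finset.prod_pow_eq_pow_sum]
    simp only [mul_pow, Finset.prod_mul_distrib, map_mul, map_prod, map_pow, map_natCast, ← pow_mul]
    ring
  rw [e2, Polynomial.coeff_C_mul_X_pow, multi_monomial, MvPolynomial.aeval_monomial,
    Finsupp.prod_fintype _ _ (by simp)]
  by_cases h : ∑ i, ∑ j : Fin k, ((j : ℕ) + 1) * l i j = k
  · rw [if_pos h, if_pos h.symm]
    rw [Finset.prod_comm (s := (Finset.univ : Finset (Fin k)))]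
    simp only [Finset.prod_mul_distrib, map_mul, map_prod, map_natCast,
      MvPolynomial.algebraMap_eq, Finsupp.equivFunOnFinite_symm_apply_apply]
    ring
  · rw [if_neg h, if_neg (Ne.symm h), mul_zero]

/-- **Chain rule / Faà di Bruno for Hasse derivatives.**
`∂_{u^k}(f(g_1,…,g_n))` is the sum, over all tuples `(ℓ_1,…,ℓ_k)` of multi-indices with
`Σ_j j·|ℓ_j| = k`, of
`[∏_j ∏_i (∂_{u^j} g_i)^{ℓ_{j,i}}] · [∏_i multinomial(ℓ_{1,i},…,ℓ_{k,i})] ·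
(∂_{x^{ℓ_1+⋯+ℓ_k}} f)(g)`.
(Here the index `j : Fin k` stands for `j+1 ∈ {1,…,k}`.) -/
theorem hasseDeriv_chain_rule {R : Type*} [CommRing R] {n p : ℕ}
    (f : MvPolynomial (Fin n) R) (g : Fin n → MvPolynomial (Fin p) R)
    (u : Fin p → R) (k : ℕ) (hk : 1 ≤ k) :
    hasseDeriv u k (MvPolynomial.aeval g f) =
      ∑ᶠ (ℓ : Fin k → Fin n → ℕ)
        (_ : ∑ j : Fin k, ((j : ℕ) + 1) * (∑ i : Fin n, ℓ j i) = k),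
        (∏ j : Fin k, ∏ i : Fin n, hasseDeriv u ((j : ℕ) + 1) (g i) ^ ℓ j i) *
          (∏ i : Fin n,
            (Nat.multinomial Finset.univ (fun j : Fin k => ℓ j i) :
              MvPolynomial (Fin p) R)) *
          MvPolynomial.aeval g (multiHasseDeriv (fun i : Fin n => ∑ j : Fin k, ℓ j i) f) := by
  induction f using MvPolynomial.induction_on' with
  | monomial a c => exact chain_monomial a c g u k
  | add p q hp hq =>
    rw [finsum_box k le_rfl] at hp hq ⊢
    rw [map_add, hd_add, hp, hq, ← Finset.sum_add_distrib]
    refine Finset.sum_congr rfl fun l _ => ?_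
    rw [hdAt_add, map_add, mul_add]
    split_ifs <;> simp
end

section
/- Let F be a field, f ∈ F[y_1,…,y_n], and let L = (L_1,…,L_n) be a tuple of polynomials in F[x_1,…,x_m], each of total degree at most 1. Then |∂(f(L_1,…,L_n))| ≤ |∂(f)|, where f(L_1,…,L_n) ∈ F[x_1,…,x_m] is the polynomial obtained by substituting L_i for y_i in f. -/
/-- `|∂(f)|`, the dimension of the span of all iterated Hasse derivatives
`∂_{x^i}(f)`, `i ∈ ℕ^m`. -/
noncomputable def hasseDim {F : Type*} [Field F] {m : ℕ} (f : MvPolynomial (Fin m) F) : ℕ :=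
  Module.finrank F
    (Submodule.span F (Set.range fun i : Fin m → ℕ => multiHasseDeriv i f))


open MvPolynomial

noncomputable def hT {R : Type*} [CommRing R] {m : ℕ} (u : Fin m → R) :
    MvPolynomial (Fin m) R →ₐ[R] Polynomial (MvPolynomial (Fin m) R) :=
  MvPolynomial.aeval fun i : Fin m =>
      Polynomial.C (MvPolynomial.X i) + Polynomial.C (MvPolynomial.C (u i)) * Polynomial.X

lemma hasseDeriv_eq {R : Type*} [CommRing R] {m : ℕ} (u : Fin m → R) (k : ℕ)
    (f : MvPolynomial (Fin m) R) : hasseDeriv u k f = (hT u f).coeff k := rfl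

lemma hasseDerivAt_eq {R : Type*} [CommRing R] {m : ℕ} (j : Fin m) (k : ℕ)
    (f : MvPolynomial (Fin m) R) :
    hasseDerivAt j k f = (hT (Pi.single j (1:R)) f).coeff k := rfl

section
variable {F : Type*} [Field F] {m n : ℕ}

/-- The Hasse derivative as a linear map. -/
noncomputable def hLin (j : Fin m) (k : ℕ) :
    MvPolynomial (Fin m) F →ₗ[F] MvPolynomial (Fin m) F where
  toFun := hasseDerivAt j k
  map_add' := by intro a b; simp [hasseDerivAt_eq]
  map_smul' := by intro a b; simp [hasseDerivAt_eq]

lemma hLin_apply (j : Fin m) (k : ℕ) (f : MvPolynomial (Fin m) F) :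
    hLin j k f = hasseDerivAt j k f := rfl

lemma hLin_monomial (j : Fin m) (k : ℕ) (s : Fin m →₀ ℕ) (c : F) :
    hLin j k (monomial s c) =
      monomial (s - Finsupp.single j k) (c * ((s j).choose k : F)) := by
  rw [hLin_apply, hasseDerivAt_eq, hT, aeval_monomial]
  have h1 : (s.prod fun i e => ((Polynomial.C (X i : MvPolynomial (Fin m) F) +
      Polynomial.C (C ((Pi.single j (1:F) : Fin m → F) i)) * Polynomial.X) ^ e)) =
      Polynomial.C (monomial (s.erase j) (1:F)) *
        (Polynomial.X + Polynomial.C (X j : MvPolynomial (Fin m) F)) ^ (s j) := by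
    rw [← Finsupp.mul_prod_erase' s j _ (by simp), mul_comm]
    congr 1
    · rw [monomial_eq, C_1, one_mul, Finsupp.prod, Finsupp.prod, map_prod]
      refine Finset.prod_congr rfl fun i hi => ?_
      have : i ≠ j := by
        rintro rfl; simp at hi
      simp [Pi.single_eq_of_ne this]
    · simp [add_comm]
  rw [h1, IsScalarTower.algebraMap_apply F (MvPolynomial (Fin m) F), ← Polynomial.C_eq_algebraMap,
    Polynomial.coeff_C_mul, Polynomial.coeff_C_mul, Polynomial.coeff_X_add_C_pow,
    MvPolynomial.algebraMap_eq]
  by_cases hk : s j < k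
  · simp [Nat.choose_eq_zero_of_lt hk]
  have h2 : s - Finsupp.single j k = s.erase j + Finsupp.single j (s j - k) := by
    ext i
    by_cases h : i = j
    · subst h; simp
    · simp [h, Finsupp.single_apply, Ne.symm h]
  rw [h2, X_pow_eq_monomial, ← C_eq_coe_nat, ← mul_assoc, ← mul_assoc, C_mul_monomial,
    monomial_mul, mul_comm, C_mul_monomial]
  congr 1; ring

lemma hLin_comm (j j' : Fin m) (k k' : ℕ) (h : j ≠ j') (f : MvPolynomial (Fin m) F) :
    hLin j k (hLin j' k' f) = hLin j' k' (hLin j k f) := by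
  induction f using MvPolynomial.induction_on' with
  | add p q hp hq => simp only [map_add, hp, hq]
  | monomial s c =>
    simp only [hLin_monomial]
    congr 1
    · rw [tsub_right_comm]
    · simp [h, h.symm, Finsupp.single_apply]; ring

lemma hLin_comp (j : Fin m) (k l : ℕ) (f : MvPolynomial (Fin m) F) :
    hLin j k (hLin j l f) = ((l + k).choose l : F) • hLin j (l + k) f := by
  induction f using MvPolynomial.induction_on' with
  | add p q hp hq => simp only [map_add, hp, hq, smul_add]
  | monomial s c =>
    simp only [hLin_monomial, smul_monomial]
    congr 1
    · rw [tsub_tsub, Finsupp.single_add]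
    · simp only [Finsupp.coe_tsub, Pi.sub_apply, Finsupp.single_eq_same, smul_eq_mul]
      have : (s j).choose l * (s j - l).choose k = (l + k).choose l * (s j).choose (l + k) := by
        have := Nat.choose_mul (n := s j) (Nat.le_add_right l k)
        rw [Nat.add_sub_cancel_left] at this
        rw [← this, mul_comm]
      have h' := congrArg (Nat.cast (R := F)) this
      push_cast at h'
      rw [mul_assoc, h']; ring

lemma multi_eq (i : Fin m → ℕ) (f : MvPolynomial (Fin m) F) :
    multiHasseDeriv i f = List.foldr (fun j g => hLin j (i j) g) f (List.finRange m) := rfl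

lemma foldr_congr' (l : List (Fin m)) (i i' : Fin m → ℕ) (h : ∀ j ∈ l, i j = i' j)
    (f : MvPolynomial (Fin m) F) :
    List.foldr (fun j g => hLin j (i j) g) f l = List.foldr (fun j g => hLin j (i' j) g) f l := by
  induction l with
  | nil => rfl
  | cons a l ih =>
    simp only [List.foldr_cons]
    rw [ih (fun j hj => h j (by simp [hj])), h a (by simp)]

lemma hLin_foldr (l : List (Fin m)) (hl : l.Nodup) (j : Fin m) (hj : j ∈ l) (k : ℕ)
    (i : Fin m → ℕ) (f : MvPolynomial (Fin m) F) :
    hLin j k (List.foldr (fun j g => hLin j (i j) g) f l) =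
      ((i j + k).choose (i j) : F) •
      List.foldr (fun j' g => hLin j' (Function.update i j (i j + k) j') g) f l := by
  induction l with
  | nil => simp at hj
  | cons a l ih =>
    simp only [List.foldr_cons]
    rw [List.nodup_cons] at hl
    by_cases h : j = a
    · subst h
      rw [hLin_comp, Function.update_self]
      congr 2
      refine foldr_congr' _ _ _ (fun b hb => ?_) f
      rw [Function.update_of_ne]
      rintro rfl; exact hl.1 hb
    · rw [hLin_comm _ _ _ _ h, ih hl.2 (by simpa [h] using hj), map_smul,
        Function.update_of_ne (Ne.symm h)]

/-- Span of the Hasse derivatives. -/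
noncomputable def hV (f : MvPolynomial (Fin m) F) : Submodule F (MvPolynomial (Fin m) F) :=
  Submodule.span F (Set.range fun i : Fin m → ℕ => multiHasseDeriv i f)

lemma hV_closed (f : MvPolynomial (Fin m) F) (j : Fin m) (k : ℕ) (g) (hg : g ∈ hV f) :
    hLin j k g ∈ hV f := by
  have : hV f ≤ (hV f).comap (hLin j k) := by
    conv_lhs => rw [hV]
    rw [Submodule.span_le]
    rintro _ ⟨i, rfl⟩
    simp only [Submodule.comap_coe, Set.mem_preimage, SetLike.mem_coe]
    rw [multi_eq, hLin_foldr _ (List.nodup_finRange m) j (List.mem_finRange j), ← multi_eq]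
    exact Submodule.smul_mem _ _ (Submodule.subset_span ⟨_, rfl⟩)
  exact this hg

lemma multi_mem (W : Submodule F (MvPolynomial (Fin m) F))
    (hW : ∀ j k, ∀ g ∈ W, hLin j k g ∈ W) (f) (hf : f ∈ W) (i) : multiHasseDeriv i f ∈ W := by
  rw [multi_eq]
  induction List.finRange m with
  | nil => exact hf
  | cons a l ih => exact hW _ _ _ ih

lemma hT_zero (f : MvPolynomial (Fin m) F) : hT (0 : Fin m → F) f = Polynomial.C f := by
  induction f using MvPolynomial.induction_on with
  | C a => simp [hT]
  | add p q hp hq => simp only [map_add, hp, hq]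
  | mul_X p i hp =>
    rw [map_mul, map_mul, hp]
    simp [hT]

lemma hLin_zero (a : Fin m) (f : MvPolynomial (Fin m) F) : hLin a 0 f = f := by
  induction f using MvPolynomial.induction_on' with
  | add p q hp hq => simp only [map_add, hp, hq]
  | monomial s c => simp [hLin_monomial]

lemma mem_self (f : MvPolynomial (Fin m) F) : f ∈ hV f := by
  refine Submodule.subset_span ⟨0, ?_⟩
  simp only [multi_eq]
  induction List.finRange m with
  | nil => rfl
  | cons a l ih =>
    rw [List.foldr_cons, ih]
    exact hLin_zero a f

lemma hT_add (u v : Fin m → F) (f : MvPolynomial (Fin m) F) :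
    hT (u + v) f = (hT v f).eval₂ (hT u).toRingHom Polynomial.X := by
  induction f using MvPolynomial.induction_on with
  | C a => simp [hT, ← MvPolynomial.algebraMap_eq, IsScalarTower.algebraMap_apply F (MvPolynomial (Fin m) F) (Polynomial (MvPolynomial (Fin m) F)), ← Polynomial.C_eq_algebraMap, -Polynomial.algebraMap_apply]
  | add p q hp hq => simp only [map_add, hp, hq, Polynomial.eval₂_add]
  | mul_X p i hp =>
    rw [map_mul, map_mul, Polynomial.eval₂_mul, hp]
    congr 1
    simp [hT]
    ring

lemma hT_smul (c : F) (u : Fin m → F) (f : MvPolynomial (Fin m) F) :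
    hT (c • u) f = (hT u f).comp (Polynomial.C (C c) * Polynomial.X) := by
  induction f using MvPolynomial.induction_on with
  | C a => simp [hT]
  | add p q hp hq => simp only [map_add, hp, hq, Polynomial.add_comp]
  | mul_X p i hp =>
    rw [map_mul, map_mul, Polynomial.mul_comp, hp]
    congr 1
    simp [hT]
    ring

lemma closed_dir (W : Submodule F (MvPolynomial (Fin m) F))
    (hW : ∀ j k, ∀ g ∈ W, hLin j k g ∈ W) (u : Fin m → F) :
    ∀ k, ∀ g ∈ W, (hT u g).coeff k ∈ W := by
  have hu : u = ∑ j, u j • (Pi.single j (1:F) : Fin m → F) := pi_eq_sum_univ' u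
  rw [hu]
  apply Finset.sum_induction _ (fun u : Fin m → F => ∀ k, ∀ g ∈ W, (hT u g).coeff k ∈ W)
  · intro u v hu hv k g hg
    rw [hT_add, Polynomial.eval₂_eq_sum, Polynomial.sum, Polynomial.finsetSum_coeff]
    refine Submodule.sum_mem _ fun b _ => ?_
    rw [Polynomial.coeff_mul_X_pow']
    split_ifs
    · exact hu _ _ (hv _ _ hg)
    · exact W.zero_mem
  · intro k g hg
    rw [hT_zero, Polynomial.coeff_C]
    split_ifs
    · exact hg
    · exact W.zero_mem
  · intro j _ k g hg
    rw [hT_smul, Polynomial.comp_C_mul_X_coeff, mul_comm, ← C_pow, ← smul_eq_C_mul]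
    exact W.smul_mem _ (hW j k g hg)

lemma hT_affine (e : Fin m → F) (j : Fin m) (he : e = Pi.single j 1)
    (p : MvPolynomial (Fin m) F) (hp : p.totalDegree ≤ 1) :
    hT e p = Polynomial.C p + Polynomial.C (C (coeff (Finsupp.single j 1) p)) * Polynomial.X := by
  have key : ∀ s : Fin m →₀ ℕ, s.degree ≤ 1 → ∀ c : F, hT e (monomial s c) =
      Polynomial.C (monomial s c) +
      Polynomial.C (C (coeff (Finsupp.single j 1) (monomial s c))) * Polynomial.X := by
    intro s hs c
    have h01 : s = 0 ∨ ∃ i, s = Finsupp.single i 1 := by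
      rcases Nat.le_one_iff_eq_zero_or_eq_one.mp hs with h | h
      · exact Or.inl ((Finsupp.degree_eq_zero_iff s).mp h)
      · right
        have hne : s ≠ 0 := by rintro rfl; simp at h
        obtain ⟨i, hi⟩ := Finsupp.ne_iff.mp hne
        rw [Finsupp.zero_apply] at hi
        refine ⟨i, ?_⟩
        have hle : Finsupp.single i 1 ≤ s := by
          rw [Finsupp.single_le_iff]; omega
        have h3 : s = Finsupp.single i 1 + (s - Finsupp.single i 1) :=
          (add_tsub_cancel_of_le hle).symm
        have h4 := congrArg Finsupp.degree h3
        rw [map_add, h, Finsupp.degree_single] at h4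
        have h5 : (s - Finsupp.single i 1).degree = 0 := by omega
        rw [(Finsupp.degree_eq_zero_iff _).mp h5, add_zero] at h3
        exact h3
    subst he
    rcases h01 with rfl | ⟨i, rfl⟩
    · simp [hT, coeff_C, ← C_apply, IsScalarTower.algebraMap_apply F (MvPolynomial (Fin m) F)
        (Polynomial (MvPolynomial (Fin m) F)), Finsupp.single_eq_zero, eq_comm]
    · have : (monomial (Finsupp.single i 1) c : MvPolynomial (Fin m) F) = c • X i := by
        rw [X, smul_monomial, smul_eq_mul, mul_one]
      rw [this, map_smul]
      by_cases h : i = j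
      · subst h
        simp [hT, smul_eq_C_mul, Algebra.smul_def, IsScalarTower.algebraMap_apply F (MvPolynomial (Fin m) F)
          (Polynomial (MvPolynomial (Fin m) F)), mul_add]
      · simp [hT, h, coeff_X, Finsupp.single_left_inj, Algebra.smul_def, IsScalarTower.algebraMap_apply F (MvPolynomial (Fin m) F)
          (Polynomial (MvPolynomial (Fin m) F))]
  have h1 : ∀ q : MvPolynomial (Fin m) F, q = ∑ s ∈ q.support, monomial s (coeff s q) := as_sum
  rw [h1 p]
  simp only [map_sum, coeff_sum, Finset.sum_mul]
  rw [← Finset.sum_add_distrib]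
  refine Finset.sum_congr rfl fun s hs => key s ?_ _
  exact (le_totalDegree hs).trans hp

lemma hT_aeval (e : Fin m → F) (j : Fin m) (he : e = Pi.single j 1)
    (L : Fin n → MvPolynomial (Fin m) F) (hL : ∀ i, (L i).totalDegree ≤ 1)
    (f : MvPolynomial (Fin n) F) :
    hT e (aeval L f) =
      (hT (fun i => coeff (Finsupp.single j 1) (L i)) f).map (aeval L).toRingHom := by
  induction f using MvPolynomial.induction_on with
  | C a => simp [hT]
  | add p q hp hq => simp only [map_add, hp, hq, Polynomial.map_add]
  | mul_X p i hp =>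
    rw [map_mul, map_mul, map_mul, Polynomial.map_mul, hp]
    have h1 : hT e (aeval L (X i : MvPolynomial (Fin n) F)) =
        (hT (fun i => coeff (Finsupp.single j 1) (L i)) (X i)).map (aeval L).toRingHom := by
      rw [aeval_X, hT_affine e j he _ (hL i)]
      simp [hT]
    rw [h1]

lemma hV_fin (f : MvPolynomial (Fin m) F) : Module.Finite F (hV f) := by
  have : hV f ≤ restrictTotalDegree (Fin m) F f.totalDegree := by
    rw [hV, Submodule.span_le]
    rintro _ ⟨i, rfl⟩
    refine multi_mem _ ?_ f ((mem_restrictTotalDegree _ _ _).2 le_rfl) i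
    intro j k g hg
    rw [mem_restrictTotalDegree] at hg
    rw [as_sum g, map_sum]
    refine Submodule.sum_mem _ fun s hs => ?_
    rw [hLin_monomial, mem_restrictTotalDegree]
    refine (totalDegree_monomial_le _ _).trans (le_trans ?_ ((le_totalDegree hs).trans hg))
    exact Finsupp.degree_mono (tsub_le_self : s - Finsupp.single j k ≤ s)
  exact Submodule.finiteDimensional_of_le this

end

/-- Substituting affine forms (total degree ≤ 1) into `f` does not
increase the dimension of Hasse derivatives: `|∂(f(L_1,…,L_n))| ≤ |∂(f)|`. -/
theorem hasseDim_aeval_affine_le {F : Type*} [Field F] {n m : ℕ}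
    (f : MvPolynomial (Fin n) F) (L : Fin n → MvPolynomial (Fin m) F)
    (hL : ∀ i, (L i).totalDegree ≤ 1) :
    hasseDim (MvPolynomial.aeval L f) ≤ hasseDim f := by
  have := hV_fin f
  have hle : hV (MvPolynomial.aeval L f) ≤ (hV f).map (MvPolynomial.aeval L).toLinearMap := by
    rw [hV, Submodule.span_le]
    rintro _ ⟨i, rfl⟩
    refine multi_mem ((hV f).map (MvPolynomial.aeval L).toLinearMap) ?_ _
      ⟨f, mem_self f, rfl⟩ i
    rintro j k _ ⟨g, hg, rfl⟩
    rw [hLin_apply, hasseDerivAt_eq]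
    refine ⟨_, closed_dir (hV f) (hV_closed f) (fun i => coeff (Finsupp.single j 1) (L i)) k g hg, ?_⟩
    have := hT_aeval _ j rfl L hL g
    simp only [AlgHom.toLinearMap_apply] at *
    rw [this, Polynomial.coeff_map]
    rfl
  calc Module.finrank F (hV (MvPolynomial.aeval L f))
      ≤ Module.finrank F ((hV f).map (MvPolynomial.aeval L).toLinearMap) :=
        Submodule.finrank_mono hle
    _ ≤ Module.finrank F (hV f) := Submodule.finrank_map_le _ _
end

section
/- Let F be a field and let f = Σ_{ℓ=1}^{s} ∏_{j=1}^{n} L_{ℓ,j}^{e_{ℓ,j}} ∈ F[x_1,…,x_m], where each L_{ℓ,j} ∈ F[x_1,…,x_m] has total degree at most 1 and each e_ℓ = (e_{ℓ,1},…,e_{ℓ,n}) ∈ ℕ^n (f is a depth-3 diagonal circuit). Then |∂(f)| ≤ Σ_{ℓ=1}^{s} ∏_{j=1}^{n} (e_{ℓ,j} + 1). -/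
noncomputable def shiftHom {R : Type*} [CommRing R] {m : ℕ} (u : Fin m → R) :
    MvPolynomial (Fin m) R →ₐ[R] Polynomial (MvPolynomial (Fin m) R) :=
  MvPolynomial.aeval fun i : Fin m =>
      Polynomial.C (MvPolynomial.X i) + Polynomial.C (MvPolynomial.C (u i)) * Polynomial.X

lemma shiftHom_affine {F : Type*} [Field F] {m : ℕ} (u : Fin m → F)
    (L : MvPolynomial (Fin m) F) (hL : L.totalDegree ≤ 1) :
    ∃ c : F, shiftHom u L = Polynomial.C L + Polynomial.C (MvPolynomial.C c) * Polynomial.X := by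
  suffices H : ∀ S : Finset (Fin m →₀ ℕ), S ⊆ L.support → ∃ c : F,
      shiftHom u (∑ d ∈ S, MvPolynomial.monomial d (L.coeff d)) =
      Polynomial.C (∑ d ∈ S, MvPolynomial.monomial d (L.coeff d))
        + Polynomial.C (MvPolynomial.C c) * Polynomial.X by
    have := H L.support subset_rfl
    rwa [← MvPolynomial.as_sum] at this
  intro S
  induction S using Finset.induction_on with
  | empty => intro _; exact ⟨0, by simp⟩
  | insert d S hd ih =>
    intro hS
    obtain ⟨c, hc⟩ := ih (fun x hx => hS (Finset.mem_insert_of_mem hx))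
    have h1 : d.degree ≤ 1 :=
      le_trans (MvPolynomial.le_totalDegree (hS (Finset.mem_insert_self d S))) hL
    rw [Finset.sum_insert hd, map_add, map_add, hc]
    have key : ∃ c' : F, shiftHom u (MvPolynomial.monomial d (L.coeff d)) =
        Polynomial.C (MvPolynomial.monomial d (L.coeff d))
        + Polynomial.C (MvPolynomial.C c') * Polynomial.X := by
      generalize L.coeff d = a
      rcases Nat.le_one_iff_eq_zero_or_eq_one.mp h1 with h | h
      · rw [Finsupp.degree_eq_zero_iff] at h
        subst h
        refine ⟨0, ?_⟩
        simp [shiftHom, Polynomial.algebraMap_apply]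
      · obtain ⟨i, rfl⟩ := (Finsupp.sum_eq_one_iff d).mp h
        refine ⟨a * u i, ?_⟩
        have : MvPolynomial.monomial (Finsupp.single i 1) a
            = MvPolynomial.C a * (MvPolynomial.X i : MvPolynomial (Fin m) F) := by
          rw [MvPolynomial.C_mul_X_eq_monomial]
        rw [this]
        simp [shiftHom, Polynomial.algebraMap_apply]
        ring
    obtain ⟨c', hc'⟩ := key
    refine ⟨c' + c, ?_⟩
    rw [hc']
    simp only [map_add]
    ring

/-- index type of the spanning family -/
abbrev DIdx {s n : ℕ} (e : Fin s → Fin n → ℕ) := Σ ℓ : Fin s, (j : Fin n) → Fin (e ℓ j + 1)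

noncomputable def dfam {F : Type*} [Field F] {m s n : ℕ}
    (L : Fin s → Fin n → MvPolynomial (Fin m) F) (e : Fin s → Fin n → ℕ) (p : DIdx e) :
    MvPolynomial (Fin m) F := ∏ j, L p.1 j ^ (p.2 j : ℕ)

lemma hasse_dfam {F : Type*} [Field F] {m s n : ℕ}
    (L : Fin s → Fin n → MvPolynomial (Fin m) F)
    (hL : ∀ ℓ j, (L ℓ j).totalDegree ≤ 1) (e : Fin s → Fin n → ℕ)
    (u : Fin m → F) (k : ℕ) (p : DIdx e) :
    (shiftHom u (dfam L e p)).coeff k ∈ Submodule.span F (Set.range (dfam L e)) := by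
  choose c hc using fun j => shiftHom_affine u (L p.1 j) (hL p.1 j)
  have h1 : shiftHom u (dfam L e p) = ∏ j, ∑ t ∈ Finset.range ((p.2 j : ℕ) + 1),
      Polynomial.C (L p.1 j ^ t) * Polynomial.map MvPolynomial.C
        ((Polynomial.C (c j) * Polynomial.X) ^ ((p.2 j : ℕ) - t) *
          (((p.2 j : ℕ).choose t : ℕ) : Polynomial F)) := by
    rw [dfam, map_prod]
    refine Finset.prod_congr rfl fun j _ => ?_
    rw [map_pow, hc, add_pow]
    refine Finset.sum_congr rfl fun t _ => ?_
    simp [mul_assoc]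
  rw [h1, Finset.prod_univ_sum, Polynomial.finsetSum_coeff]
  refine Submodule.sum_mem _ fun t ht => ?_
  rw [Fintype.mem_piFinset] at ht
  rw [Finset.prod_mul_distrib, ← Polynomial.map_prod, ← map_prod, Polynomial.coeff_C_mul,
    Polynomial.coeff_map, mul_comm, ← MvPolynomial.smul_eq_C_mul]
  refine Submodule.smul_mem _ _ (Submodule.subset_span ⟨⟨p.1, fun j => ⟨t j, ?_⟩⟩, rfl⟩)
  have h2 := Finset.mem_range.mp (ht j)
  have h3 := (p.2 j).2
  omega

lemma hasse_mem {F : Type*} [Field F] {m s n : ℕ}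
    (L : Fin s → Fin n → MvPolynomial (Fin m) F)
    (hL : ∀ ℓ j, (L ℓ j).totalDegree ≤ 1) (e : Fin s → Fin n → ℕ)
    (u : Fin m → F) (k : ℕ) (f : MvPolynomial (Fin m) F)
    (hf : f ∈ Submodule.span F (Set.range (dfam L e))) :
    hasseDeriv u k f ∈ Submodule.span F (Set.range (dfam L e)) := by
  change (shiftHom u f).coeff k ∈ _
  induction hf using Submodule.span_induction with
  | mem x hx => obtain ⟨p, rfl⟩ := hx; exact hasse_dfam L hL e u k p
  | zero => simp
  | add x y _ _ hx hy => rw [map_add, Polynomial.coeff_add]; exact Submodule.add_mem _ hx hy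
  | smul a x _ hx => rw [map_smul, Polynomial.coeff_smul]; exact Submodule.smul_mem _ _ hx

/-- For a depth-3 diagonal circuit
`f = Σ_{ℓ=1}^{s} ∏_{j=1}^{n} L_{ℓ,j}^{e_{ℓ,j}}` with each `L_{ℓ,j}` of total degree ≤ 1,
`|∂(f)| ≤ Σ_ℓ ∏_j (e_{ℓ,j} + 1)`. -/
theorem hasseDim_diagonal_le {F : Type*} [Field F] {m : ℕ} (s n : ℕ)
    (L : Fin s → Fin n → MvPolynomial (Fin m) F)
    (hL : ∀ ℓ j, (L ℓ j).totalDegree ≤ 1)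
    (e : Fin s → Fin n → ℕ) :
    hasseDim (∑ ℓ : Fin s, ∏ j : Fin n, L ℓ j ^ e ℓ j) ≤
      ∑ ℓ : Fin s, ∏ j : Fin n, (e ℓ j + 1) := by
  have hspan : Submodule.span F (Set.range fun i : Fin m → ℕ =>
      multiHasseDeriv i (∑ ℓ : Fin s, ∏ j : Fin n, L ℓ j ^ e ℓ j)) ≤
      Submodule.span F (Set.range (dfam L e)) := by
    rw [Submodule.span_le]
    rintro _ ⟨i, rfl⟩
    change multiHasseDeriv i _ ∈ Submodule.span F (Set.range (dfam L e))
    rw [multiHasseDeriv]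
    induction List.finRange m with
    | nil =>
      refine Submodule.sum_mem _ fun ℓ _ => Submodule.subset_span
        ⟨⟨ℓ, fun j => Fin.last _⟩, ?_⟩
      simp [dfam]
    | cons a l ih => exact hasse_mem L hL e _ _ _ ih
  have : Module.Finite F (Submodule.span F (Set.range (dfam L e))) :=
    Module.Finite.span_of_finite F (Set.finite_range _)
  calc hasseDim _ ≤ Module.finrank F (Submodule.span F (Set.range (dfam L e))) :=
        Submodule.finrank_mono hspan
    _ ≤ Fintype.card (DIdx e) := finrank_range_le_card _
    _ = _ := by simp [DIdx]
end

section
/- Let F be a field, ≺ a monomial ordering on the monomials of F[x_1,…,x_n], and f ∈ F[x_1,…,x_n] a nonzero polynomial. Let x^i be the ≺-largest monomial appearing with a nonzero coefficient in f. Then 2^{|supp(i)|} ≤ |∂(f)|, where supp(i) := {ℓ ∈ {1,…,n} : i_ℓ ≠ 0}; equivalently, the number of variables appearing in the leading monomial of f is at most log₂ |∂(f)|. -/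
open MvPolynomial in
theorem aux_coeff_hasseDerivAt {R : Type*} [CommRing R] {m : ℕ} (j : Fin m) (k : ℕ)
    (f : MvPolynomial (Fin m) R) (b : Fin m →₀ ℕ) :
    coeff b (hasseDerivAt j k f) =
      ((b j + k).choose k : R) * coeff (b + Finsupp.single j k) f := by
  induction f using MvPolynomial.induction_on' with
  | monomial s c =>
    have key : hasseDerivAt j k (monomial s c) =
        monomial (s - Finsupp.single j k) (c * ((s j).choose k : R)) := by
      have hprod : (MvPolynomial.aeval fun i : Fin m =>
          Polynomial.C (MvPolynomial.X i : MvPolynomial (Fin m) R) +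
          Polynomial.C (MvPolynomial.C ((Pi.single j (1:R) : Fin m → R) i)) * Polynomial.X)
          (monomial s c) =
          Polynomial.C (C c * ∏ i ∈ Finset.univ.erase j, X i ^ s i) *
            (Polynomial.X + Polynomial.C (X j)) ^ (s j) := by
        rw [aeval_monomial, Finsupp.prod_fintype _ _ (by simp)]
        rw [← Finset.mul_prod_erase _ _ (Finset.mem_univ j)]
        have : ∀ i ∈ Finset.univ.erase j,
          (Polynomial.C (MvPolynomial.X i : MvPolynomial (Fin m) R) +
          Polynomial.C (MvPolynomial.C ((Pi.single j (1:R) : Fin m → R) i)) * Polynomial.X) ^ s i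
          = Polynomial.C (X i ^ s i) := by
          intro i hi
          rw [Pi.single_eq_of_ne (Finset.ne_of_mem_erase hi)]
          simp
        rw [Finset.prod_congr rfl this]
        have h2 : (algebraMap R (Polynomial (MvPolynomial (Fin m) R))) c
          = Polynomial.C (C c) := rfl
        rw [h2]
        simp only [Pi.single_eq_same, map_one, one_mul, map_mul, map_prod]
        ring
      unfold hasseDerivAt hasseDeriv
      rw [hprod, Polynomial.coeff_C_mul, Polynomial.coeff_X_add_C_pow]
      rw [monomial_eq, Finsupp.prod_fintype _ _ (by simp),
        ← Finset.mul_prod_erase _ _ (Finset.mem_univ j)]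
      have : ∀ i ∈ Finset.univ.erase j,
          (X i : MvPolynomial (Fin m) R) ^ (s - Finsupp.single j k) i = X i ^ s i := by
        intro i hi
        have := Finset.ne_of_mem_erase hi
        simp [this.symm, Finsupp.single_apply]
      rw [Finset.prod_congr rfl this]
      simp only [Finsupp.coe_tsub, Pi.sub_apply, Finsupp.single_eq_same, map_mul, map_natCast]
      ring
    rw [key, coeff_monomial, coeff_monomial]
    by_cases h : s = b + Finsupp.single j k
    · subst h
      simp [mul_comm]
    · rw [if_neg h]
      split_ifs with h2
      · have : s j < k := by
          by_contra hk
          apply h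
          rw [← h2]
          ext i
          by_cases hij : j = i
          · subst hij; simp; omega
          · simp [Finsupp.single_apply, hij]
        simp [Nat.choose_eq_zero_of_lt this]
      · simp
  | add p q hp hq =>
    have : hasseDerivAt j k (p + q) = hasseDerivAt j k p + hasseDerivAt j k q := by
      simp [hasseDerivAt, hasseDeriv]
    rw [this, coeff_add, hp, hq, coeff_add]
    ring

open MvPolynomial in
theorem aux_foldr {R : Type*} [CommRing R] {m : ℕ} (i : Fin m → ℕ)
    (f : MvPolynomial (Fin m) R) (l : List (Fin m)) (hl : l.Nodup) (b : Fin m →₀ ℕ) :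
    coeff b (List.foldr (fun j g => hasseDerivAt j (i j) g) f l) =
      (l.map fun j => ((b j + i j).choose (i j) : R)).prod *
        coeff (b + (l.map fun j => Finsupp.single j (i j)).sum) f := by
  induction l generalizing b with
  | nil => simp
  | cons j l ih =>
    rw [List.nodup_cons] at hl
    rw [List.foldr_cons, aux_coeff_hasseDerivAt, ih hl.2]
    have : l.map (fun p => (((b + Finsupp.single j (i j)) p + i p).choose (i p) : R)) =
        l.map (fun p => ((b p + i p).choose (i p) : R)) := by
      apply List.map_congr_left
      intro p hp
      have : j ≠ p := fun h => hl.1 (h ▸ hp)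
      simp [Finsupp.single_apply, this]
    rw [this, List.map_cons, List.prod_cons, List.map_cons, List.sum_cons, mul_assoc, add_assoc]

open MvPolynomial in
theorem aux_coeff_multi {R : Type*} [CommRing R] {m : ℕ} (a b : Fin m → ℕ)
    (f : MvPolynomial (Fin m) R) :
    coeff (Finsupp.equivFunOnFinite.symm b) (multiHasseDeriv a f) =
      (∏ j, ((b j + a j).choose (a j) : R)) *
        coeff (Finsupp.equivFunOnFinite.symm (b + a)) f := by
  unfold multiHasseDeriv
  rw [aux_foldr _ _ _ (List.nodup_finRange m), ← List.ofFn_eq_map, ← List.ofFn_eq_map,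
    List.prod_ofFn, List.sum_ofFn]
  congr 3
  ext p
  simp [Finsupp.finset_sum_apply, Finsupp.single_apply]

/-- Let `≺` be a monomial ordering and `f ≠ 0` with ≺-largest monomial
`x^i` (every other monomial of `f` is ≺-smaller).  Then `2^{|supp(i)|} ≤ |∂(f)|`, where
`supp(i)` is the set of variables appearing in `x^i`. -/
theorem two_pow_support_leading_le_hasseDim {F : Type*} [Field F] {n : ℕ}
    (lt : (Fin n → ℕ) → (Fin n → ℕ) → Prop)
    (h_total : ∀ a b, a ≠ b → lt a b ∨ lt b a)
    (h_irrefl : ∀ a, ¬ lt a a)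
    (h_trans : ∀ a b c, lt a b → lt b c → lt a c)
    (h_one : ∀ a, a ≠ 0 → lt 0 a)
    (h_mul : ∀ a b c, lt a b → lt (a + c) (b + c))
    (f : MvPolynomial (Fin n) F) (hf : f ≠ 0) (i : Fin n → ℕ)
    (hi : MvPolynomial.coeff (Finsupp.equivFunOnFinite.symm i) f ≠ 0)
    (hmax : ∀ j : Fin n → ℕ,
      MvPolynomial.coeff (Finsupp.equivFunOnFinite.symm j) f ≠ 0 → j ≠ i → lt j i) :
    2 ^ Set.ncard {ℓ : Fin n | i ℓ ≠ 0} ≤ hasseDim f := by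
  classical
  set σ : (Fin n → ℕ) → (Fin n →₀ ℕ) := fun a => Finsupp.equivFunOnFinite.symm a with hσ
  -- finiteness
  have hfin : (Set.range fun a : Fin n → ℕ => multiHasseDeriv a f).Finite := by
    have hA : (⋃ s ∈ f.support, Set.Iic (s : Fin n → ℕ)).Finite :=
      Set.Finite.biUnion (Finset.finite_toSet _) fun s _ => Set.finite_Iic _
    refine ((hA.image fun a => multiHasseDeriv a f).union (Set.finite_singleton 0)).subset ?_
    rintro _ ⟨a, rfl⟩
    by_cases h0 : multiHasseDeriv a f = 0
    · right; exact h0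
    · left
      refine ⟨a, ?_, rfl⟩
      obtain ⟨b, hb⟩ := MvPolynomial.ne_zero_iff.1 h0
      have hb2 := aux_coeff_multi a (b : Fin n → ℕ) f
      rw [show Finsupp.equivFunOnFinite.symm (b : Fin n → ℕ) = b by ext; simp] at hb2
      rw [hb2] at hb
      have hb3 := right_ne_zero_of_mul hb
      simp only [Set.mem_iUnion]
      refine ⟨_, MvPolynomial.mem_support_iff.2 hb3, ?_⟩
      intro p
      simp
  have : Module.Finite F (Submodule.span F (Set.range fun a : Fin n → ℕ => multiHasseDeriv a f)) :=
    Module.Finite.span_of_finite F hfin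
  have hcancel : ∀ a b c, lt (a + c) (b + c) → lt a b := by
    intro a b c h
    by_cases hab : a = b
    · subst hab; exact absurd h (h_irrefl _)
    · rcases h_total a b hab with h1 | h1
      · exact h1
      · exact absurd (h_trans _ _ _ h (h_mul _ _ c h1)) (h_irrefl _)
  set Z : Finset (Fin n) := Finset.univ.filter fun l => i l ≠ 0 with hZ
  have hcard : Set.ncard {ℓ : Fin n | i ℓ ≠ 0} = Z.card := by
    rw [← Set.ncard_coe_finset]; congr; ext; simp [hZ]
  rw [hcard, ← Finset.card_powerset, ← Fintype.card_coe]
  let A : Z.powerset → Fin n → ℕ := fun S l => if l ∈ S.1 then i l else 0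
  let B : Z.powerset → Fin n → ℕ := fun S l => if l ∈ S.1 then 0 else i l
  have hAB : ∀ S, B S + A S = i := by
    intro S; ext l; simp only [A, B, Pi.add_apply]; split_ifs <;> simp
  have hBinj : Function.Injective B := by
    intro S T h
    apply Subtype.ext
    ext l
    have hS := Finset.mem_powerset.1 S.2
    have hT := Finset.mem_powerset.1 T.2
    have hl := congrFun h l
    simp only [B] at hl
    constructor
    · intro hh
      have : i l ≠ 0 := by simpa [hZ] using hS hh
      by_contra hh2
      simp only [hh, hh2, if_true, if_false] at hl
      exact this hl.symm
    · intro hh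
      have : i l ≠ 0 := by simpa [hZ] using hT hh
      by_contra hh2
      simp only [hh, hh2, if_true, if_false] at hl
      exact this hl
  have hdiag : ∀ S, MvPolynomial.coeff (σ (B S)) (multiHasseDeriv (A S) f) ≠ 0 := by
    intro S
    rw [hσ, aux_coeff_multi, hAB]
    rw [Finset.prod_eq_one, one_mul]
    · exact hi
    · intro l _
      simp only [A, B]; split_ifs <;> simp
  have hoff : ∀ S T, S ≠ T → MvPolynomial.coeff (σ (B T)) (multiHasseDeriv (A S) f) ≠ 0 →
      lt (B T) (B S) := by
    intro S T hST h
    rw [hσ, aux_coeff_multi] at h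
    apply hcancel _ _ (A S)
    rw [hAB]
    apply hmax _ (right_ne_zero_of_mul h)
    intro h2
    rw [← hAB S] at h2
    exact hST (hBinj (add_right_cancel h2)).symm
  have hli : LinearIndependent F (fun S => (⟨multiHasseDeriv (A S) f,
      Submodule.subset_span ⟨A S, rfl⟩⟩ :
      Submodule.span F (Set.range fun a : Fin n → ℕ => multiHasseDeriv a f))) := by
    apply LinearIndependent.of_comp (Submodule.subtype _)
    rw [Fintype.linearIndependent_iff]
    intro g hg
    by_contra! hne
    obtain ⟨S0, hS0⟩ := hne
    -- maximal element
    let r : Z.powerset → Z.powerset → Prop := fun S T => lt (B T) (B S)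
    have : IsTrans _ r := ⟨fun a b c h1 h2 => h_trans _ _ _ h2 h1⟩
    have : Std.Irrefl r := ⟨fun a => h_irrefl _⟩
    have wf : WellFounded r := Finite.wellFounded_of_trans_of_irrefl r
    obtain ⟨M, hM, hmin⟩ := wf.has_min {S | g S ≠ 0} ⟨S0, hS0⟩
    have h := congrArg (MvPolynomial.coeff (σ (B M))) hg
    simp only [Function.comp, Submodule.subtype_apply, MvPolynomial.coeff_sum,
      MvPolynomial.coeff_smul, MvPolynomial.coeff_zero] at h
    rw [Finset.sum_eq_single M] at h
    · exact mul_ne_zero hM (hdiag M) h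
    · intro S _ hSM
      by_contra h2
      exact hmin S (left_ne_zero_of_mul h2) (hoff S M hSM (right_ne_zero_of_mul h2))
    · simp
  exact hli.fintype_card_le_finrank
end

section
/- Let F be a field, d, m, n, s ≥ 1, and let S ⊆ F be a subset with 0 ∈ S and |S| = d + 1. Let f = Σ_{ℓ=1}^{s} ∏_{j=1}^{n'} L_{ℓ,j}^{e_{ℓ,j}} ∈ F[x_1,…,x_n] be a depth-3 diagonal circuit, where each L_{ℓ,j} ∈ F[x_1,…,x_n] has total degree at most 1 and each e_ℓ ∈ ℕ^{n'}, and suppose f has total degree at most d and Σ_{ℓ=1}^{s} ∏_{j=1}^{n'} (e_{ℓ,j} + 1) ≤ 2^m. If f ≠ 0, then there exists α ∈ S^n with |{i : α_i ≠ 0}| ≤ m such that f(α) ≠ 0. -/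
open MvPolynomial in
/-- The Taylor shift `f(x) ↦ f(x+y)`. -/
noncomputable def tayl {F : Type*} [Field F] (n : ℕ) :
    MvPolynomial (Fin n) F →ₐ[F] MvPolynomial (Fin n) (MvPolynomial (Fin n) F) :=
  aeval (fun i => C (X i) + X i)

open MvPolynomial in
lemma tayl_monomial {F : Type*} [Field F] (n : ℕ) (u b c : Fin n →₀ ℕ) (r : F) :
    coeff c (coeff b (tayl n (monomial u r))) =
      if b + c = u then r * ∏ i, ((u i).choose (c i) : F) else 0 := by
  have h1 : tayl n (monomial u r) = ∑ k ∈ Fintype.piFinset (fun i => Finset.range (u i + 1)),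
      monomial (u - Finsupp.equivFunOnFinite.symm k)
        (monomial (Finsupp.equivFunOnFinite.symm k) (r * ∏ i, ((u i).choose (k i) : F))) := by
    rw [tayl, aeval_monomial, Finsupp.prod_fintype _ _ (by simp)]
    simp_rw [add_pow]
    rw [Finset.prod_univ_sum, Finset.mul_sum]
    refine Finset.sum_congr rfl fun k hk => ?_
    rw [Finset.prod_mul_distrib, Finset.prod_mul_distrib]
    rw [monomial_eq (s := u - _), monomial_eq (s := Finsupp.equivFunOnFinite.symm k),
      Finsupp.prod_fintype _ _ (by simp), Finsupp.prod_fintype _ _ (by simp)]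
    simp only [map_mul, map_prod, map_pow, map_natCast, Finsupp.coe_tsub, Pi.sub_apply,
      Finsupp.equivFunOnFinite_symm_apply_apply, MvPolynomial.algebraMap_apply,
      algebraMap_eq]
    ring
  rw [h1, coeff_sum, coeff_sum]
  simp_rw [coeff_monomial]
  split_ifs with h
  · rw [Finset.sum_eq_single (c : Fin n → ℕ)]
    · have e1 : Finsupp.equivFunOnFinite.symm (c : Fin n → ℕ) = c := by ext; simp
      rw [e1, if_pos (by rw [← h]; simp), coeff_monomial, if_pos rfl]
    · intro k hk hkc
      split_ifs with h2
      · rw [coeff_monomial, if_neg]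
        rintro rfl
        exact hkc (by ext; simp)
      · simp
    · intro hc
      exfalso
      apply hc
      simp only [Fintype.mem_piFinset, Finset.mem_range]
      intro i
      rw [← h]; simp
  · refine Finset.sum_eq_zero fun k hk => ?_
    simp only [Fintype.mem_piFinset, Finset.mem_range] at hk
    split_ifs with h2
    · rw [coeff_monomial, if_neg]
      rintro rfl
      apply h
      rw [← h2]
      ext i
      have := hk i
      simp; omega
    · simp

open MvPolynomial in
lemma tayl_coeff {F : Type*} [Field F] (n : ℕ) (f : MvPolynomial (Fin n) F)
    (b c : Fin n →₀ ℕ) :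
    coeff c (coeff b (tayl n f)) = coeff (b + c) f * ∏ i, (((b + c) i).choose (c i) : F) := by
  induction f using MvPolynomial.induction_on' with
  | monomial u r =>
    rw [tayl_monomial, coeff_monomial]
    by_cases h : b + c = u
    · rw [if_pos h, if_pos h.symm, h]
    · rw [if_neg h, if_neg (Ne.symm h), zero_mul]
  | add p q hp hq => rw [map_add, coeff_add, coeff_add, coeff_add, hp, hq, add_mul]

open MvPolynomial in
lemma tayl_affine {F : Type*} [Field F] (n : ℕ) (L : MvPolynomial (Fin n) F)
    (hL : L.totalDegree ≤ 1) :
    ∃ P : MvPolynomial (Fin n) F, tayl n L = C L + map C P := by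
  refine ⟨L - C (coeff 0 L), ?_⟩
  ext b c
  rw [tayl_coeff, coeff_add, coeff_C, coeff_map, coeff_add, coeff_C, coeff_sub, coeff_C]
  by_cases hb : b = 0
  · subst hb
    simp
  by_cases hc : c = 0
  · subst hc
    simp [hb, Ne.symm hb]
  · rw [if_neg (Ne.symm hb), if_neg (Ne.symm hb), if_neg (Ne.symm hc), coeff_zero, zero_add,
      coeff_eq_zero_of_totalDegree_lt, zero_mul]
    refine lt_of_le_of_lt hL ?_
    have h1 : b.degree ≠ 0 := by simpa [Finsupp.degree_eq_zero_iff] using hb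
    have h2 : c.degree ≠ 0 := by simpa [Finsupp.degree_eq_zero_iff] using hc
    have h3 : (b + c).degree = b.degree + c.degree := by simp
    have h4 : (b + c).degree = ∑ i ∈ (b + c).support, (b + c) i := rfl
    omega

open MvPolynomial in
lemma tayl_prod_mem {F : Type*} [Field F] (n n' : ℕ) (L : Fin n' → MvPolynomial (Fin n) F)
    (hL : ∀ j, (L j).totalDegree ≤ 1) (e : Fin n' → ℕ) (W : Submodule F (MvPolynomial (Fin n) F))
    (hW : ∀ k : Fin n' → ℕ, (∀ j, k j < e j + 1) → ∏ j, L j ^ k j ∈ W) (b : Fin n →₀ ℕ) :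
    coeff b (tayl n (∏ j, L j ^ e j)) ∈ W := by
  choose P hP using fun j => tayl_affine n (L j) (hL j)
  simp_rw [map_prod, map_pow, hP, add_pow]
  rw [Finset.prod_univ_sum, coeff_sum]
  refine Submodule.sum_mem _ fun k hk => ?_
  have h : ∏ j, (C (L j) ^ k j * (map C (P j)) ^ (e j - k j) * (((e j).choose (k j) : ℕ) :
      MvPolynomial (Fin n) (MvPolynomial (Fin n) F)))
      = C (∏ j, L j ^ k j) * map C (∏ j, (P j ^ (e j - k j) * (((e j).choose (k j) : ℕ) :
          MvPolynomial (Fin n) F))) := by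
    simp only [map_prod, map_mul, map_pow, map_natCast, ← Finset.prod_mul_distrib, mul_assoc]
  rw [h, coeff_C_mul, coeff_map, mul_comm, ← smul_eq_C_mul]
  refine W.smul_mem _ (hW k ?_)
  simpa using hk

open MvPolynomial in
/-- The leading monomial has small support. -/
lemma exists_small_support {F : Type*} [Field F] (n N : ℕ) (f : MvPolynomial (Fin n) F)
    (hf : f ≠ 0) (W : Submodule F (MvPolynomial (Fin n) F)) [FiniteDimensional F W]
    (hW : ∀ b, coeff b (tayl n f) ∈ W) (hN : Module.finrank F W ≤ N) :
    ∃ a : Fin n →₀ ℕ, coeff a f ≠ 0 ∧ 2 ^ a.support.card ≤ N := by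
  classical
  let o : MonomialOrder (Fin n) := MonomialOrder.lex
  set a := o.degree f with ha
  have hlead : coeff a f ≠ 0 := by
    have := o.leadingCoeff_ne_zero_iff.mpr hf
    exact this
  refine ⟨a, hlead, ?_⟩
  have hgt : ∀ c, o.toSyn a < o.toSyn c → coeff c f = 0 := fun c hc =>
    o.coeff_eq_zero_of_lt hc
  let part : Finset (Fin n) → (Fin n →₀ ℕ) := fun T => a.filter (· ∈ T)
  let comp : Finset (Fin n) → (Fin n →₀ ℕ) := fun T => a.filter (· ∉ T)
  have hpc : ∀ T, part T + comp T = a := fun T => Finsupp.filter_add_filter_not _ _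
  have hinj : ∀ T U, T ⊆ a.support → U ⊆ a.support → part T = part U → T = U := by
    intro T U hT hU h
    have : (part T).support = (part U).support := by rw [h]
    simp only [part, Finsupp.support_filter] at this
    ext i
    have := congrArg (i ∈ ·) this
    simp only [Finset.mem_filter, eq_iff_iff] at this
    have := @hT i
    have := @hU i
    tauto
  let D : a.support.powerset → W := fun T => ⟨coeff (part T) (tayl n f), hW _⟩
  have hli : LinearIndependent F D := by
    rw [Fintype.linearIndependent_iff]
    intro g hg
    by_contra! hne
    obtain ⟨T0, hT0⟩ := hne
    obtain ⟨T, hT, hmin⟩ := Finset.exists_min_image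
      (Finset.univ.filter fun T => g T ≠ 0) (fun T => o.toSyn (part T)) ⟨T0, by simpa using hT0⟩
    have hg2 : coeff (comp T) (∑ U, g U • coeff (part U) (tayl n f)) = 0 := by
      have := congrArg (fun w : W => (w : MvPolynomial (Fin n) F)) hg
      simp only [Submodule.coe_sum, Submodule.coe_smul, D, Submodule.coe_zero] at this
      rw [this, coeff_zero]
    rw [coeff_sum, Finset.sum_eq_single T] at hg2
    · rw [coeff_smul, tayl_coeff, hpc] at hg2
      have : ∏ i, ((a i).choose (comp T i) : F) = 1 := by
        refine Finset.prod_eq_one fun i _ => ?_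
        by_cases hi : i ∈ T.1 <;> simp [comp, Finsupp.filter_apply, hi]
      rw [this, mul_one, smul_eq_mul, mul_eq_zero] at hg2
      simp only [Finset.mem_filter] at hT
      exact hg2.elim hT.2 hlead
    · intro U _ hUT
      by_cases hU : g U = 0
      · simp [hU]
      have hle := hmin U (by simpa using hU)
      have hlt : o.toSyn (part T) < o.toSyn (part U) := by
        refine lt_of_le_of_ne hle fun h => hUT ?_
        have := hinj _ _ (Finset.mem_powerset.mp T.2) (Finset.mem_powerset.mp U.2)
          (o.toSyn.injective h)
        exact Subtype.ext this.symm
      rw [coeff_smul, tayl_coeff, hgt, zero_mul, smul_zero]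
      have h5 : o.toSyn a = o.toSyn (part T) + o.toSyn (comp T) := by
        rw [← map_add, hpc]
      rw [h5, map_add]
      gcongr
    · simp
  have := hli.fintype_card_le_finrank
  simp only [Fintype.card_coe, Finset.card_powerset] at this
  exact this.trans hN

open MvPolynomial in
lemma hit_of_small_support {F : Type*} [Field F] (n d : ℕ) 
    (S : Finset F) (h0 : (0 : F) ∈ S) (hS : S.card = d + 1)
    (f : MvPolynomial (Fin n) F) (hdeg : f.totalDegree ≤ d)
    (a : Fin n →₀ ℕ) (ha : coeff a f ≠ 0) :
    ∃ α : Fin n → F, (∀ i, α i ∈ S) ∧ (∀ i, α i ≠ 0 → i ∈ a.support) ∧ eval α f ≠ 0 := by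
  classical
  let A := f.support.filter (fun u => u.support ⊆ a.support)
  let g : MvPolynomial (Fin n) F := ∑ u ∈ A, monomial u (coeff u f)
  have hg : ∀ c, coeff c g = if c ∈ A then coeff c f else 0 := by
    intro c
    simp only [g, coeff_sum, coeff_monomial]
    rw [Finset.sum_ite_eq']
  by_contra! hcon
  have hg0 : g = 0 := by
    refine eq_zero_of_eval_zero_at_prod_finset g
      (fun i => if i ∈ a.support then S else {0}) ?_ ?_
    · intro i
      have hpos : 0 < (if i ∈ a.support then S else {0}).card := by
        split_ifs <;> simp [hS]
      rw [degreeOf_lt_iff hpos]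
      intro u hu
      have huA : u ∈ A := by
        by_contra h
        rw [mem_support_iff, hg, if_neg h] at hu
        exact hu rfl
      simp only [A, Finset.mem_filter] at huA
      split_ifs with hi
      · have := le_totalDegree huA.1
        have h2 : u i ≤ u.sum fun _ e => e := by
          by_cases h : i ∈ u.support
          · exact Finset.single_le_sum (f := fun i => u i) (fun _ _ => Nat.zero_le _) h
          · simp [Finsupp.notMem_support_iff.mp h]
        omega
      · have : u i = 0 := Finsupp.notMem_support_iff.mp fun h => hi (huA.2 h)
        simp [this]
    · intro x hx
      have hx0 : ∀ i, i ∉ a.support → x i = 0 := by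
        intro i hi
        have := hx i
        rw [if_neg hi] at this
        simpa using this
      have hxS : ∀ i, x i ∈ S := by
        intro i
        by_cases hi : i ∈ a.support
        · have := hx i
          rwa [if_pos hi] at this
        · rw [hx0 i hi]; exact h0
      rw [← hcon x hxS (fun i hi => by_contra fun h => hi (hx0 i h))]
      rw [eval_eq' x f]
      simp only [g, map_sum, eval_monomial, A]
      rw [Finset.sum_filter]
      refine Finset.sum_congr rfl fun u hu => ?_
      split_ifs with h
      · rw [Finsupp.prod_fintype _ _ (by simp)]
      · obtain ⟨i, hi, hia⟩ := Finset.not_subset.mp h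
        rw [Finset.prod_eq_zero (Finset.mem_univ i), mul_zero]
        rw [hx0 i hia, zero_pow (Finsupp.mem_support_iff.mp hi)]
  have := hg a
  rw [hg0, if_pos (by simp [A, ha]), coeff_zero] at this
  exact ha this.symm


/-- Let `S ⊆ F` with `0 ∈ S` and `|S| = d+1`.  If
`f = Σ_{ℓ=1}^{s} ∏_{j=1}^{n'} L_{ℓ,j}^{e_{ℓ,j}}` is a nonzero depth-3 diagonal circuit
(each `L_{ℓ,j}` of total degree ≤ 1) of total degree ≤ `d` with
`Σ_ℓ ∏_j (e_{ℓ,j}+1) ≤ 2^m`, then `f` has a nonzero evaluation at some point `α ∈ S^n`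
with at most `m` nonzero coordinates. -/
theorem diagonal_circuit_hit_by_small_support {F : Type*} [Field F]
    (n n' d m s : ℕ) (hd : 1 ≤ d) (hm : 1 ≤ m) (hn : 1 ≤ n) (hs : 1 ≤ s)
    (S : Finset F) (h0 : (0 : F) ∈ S) (hS : S.card = d + 1)
    (L : Fin s → Fin n' → MvPolynomial (Fin n) F)
    (hL : ∀ ℓ j, (L ℓ j).totalDegree ≤ 1)
    (e : Fin s → Fin n' → ℕ)
    (f : MvPolynomial (Fin n) F)
    (hf : f = ∑ ℓ : Fin s, ∏ j : Fin n', L ℓ j ^ e ℓ j)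
    (hdeg : f.totalDegree ≤ d)
    (hsize : ∑ ℓ : Fin s, ∏ j : Fin n', (e ℓ j + 1) ≤ 2 ^ m)
    (hnz : f ≠ 0) :
    ∃ α : Fin n → F, (∀ i, α i ∈ S) ∧ Set.ncard {i : Fin n | α i ≠ 0} ≤ m ∧
      MvPolynomial.eval α f ≠ 0 := by
  classical
  let ι := Σ ℓ : Fin s, (j : Fin n') → Fin (e ℓ j + 1)
  let v : ι → MvPolynomial (Fin n) F := fun p => ∏ j, L p.1 j ^ (p.2 j : ℕ)
  let W := Submodule.span F (Set.range v)
  have hfd : FiniteDimensional F W := FiniteDimensional.span_of_finite F (Set.finite_range v)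
  have hrank : Module.finrank F W ≤ 2 ^ m := by
    refine le_trans (finrank_range_le_card v) ?_
    simpa [ι] using hsize
  have hW : ∀ b, MvPolynomial.coeff b (tayl n f) ∈ W := by
    intro b
    rw [hf, map_sum, MvPolynomial.coeff_sum]
    refine Submodule.sum_mem _ fun ℓ _ => tayl_prod_mem n n' (L ℓ) (hL ℓ) (e ℓ) W ?_ b
    intro k hk
    exact Submodule.subset_span ⟨⟨ℓ, fun j => ⟨k j, hk j⟩⟩, rfl⟩
  obtain ⟨a, ha, hcard⟩ := exists_small_support n (2 ^ m) f hnz W hW hrank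
  obtain ⟨α, h1, h2, h3⟩ := hit_of_small_support n d S h0 hS f hdeg a ha
  refine ⟨α, h1, ?_, h3⟩
  calc Set.ncard {i : Fin n | α i ≠ 0} ≤ Set.ncard (a.support : Set (Fin n)) :=
        Set.ncard_le_ncard (fun i hi => h2 i hi) (Finset.finite_toSet _)
    _ = a.support.card := Set.ncard_coe_finset _
    _ ≤ m := (Nat.pow_le_pow_iff_right (by norm_num)).mp hcard
end
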